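/- arXiv:2109.06322 — 3 statements merged into one kernel-verified Lean document; each statement's English description precedes it below -/
import Mathlib

section
/- Let X be a Polish space and let (μ^k) be a sequence of Borel probability measures on X converging strongly (setwise) to μ. Then every subsequence of (μ^k) admits a further subsequence (μ^{k_i}) whose Cesàro averages converge to μ in total variation: (1/n) Σ_{i=1}^n μ^{k_i} → μ in total variation norm. -/
/-! The measures `ν k = μ (φ k)` split, by the Lebesgue decomposition with respect to `μ'`, into a
density `f k` and a singular part. A gliding-hump argument, `setwise_tendsto_zero`, shows that
`ν k (B k) → 0` as soon as `μ' (B k) → 0`. Hence the singular parts vanish and the densities may be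
truncated at heights tending to infinity at a vanishing cost (`exists_simpleFunc_minorant`).

The averages are then handled by an `L²` computation instead of the Komlós theorem. Let
`g i ≤ f (ψ i)` be a simple function of height at most `√(i + 1)` and of integral tending to `1`.
Positivity gives, for `i < j`,
`∫ g i * g j ∂μ' ≤ ∫ g i ∂ν (ψ j)`, and by setwise convergence the right-hand side is at most
`1 + 1 / (j + 1)` once `ψ j` is large enough in terms of `i`, `ψ i` and `j`. The diagonal terms are
at most `√(i + 1)`, so expanding the square gives
`∫ (n⁻¹ ∑ g i - 1)² ∂μ' ≤ 1 - 2 + 1 + o(1)`. Thus the averages of the `g i` tend to `1` in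
`L²(μ')`, hence in `L¹(μ')`, and the averages of the measures `ν (ψ i)` exceed those of the
`g i • μ'` by a total mass tending to `0`. -/

open MeasureTheory Filter Topology
open scoped ENNReal NNReal

/-! ### Diagonal selection -/

/-- The sequence defined by `ψ n = ∑ i < n, (T i (ψ i) n + ψ i + 1)`, which is strictly increasing
and satisfies `T i (ψ i) n ≤ ψ n` for all `i < n`. -/
def thresholdSeq (T : ℕ → ℕ → ℕ → ℕ) : ℕ → ℕ
  | n => ∑ i : Fin n, (T i (thresholdSeq T i) n + thresholdSeq T i + 1)
  termination_by n => n
  decreasing_by all_goals exact i.2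

lemma thresholdSeq_spec (T : ℕ → ℕ → ℕ → ℕ) {i n : ℕ} (h : i < n) :
    T i (thresholdSeq T i) n + thresholdSeq T i + 1 ≤ thresholdSeq T n := by
  conv_rhs => rw [thresholdSeq]
  exact Finset.single_le_sum
    (f := fun i : Fin n => T i (thresholdSeq T i) n + thresholdSeq T i + 1)
    (fun _ _ => Nat.zero_le _) (Finset.mem_univ (⟨i, h⟩ : Fin n))

/-- Diagonal selection: conditions on pairs of terms that hold eventually in the later term can be
achieved simultaneously along a subsequence. -/
lemma exists_strictMono_pairs {Q : ℕ → ℕ → ℕ → ℕ → Prop}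
    (hQ : ∀ i k j, ∀ᶠ k' in atTop, Q i k j k') :
    ∃ ψ : ℕ → ℕ, StrictMono ψ ∧ ∀ i j, i < j → Q i (ψ i) j (ψ j) := by
  choose T hT using fun i k j => eventually_atTop.1 (hQ i k j)
  refine ⟨thresholdSeq T, fun i j h => ?_, fun i j h => hT _ _ _ _ ?_⟩
  · have := thresholdSeq_spec T h
    omega
  · have := thresholdSeq_spec T h
    omega

/-! ### Setwise convergence and truncated densities -/

/-- Uniform absolute continuity of a setwise convergent sequence of measures. -/
lemma setwise_tendsto_zero {X : Type*} [MeasurableSpace X] {ν : ℕ → Measure X} {P : Measure X}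
    (h : ∀ A, MeasurableSet A → Tendsto (fun k => ν k A) atTop (𝓝 (P A)))
    {B : ℕ → Set X} (hB : ∀ k, MeasurableSet (B k))
    (hPB : Tendsto (fun k => P (B k)) atTop (𝓝 0)) :
    Tendsto (fun k => ν k (B k)) atTop (𝓝 0) := by
  rw [ENNReal.tendsto_nhds_zero]
  by_contra! hcon
  obtain ⟨ε, hε, hfreq⟩ := hcon
  obtain ⟨δ, hδ, hsum⟩ := ENNReal.exists_pos_sum_of_countable hε.ne' ℕ
  -- Along `σ` the sets `B (σ n)` keep `ν`-mass `ε` although their union has smaller `P`-mass.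
  obtain ⟨σ, hσ, hσP⟩ := extraction_forall_of_frequently
    (P := fun n k => ε < ν k (B k) ∧ P (B k) ≤ δ n) (fun n => by
      have h1 : ∀ᶠ k in atTop, P (B k) ≤ δ n :=
        (ENNReal.tendsto_nhds_zero.1 hPB) _ (by exact_mod_cast hδ n)
      have h2 : ∃ᶠ k in atTop, ε < ν k (B k) := by
        simpa [Filter.Frequently] using hfreq
      exact h2.and_eventually h1)
  have hlt : P (⋃ n, B (σ n)) < ε :=
    ((measure_iUnion_le _).trans (ENNReal.tsum_le_tsum fun n => (hσP n).2)).trans_lt hsum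
  have hlim := (h _ (MeasurableSet.iUnion fun n => hB (σ n))).comp hσ.tendsto_atTop
  refine absurd (ge_of_tendsto' hlim fun n => ?_) (not_le.2 hlt)
  exact (hσP n).1.le.trans (measure_mono (Set.subset_iUnion (fun n => B (σ n)) n))

lemma tendsto_lintegral_simpleFunc {X : Type*} [MeasurableSpace X] {ν : ℕ → Measure X}
    {P : Measure X} (h : ∀ A, MeasurableSet A → Tendsto (fun k => ν k A) atTop (𝓝 (P A)))
    (g : SimpleFunc X ℝ≥0) :
    Tendsto (fun k => ∫⁻ x, g x ∂(ν k)) atTop (𝓝 (∫⁻ x, g x ∂P)) := by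
  have e : ∀ m : Measure X, ∫⁻ x, g x ∂m = ∑ c ∈ g.range, (c : ℝ≥0∞) * m (g ⁻¹' {c}) := fun m => by
    have := SimpleFunc.lintegral_eq_lintegral (g.map ((↑) : ℝ≥0 → ℝ≥0∞)) m
    rw [SimpleFunc.map_lintegral] at this
    exact this
  simp_rw [e]
  exact tendsto_finsetSum _ fun c _ => ENNReal.Tendsto.const_mul
    (h _ (g.measurableSet_fiber c)) (Or.inr ENNReal.coe_ne_top)

/-- A probability measure `ν` dominates a density `g` with respect to `P` bounded by `M`, and the
mass it loses is controlled, up to `ε`, by the `ν`-mass of a set that is small for `P`: the set where `ν` is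
singular or has density at least `M`. -/
lemma exists_simpleFunc_minorant {X : Type*} [MeasurableSpace X] (ν P : Measure X)
    [IsProbabilityMeasure ν] [IsProbabilityMeasure P] {M : ℝ≥0} (hM : M ≠ 0)
    {ε : ℝ≥0∞} (hε : ε ≠ 0) :
    ∃ (g : SimpleFunc X ℝ≥0) (B : Set X), MeasurableSet B ∧ (∀ x, g x ≤ M) ∧
      P.withDensity (fun x => (g x : ℝ≥0∞)) ≤ ν ∧ P B ≤ (M : ℝ≥0∞)⁻¹ ∧
      1 ≤ ν B + ((∫⁻ x, g x ∂P) + ε) := by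
  set f := ν.rnDeriv P with hf
  have hfm : Measurable f := Measure.measurable_rnDeriv _ _
  have hM' : (M : ℝ≥0∞) ≠ 0 := by exact_mod_cast hM
  have hI : ∫⁻ x, min (f x) M ∂P ≠ ∞ := by
    refine ne_top_of_le_ne_top (b := (M : ℝ≥0∞)) ENNReal.coe_ne_top ?_
    calc ∫⁻ x, min (f x) M ∂P ≤ ∫⁻ _, (M : ℝ≥0∞) ∂P := lintegral_mono fun x => min_le_right _ _
      _ = M := by simp
  obtain ⟨g, hg, hgε⟩ : ∃ g : SimpleFunc X ℝ≥0, (∀ x, (g x : ℝ≥0∞) ≤ min (f x) M) ∧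
      ∫⁻ x, min (f x) M ∂P ≤ (∫⁻ x, g x ∂P) + ε := by
    rcases eq_or_ne (∫⁻ x, min (f x) M ∂P) 0 with h0 | h0
    · exact ⟨0, fun x => by simp, by simp [h0]⟩
    · have hlt := ENNReal.sub_lt_self hI h0 hε
      conv_rhs at hlt => rw [lintegral_eq_nnreal]
      obtain ⟨g, hg⟩ := lt_iSup_iff.1 hlt
      obtain ⟨hg1, hg2⟩ := lt_iSup_iff.1 hg
      refine ⟨g, hg1, ?_⟩
      rw [← SimpleFunc.lintegral_eq_lintegral] at hg2
      exact tsub_le_iff_right.1 hg2.le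
  obtain ⟨S, hS, hS1, hS2⟩ := Measure.mutuallySingular_singularPart ν P
  have hBf : MeasurableSet {x | (M : ℝ≥0∞) ≤ f x} := measurableSet_le measurable_const hfm
  have hBm : MeasurableSet (Sᶜ ∪ {x | (M : ℝ≥0∞) ≤ f x}) := hS.compl.union hBf
  refine ⟨g, Sᶜ ∪ {x | (M : ℝ≥0∞) ≤ f x}, hBm,
    fun x => by exact_mod_cast (hg x).trans (min_le_right _ _), ?_, ?_, ?_⟩
  · exact (withDensity_mono (ae_of_all _ fun x => (hg x).trans (min_le_left _ _))).trans
      (Measure.withDensity_rnDeriv_le ν P)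
  · refine (measure_union_le _ _).trans ?_
    rw [hS2, zero_add]
    refine (meas_ge_le_lintegral_div hfm.aemeasurable hM' ENNReal.coe_ne_top).trans ?_
    rw [← one_div]
    gcongr
    exact Measure.lintegral_rnDeriv_le.trans (by simp)
  · set B := Sᶜ ∪ {x | (M : ℝ≥0∞) ≤ f x} with hBdef
    have hc : ν Bᶜ ≤ ∫⁻ x, min (f x) M ∂P := by
      have h1 : ν Bᶜ = ν.singularPart P Bᶜ + P.withDensity f Bᶜ := by
        conv_lhs => rw [Measure.haveLebesgueDecomposition_add ν P]
        rfl
      have h2 : ν.singularPart P Bᶜ = 0 :=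
        measure_mono_null (fun x hx => by simp [hBdef] at hx; exact hx.1) hS1
      rw [h1, h2, zero_add, withDensity_apply _ hBm.compl]
      calc ∫⁻ x in Bᶜ, f x ∂P ≤ ∫⁻ x in Bᶜ, min (f x) M ∂P := by
            refine setLIntegral_mono (hfm.min measurable_const) fun x hx => ?_
            simp [hBdef] at hx
            exact le_min le_rfl hx.2.le
        _ ≤ _ := setLIntegral_le_lintegral _ _
    calc (1 : ℝ≥0∞) = ν B + ν Bᶜ := by rw [measure_add_measure_compl hBm, measure_univ]
      _ ≤ _ := by gcongr; exact hc.trans hgε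

/-! ### Convergence of averages in `L²` -/

/-- Nonnegative functions whose integrals tend to `1`, which are almost nonpositively correlated
and grow slowly enough, have averages converging to `1` in `L²`. -/
lemma cesaro_L2 {X : Type*} [MeasurableSpace X] (P : Measure X) [IsProbabilityMeasure P]
    {g : ℕ → X → ℝ} (hm : ∀ i, Measurable (g i)) (h0 : ∀ i x, 0 ≤ g i x)
    (hb : ∀ i x, g i x ≤ √(i + 1)) (h1 : ∀ i, ∫ x, g i x ∂P ≤ 1)
    (hlim : Tendsto (fun i => ∫ x, g i x ∂P) atTop (𝓝 1))
    (hij : ∀ i j, i < j → ∫ x, g i x * g j x ∂P ≤ 1 + 1 / ((j : ℝ) + 1)) :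
    Tendsto (fun n : ℕ => ∫ x, ((n : ℝ)⁻¹ * ∑ i ∈ Finset.range n, g i x - 1) ^ 2 ∂P)
      atTop (𝓝 0) := by
  have hint : ∀ i, Integrable (g i) P := fun i =>
    Integrable.of_bound (hm i).aestronglyMeasurable (√(i + 1))
      (ae_of_all _ fun x => by rw [Real.norm_of_nonneg (h0 i x)]; exact hb i x)
  have hint2 : ∀ i j, Integrable (fun x => g i x * g j x) P := fun i j =>
    Integrable.of_bound ((hm i).mul (hm j)).aestronglyMeasurable (√(i + 1) * √(j + 1))
      (ae_of_all _ fun x => by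
        rw [Real.norm_of_nonneg (mul_nonneg (h0 i x) (h0 j x))]
        exact mul_le_mul (hb i x) (hb j x) (h0 j x) (Real.sqrt_nonneg _))
  set η : ℕ → ℝ := fun j => 1 / ((j : ℝ) + 1) with hη
  have hη0 : ∀ j, 0 ≤ η j := fun j => by positivity
  have hcov : ∀ i j, ∫ x, g i x * g j x ∂P ≤
      1 + η i + η j + if i = j then √(i + 1) else 0 := by
    intro i j
    rcases lt_trichotomy i j with h | h | h
    · have := hij i j h
      rw [if_neg h.ne]
      linarith [hη0 i]
    · subst h
      have : ∫ x, g i x * g i x ∂P ≤ ∫ x, √(i + 1) * g i x ∂P :=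
        integral_mono (hint2 i i) ((hint i).const_mul _) fun x =>
          mul_le_mul_of_nonneg_right (hb i x) (h0 i x)
      rw [integral_const_mul] at this
      have h3 := mul_le_mul_of_nonneg_left (h1 i) (Real.sqrt_nonneg ((i : ℝ) + 1))
      rw [if_pos rfl]
      linarith [hη0 i]
    · have := hij j i h
      simp_rw [mul_comm (g j _)] at this
      rw [if_neg h.ne']
      linarith [hη0 j]
  have hexp : ∀ n : ℕ, ∫ x, ((n : ℝ)⁻¹ * ∑ i ∈ Finset.range n, g i x - 1) ^ 2 ∂P =
      (n : ℝ)⁻¹ ^ 2 * ∑ i ∈ Finset.range n, ∑ j ∈ Finset.range n, ∫ x, g i x * g j x ∂P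
        - 2 * ((n : ℝ)⁻¹ * ∑ i ∈ Finset.range n, ∫ x, g i x ∂P) + 1 := by
    intro n
    have e : ∀ x, ((n : ℝ)⁻¹ * ∑ i ∈ Finset.range n, g i x - 1) ^ 2 =
        (n : ℝ)⁻¹ ^ 2 * ∑ i ∈ Finset.range n, ∑ j ∈ Finset.range n, g i x * g j x
        - 2 * ((n : ℝ)⁻¹ * ∑ i ∈ Finset.range n, g i x) + 1 := fun x => by
      rw [← Finset.sum_mul_sum]; ring
    simp_rw [e]
    have i1 : Integrable (fun x => ∑ i ∈ Finset.range n, g i x) P :=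
      integrable_finsetSum _ fun i _ => hint i
    have i2 : ∀ i, Integrable (fun x => ∑ j ∈ Finset.range n, g i x * g j x) P := fun i =>
      integrable_finsetSum _ fun j _ => hint2 i j
    have i3 : Integrable (fun x => ∑ i ∈ Finset.range n, ∑ j ∈ Finset.range n, g i x * g j x) P :=
      integrable_finsetSum _ fun i _ => i2 i
    have i4 : Integrable (fun x => (n : ℝ)⁻¹ ^ 2 *
        ∑ i ∈ Finset.range n, ∑ j ∈ Finset.range n, g i x * g j x
        - 2 * ((n : ℝ)⁻¹ * ∑ i ∈ Finset.range n, g i x)) P :=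
      (i3.const_mul _).sub ((i1.const_mul _).const_mul _)
    rw [integral_add i4 (integrable_const _),
      integral_sub (i3.const_mul _) ((i1.const_mul _).const_mul _), integral_const_mul,
      integral_const_mul, integral_const_mul, integral_finsetSum _ fun i _ => i2 i,
      integral_finsetSum _ fun i _ => hint i]
    simp_rw [integral_finsetSum _ fun j _ => hint2 _ j]
    simp
  have hsq : Tendsto (fun n : ℕ => (n : ℝ)⁻¹ * √n) atTop (𝓝 0) := by
    have h : Tendsto (fun n : ℕ => (√(n : ℝ))⁻¹) atTop (𝓝 0) :=
      tendsto_inv_atTop_zero.comp (Real.tendsto_sqrt_atTop.comp tendsto_natCast_atTop_atTop)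
    refine h.congr fun n => ?_
    rcases Nat.eq_zero_or_pos n with rfl | hn
    · simp
    · have : (0 : ℝ) < √n := Real.sqrt_pos.2 (by exact_mod_cast hn)
      have h2 : √(n : ℝ) * √n = n := Real.mul_self_sqrt (by positivity)
      rw [← h2]
      simp only [Real.sqrt_mul_self this.le]
      field_simp
  have hηlim : Tendsto η atTop (𝓝 0) := tendsto_one_div_add_atTop_nhds_zero_nat
  have hup : Tendsto (fun n : ℕ => 1 + 2 * ((n : ℝ)⁻¹ * ∑ i ∈ Finset.range n, η i)
      + (n : ℝ)⁻¹ * √n - 2 * ((n : ℝ)⁻¹ * ∑ i ∈ Finset.range n, ∫ x, g i x ∂P) + 1)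
      atTop (𝓝 0) := by
    have := ((((hηlim.cesaro.const_mul 2).const_add 1).add hsq).sub
      (hlim.cesaro.const_mul 2)).add_const 1
    norm_num at this
    simpa using this
  refine tendsto_of_tendsto_of_tendsto_of_le_of_le' tendsto_const_nhds hup
    (Eventually.of_forall fun n => integral_nonneg fun x => sq_nonneg _) ?_
  filter_upwards [eventually_gt_atTop 0] with n hn
  have hn' : (0 : ℝ) < n := by exact_mod_cast hn
  rw [hexp]
  have hS : ∑ i ∈ Finset.range n, ∑ j ∈ Finset.range n, ∫ x, g i x * g j x ∂P ≤
      n * n + 2 * n * ∑ i ∈ Finset.range n, η i + n * √n := by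
    calc _ ≤ ∑ i ∈ Finset.range n, ∑ j ∈ Finset.range n,
          (1 + η i + η j + if i = j then √((i : ℝ) + 1) else 0) :=
          Finset.sum_le_sum fun i _ => Finset.sum_le_sum fun j _ => hcov i j
      _ = n * n + 2 * n * ∑ i ∈ Finset.range n, η i
          + ∑ i ∈ Finset.range n, √((i : ℝ) + 1) := by
          have : ∀ i ∈ Finset.range n, (∑ j ∈ Finset.range n,
              (if i = j then √((i : ℝ) + 1) else 0)) = √((i : ℝ) + 1) := fun i hi => by
            rw [Finset.sum_ite_eq, if_pos hi]
          simp_rw [Finset.sum_add_distrib]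
          rw [Finset.sum_congr rfl this]
          simp [← Finset.mul_sum]
          ring
      _ ≤ _ := by
          gcongr
          calc _ ≤ ∑ i ∈ Finset.range n, √(n : ℝ) := by
                refine Finset.sum_le_sum fun i hi => Real.sqrt_le_sqrt ?_
                exact_mod_cast Finset.mem_range.1 hi
            _ = _ := by simp
  have hS' := mul_le_mul_of_nonneg_left hS (sq_nonneg (n : ℝ)⁻¹)
  have e : (n : ℝ)⁻¹ ^ 2 * (n * n + 2 * n * ∑ i ∈ Finset.range n, η i + n * √n) =
      1 + 2 * ((n : ℝ)⁻¹ * ∑ i ∈ Finset.range n, η i) + (n : ℝ)⁻¹ * √n := by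
    field_simp
  linarith

/-- A quantitative form of the inclusion `L² ⊆ L¹` on a probability space. -/
lemma abs_setIntegral_le_of_sq {X : Type*} [MeasurableSpace X] (P : Measure X)
    [IsProbabilityMeasure P] {h : X → ℝ} (hi : Integrable h P)
    (hi2 : Integrable (fun x => h x ^ 2) P) {ε : ℝ} (hε : 0 < ε)
    (hh : ∫ x, h x ^ 2 ∂P ≤ ε ^ 2) (A : Set X) : |∫ x in A, h x ∂P| ≤ ε := by
  calc |∫ x in A, h x ∂P| ≤ ∫ x in A, |h x| ∂P := abs_integral_le_integral_abs
    _ ≤ ∫ x, |h x| ∂P :=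
      setIntegral_le_integral hi.abs (ae_of_all _ fun x => abs_nonneg (h x))
    _ ≤ ∫ x, (h x ^ 2 * (2 * ε)⁻¹ + ε / 2) ∂P := by
      refine integral_mono hi.abs ((hi2.mul_const _).add (integrable_const _)) fun x => ?_
      have e : h x ^ 2 * (2 * ε)⁻¹ + ε / 2 - |h x| = (|h x| - ε) ^ 2 * (2 * ε)⁻¹ := by
        rw [← sq_abs]
        field_simp
        ring
      have : 0 ≤ (|h x| - ε) ^ 2 * (2 * ε)⁻¹ := by positivity
      show |h x| ≤ h x ^ 2 * (2 * ε)⁻¹ + ε / 2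
      linarith
    _ = (∫ x, h x ^ 2 ∂P) * (2 * ε)⁻¹ + ε / 2 := by
      rw [integral_add (hi2.mul_const _) (integrable_const _), integral_mul_const]
      simp
    _ ≤ ε ^ 2 * (2 * ε)⁻¹ + ε / 2 := by gcongr
    _ = ε := by field_simp; ring

/-! ### Averages of setwise convergent measures -/

/-- If probability measures `μ^k` on a Polish space converge strongly (setwise) to `μ`, then
every subsequence admits a further subsequence whose Cesàro averages converge to `μ` in
total variation (expressed here via the uniform-over-Borel-sets characterization of total
variation convergence). -/
theorem stmt6 {X : Type*}
    [MeasurableSpace X] [TopologicalSpace X] [PolishSpace X] [BorelSpace X]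
    (μ : ℕ → Measure X) (μ' : Measure X)
    (hμ : ∀ k, IsProbabilityMeasure (μ k)) (hμ' : IsProbabilityMeasure μ')
    (hstrong : ∀ A : Set X, MeasurableSet A →
      Tendsto (fun k => μ k A) atTop (𝓝 (μ' A)))
    (φ : ℕ → ℕ) (hφ : StrictMono φ) :
    ∃ ψ : ℕ → ℕ, StrictMono ψ ∧
      ∀ ε : ℝ, 0 < ε → ∃ N : ℕ, ∀ n ≥ N, ∀ A : Set X, MeasurableSet A →
        |(1 / (n : ℝ)) * ∑ i ∈ Finset.range n, (μ (φ (ψ i)) A).toReal - (μ' A).toReal|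
          ≤ ε := by
  classical
  set ν : ℕ → Measure X := fun k => μ (φ k) with hν
  have hνp : ∀ k, IsProbabilityMeasure (ν k) := fun k => hμ _
  have hνs : ∀ A, MeasurableSet A → Tendsto (fun k => ν k A) atTop (𝓝 (μ' A)) := fun A hA =>
    (hstrong A hA).comp hφ.tendsto_atTop
  have hη : ∀ i : ℕ, ENNReal.ofReal (1 / ((i : ℝ) + 1)) ≠ 0 := fun i => by
    rw [Ne, ENNReal.ofReal_eq_zero, not_le]; positivity
  have hM : ∀ i : ℕ, NNReal.sqrt (i + 1) ≠ 0 := fun i => by simp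
  choose G B hBm hGM hGν hB hG1 using fun i k : ℕ =>
    exists_simpleFunc_minorant (ν k) μ' (hM i) (hη i)
  have hG1' : ∀ i k, ∫⁻ x, G i k x ∂μ' ≤ 1 := fun i k => by
    have := hGν i k Set.univ
    rwa [withDensity_apply _ MeasurableSet.univ, Measure.restrict_univ, measure_univ] at this
  obtain ⟨ψ, hψ, hpair⟩ := exists_strictMono_pairs
    (Q := fun i k j k' => ∫⁻ x, G i k x ∂(ν k') ≤ 1 + ENNReal.ofReal (1 / ((j : ℝ) + 1)))
    (fun i k j => by
      refine (tendsto_lintegral_simpleFunc hνs (G i k)).eventually_le_const ?_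
      exact (hG1' i k).trans_lt (ENNReal.lt_add_right ENNReal.one_ne_top (hη j)))
  refine ⟨ψ, hψ, ?_⟩
  set g : ℕ → X → ℝ := fun i x => (G i (ψ i) x : ℝ) with hg
  have hgm : ∀ i, Measurable (g i) := fun i => (G i (ψ i)).measurable.coe_nnreal_real
  have hg0 : ∀ i x, 0 ≤ g i x := fun i x => NNReal.coe_nonneg _
  have hgb : ∀ i x, g i x ≤ √(i + 1) := fun i x => by
    have : g i x ≤ ((NNReal.sqrt (i + 1) : ℝ≥0) : ℝ) := NNReal.coe_le_coe.2 (hGM i (ψ i) x)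
    simpa using this
  have hgint : ∀ i, Integrable (g i) μ' := fun i =>
    Integrable.of_bound (hgm i).aestronglyMeasurable (√(i + 1))
      (ae_of_all _ fun x => by rw [Real.norm_of_nonneg (hg0 i x)]; exact hgb i x)
  have hglint : ∀ i (m : Measure X), ∫ x, g i x ∂m = (∫⁻ x, G i (ψ i) x ∂m).toReal :=
    fun i m => by
      rw [integral_eq_lintegral_of_nonneg_ae (ae_of_all _ (hg0 i))
        (hgm i).aestronglyMeasurable]
      simp [hg]
  have hgle : ∀ i, ∫ x, g i x ∂μ' ≤ 1 := fun i => by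
    rw [hglint]
    exact ENNReal.toReal_le_of_le_ofReal zero_le_one (by simpa using hG1' i (ψ i))
  have hBlim : Tendsto (fun i => ν (ψ i) (B i (ψ i))) atTop (𝓝 0) := by
    refine setwise_tendsto_zero (fun A hA => (hνs A hA).comp hψ.tendsto_atTop)
      (fun i => hBm i _) ?_
    refine tendsto_of_tendsto_of_tendsto_of_le_of_le tendsto_const_nhds ?_
      (fun _ => zero_le) (fun i => hB i (ψ i))
    have h1 : Tendsto (fun i : ℕ => NNReal.sqrt (i + 1)) atTop atTop :=
      NNReal.sqrt.tendsto_atTop.comp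
        (tendsto_atTop_mono (fun i : ℕ => le_self_add) tendsto_natCast_atTop_atTop)
    simpa using tendsto_inv_iff.2 (ENNReal.tendsto_coe_nhds_top.2 h1)
  have hlim : Tendsto (fun i => ∫ x, g i x ∂μ') atTop (𝓝 1) := by
    have hB' : Tendsto (fun i => (ν (ψ i) (B i (ψ i))).toReal) atTop (𝓝 0) :=
      (ENNReal.tendsto_toReal ENNReal.zero_ne_top).comp hBlim
    have hlow : Tendsto (fun i : ℕ => 1 - (ν (ψ i) (B i (ψ i))).toReal - 1 / ((i : ℝ) + 1))
        atTop (𝓝 1) := by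
      simpa using (hB'.const_sub 1).sub tendsto_one_div_add_atTop_nhds_zero_nat
    refine tendsto_of_tendsto_of_tendsto_of_le_of_le hlow tendsto_const_nhds (fun i => ?_) hgle
    have h1 := hG1 i (ψ i)
    have hne : ∫⁻ x, G i (ψ i) x ∂μ' ≠ ∞ := ne_top_of_le_ne_top ENNReal.one_ne_top (hG1' _ _)
    have h2 := ENNReal.toReal_mono (ENNReal.add_ne_top.2 ⟨measure_ne_top _ _,
      ENNReal.add_ne_top.2 ⟨hne, ENNReal.ofReal_ne_top⟩⟩) h1
    rw [ENNReal.toReal_add (measure_ne_top _ _) (ENNReal.add_ne_top.2 ⟨hne, ENNReal.ofReal_ne_top⟩),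
      ENNReal.toReal_add hne ENNReal.ofReal_ne_top, ← hglint, ENNReal.toReal_ofReal (by positivity),
      ENNReal.toReal_one] at h2
    show 1 - (ν (ψ i) (B i (ψ i))).toReal - 1 / ((i : ℝ) + 1) ≤ ∫ x, g i x ∂μ'
    linarith
  have hcov : ∀ i j, i < j → ∫ x, g i x * g j x ∂μ' ≤ 1 + 1 / ((j : ℝ) + 1) := by
    intro i j h
    rw [integral_eq_lintegral_of_nonneg_ae
      (ae_of_all _ fun x => mul_nonneg (hg0 i x) (hg0 j x))
      ((hgm i).mul (hgm j)).aestronglyMeasurable]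
    refine ENNReal.toReal_le_of_le_ofReal (by positivity) ?_
    rw [ENNReal.ofReal_add zero_le_one (by positivity), ENNReal.ofReal_one]
    refine le_trans ?_ (hpair i j h)
    refine le_trans (le_of_eq ?_) (lintegral_mono' (hGν j (ψ j)) le_rfl)
    rw [lintegral_withDensity_eq_lintegral_mul _ (G j (ψ j)).measurable.coe_nnreal_ennreal
      (G i (ψ i)).measurable.coe_nnreal_ennreal]
    refine lintegral_congr fun x => ?_
    simp [hg, ENNReal.ofReal_mul, mul_comm]
  have hL2 := cesaro_L2 μ' hgm hg0 hgb hgle hlim hcov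
  intro ε hε
  have hε2 : 0 < (ε / 2) ^ 2 := by positivity
  obtain ⟨N, hN⟩ := eventually_atTop.1 ((hL2.eventually_le_const hε2).and
    ((hlim.cesaro.eventually_const_le (show 1 - ε / 2 < 1 by linarith)).and
      (eventually_gt_atTop 0)))
  refine ⟨N, fun n hn A hA => ?_⟩
  obtain ⟨h1, h2, hn0⟩ := hN n hn
  have hn0' : (0 : ℝ) < n := by exact_mod_cast hn0
  set F : X → ℝ := fun x => (n : ℝ)⁻¹ * ∑ i ∈ Finset.range n, g i x with hF
  have hFi : Integrable F μ' := (integrable_finsetSum _ fun i _ => hgint i).const_mul _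
  have hFm : Measurable F := (Finset.measurable_fun_sum _ fun i _ => hgm i).const_mul _
  have hFb : ∀ x, |F x - 1| ≤ (n : ℝ)⁻¹ * ∑ i ∈ Finset.range n, √((i : ℝ) + 1) + 1 := fun x => by
    have a1 : 0 ≤ F x := mul_nonneg (by positivity) (Finset.sum_nonneg fun i _ => hg0 i x)
    have a2 : F x ≤ (n : ℝ)⁻¹ * ∑ i ∈ Finset.range n, √((i : ℝ) + 1) :=
      mul_le_mul_of_nonneg_left (Finset.sum_le_sum fun i _ => hgb i x) (by positivity)
    rw [abs_le]
    constructor <;> linarith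
  have hF2 : Integrable (fun x => (F x - 1) ^ 2) μ' :=
    Integrable.of_bound ((hFm.sub_const 1).pow_const 2).aestronglyMeasurable
      (((n : ℝ)⁻¹ * ∑ i ∈ Finset.range n, √((i : ℝ) + 1) + 1) ^ 2)
      (ae_of_all _ fun x => by
        rw [norm_pow, Real.norm_eq_abs]
        exact pow_le_pow_left₀ (abs_nonneg _) (hFb x) 2)
  have hmain := abs_setIntegral_le_of_sq μ' (h := fun x => F x - 1)
    (hFi.sub (integrable_const _)) hF2 (half_pos hε) h1 A
  have hFA : ∫ x in A, (F x - 1) ∂μ' =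
      (n : ℝ)⁻¹ * ∑ i ∈ Finset.range n, (∫ x in A, g i x ∂μ') - (μ' A).toReal := by
    rw [integral_sub hFi.integrableOn (integrable_const _), integral_const_mul,
      integral_finsetSum _ fun i _ => (hgint i).integrableOn]
    simp [Measure.real]
  rw [hFA] at hmain
  -- The excess of `ν (ψ i)` over the density `g i` is a positive measure of mass `1 - ∫ g i`.
  have hdom : ∀ i (A : Set X), MeasurableSet A →
      ∫ x in A, g i x ∂μ' ≤ (ν (ψ i) A).toReal := fun i A hA => by
    have := hGν i (ψ i) A
    rw [withDensity_apply _ hA] at this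
    rw [hglint]
    exact ENNReal.toReal_mono (measure_ne_top _ _) this
  have hdiff : ∀ i, (ν (ψ i) A).toReal - ∫ x in A, g i x ∂μ' ≤ 1 - ∫ x, g i x ∂μ' := fun i => by
    have a1 := hdom i Aᶜ hA.compl
    have a2 := integral_add_compl hA (hgint i)
    have a3 : (ν (ψ i) A).toReal + (ν (ψ i) Aᶜ).toReal = 1 := by
      rw [← ENNReal.toReal_add (measure_ne_top _ _) (measure_ne_top _ _),
        measure_add_measure_compl hA, measure_univ, ENNReal.toReal_one]
    linarith
  have s1 : (n : ℝ)⁻¹ * ∑ i ∈ Finset.range n, (∫ x in A, g i x ∂μ') ≤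
      (n : ℝ)⁻¹ * ∑ i ∈ Finset.range n, (ν (ψ i) A).toReal :=
    mul_le_mul_of_nonneg_left (Finset.sum_le_sum fun i _ => hdom i A hA) (by positivity)
  have s2 : (n : ℝ)⁻¹ * ∑ i ∈ Finset.range n, ((ν (ψ i) A).toReal - ∫ x in A, g i x ∂μ') ≤
      (n : ℝ)⁻¹ * ∑ i ∈ Finset.range n, (1 - ∫ x, g i x ∂μ') :=
    mul_le_mul_of_nonneg_left (Finset.sum_le_sum fun i _ => hdiff i) (by positivity)
  rw [Finset.sum_sub_distrib, Finset.sum_sub_distrib, mul_sub, mul_sub] at s2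
  have s3 : (n : ℝ)⁻¹ * ∑ i ∈ Finset.range n, (1 : ℝ) = 1 := by
    simp [hn0'.ne']
  rw [s3] at s2
  rw [one_div]
  show |(n : ℝ)⁻¹ * ∑ i ∈ Finset.range n, (ν (ψ i) A).toReal - (μ' A).toReal| ≤ ε
  rw [abs_le] at hmain ⊢
  constructor <;> linarith [hmain.1, hmain.2]
end

section
/- Let μ, ν be probability measures on ℝ with finite first moments, μ ≤_c ν in convex order, and let C : ℝ × P^1(ℝ) → ℝ ∪ {+∞} be measurable, bounded below by -K(|x| + ∫|y| dp), with p ↦ C(x,p) convex and lower semicontinuous for each x (extended by +∞ off the barycenter constraint). Then the weak martingale optimal transport problem V_C^M(μ,ν) = inf over martingale couplings π ∈ Π_M(μ,ν) of ∫ C(x, π_x) μ(dx) admits a minimiser. -/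
open MeasureTheory ProbabilityTheory Filter Topology

/-- Conversion from `EReal` to `ℝ≥0∞`, sending `+∞` to `∞` and negative values to `0`. -/
noncomputable def erealToENNReal (x : EReal) : ENNReal :=
  if x = ⊤ then ⊤ else ENNReal.ofReal x.toReal

/-!
Martingale couplings of `μ` and `ν` are handled through their disintegrations, i.e. Markov kernels
`κ` with barycentre `x` at `μ`-almost every `x` and `κ ∘ₘ μ = ν`. Write `pot p t = ∫ |y - t| dp` for
the potential of `p`; it determines `p` (`eq_of_pot_eq`).

The compactness argument works directly with kernels, in the spirit of Komlós. Call `κ` admissible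
(`Adm μ ν κ`) if it is centred and the potential of `κ ∘ₘ μ` is at most that of `ν`, and let
`A 0 ⊇ A 1 ⊇ …` be nonempty sets of admissible kernels stable under midpoints. Choosing elements of
`A n` that almost minimise the `L²`-norm of the distribution functions `κ x (-∞, q]`, `q ∈ ℚ`,
the parallelogram law makes these distribution functions converge almost everywhere along a
subsequence (`exists_ae_tendsto_of_midpoint`). The bound on potentials rules out any loss of mass
or of first moment on average over `x`, so that, along a further subsequence, for almost every `x`
the chosen measures `u n x` converge to some `κ x` weakly and with their first absolute moments
(`exists_conv_of_midpoint`).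

This is used twice.

* Strassen's theorem (`exists_adm_comp_eq`): take for `A n` the admissible kernels whose spread
  `∫ √(1 + y²) d(κ ∘ₘ μ)` is within `1 / (n + 1)` of the supremum. The limit maximises the spread.
  If `κ ∘ₘ μ ≠ ν`, there is a point at which the potential of `κ ∘ₘ μ` is strictly below that of
  `ν`; sweeping the mass of a suitable interval around it to the endpoints keeps `κ` admissible
  (`exists_chord`) and strictly increases the spread, a contradiction. Hence the set of martingale
  couplings is nonempty.
* The transport problem: take for `A n` the martingale kernels from `μ` to `ν` with cost within
  `1 / (n + 1)` of the infimum, a set stable under midpoints because `C` is convex in the measure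
  argument. By lower semicontinuity of `C` and Fatou's lemma the limit kernel is a minimiser.
-/

/-! ### Weak convergence with convergence of first moments -/

/-- Weak convergence of measures on the line, tested against bounded continuous functions. -/
def WeakTo (p : ℕ → Measure ℝ) (p' : Measure ℝ) : Prop :=
  ∀ ψ : BoundedContinuousFunction ℝ ℝ,
    Tendsto (fun k => ∫ y, ψ y ∂(p k)) atTop (𝓝 (∫ y, ψ y ∂p'))

lemma WeakTo.lintegral_le_liminf {p : ℕ → Measure ℝ} {p' : Measure ℝ}
    [hp : ∀ k, IsProbabilityMeasure (p k)] [hp' : IsProbabilityMeasure p'] (h : WeakTo p p')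
    {g : ℝ → ℝ} (hg : Continuous g) (h0 : ∀ y, 0 ≤ g y) :
    ∫⁻ y, ENNReal.ofReal (g y) ∂p' ≤ atTop.liminf fun k => ∫⁻ y, ENNReal.ofReal (g y) ∂(p k) := by
  refine lintegral_le_liminf_lintegral_of_forall_isOpen_measure_le_liminf_measure hg h0 ?_
  intro G hG
  let P : ℕ → ProbabilityMeasure ℝ := fun k => ⟨p k, hp k⟩
  let P' : ProbabilityMeasure ℝ := ⟨p', hp'⟩
  have ht : Tendsto P atTop (𝓝 P') :=
    ProbabilityMeasure.tendsto_iff_forall_integral_tendsto.2 h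
  exact ProbabilityMeasure.le_liminf_measure_open_of_tendsto ht hG

lemma WeakTo.eventually_lt_integral {p : ℕ → Measure ℝ} {p' : Measure ℝ}
    [∀ k, IsProbabilityMeasure (p k)] [IsProbabilityMeasure p'] (h : WeakTo p p')
    {g : ℝ → ℝ} (hg : Continuous g) (h0 : ∀ y, 0 ≤ g y) (hi : ∀ k, Integrable g (p k))
    (hi' : Integrable g p') {c : ℝ} (hc : c < ∫ y, g y ∂p') : ∀ᶠ k in atTop, c < ∫ y, g y ∂(p k) := by
  rcases lt_or_ge c 0 with hc0 | hc0
  · exact Eventually.of_forall fun k => hc0.trans_le (integral_nonneg h0)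
  have h1 : ENNReal.ofReal c < atTop.liminf fun k => ∫⁻ y, ENNReal.ofReal (g y) ∂(p k) := by
    refine lt_of_lt_of_le ?_ (h.lintegral_le_liminf hg h0)
    rw [← ofReal_integral_eq_lintegral_ofReal hi' (Eventually.of_forall h0)]
    exact (ENNReal.ofReal_lt_ofReal_iff_of_nonneg hc0).2 hc
  filter_upwards [eventually_lt_of_lt_liminf h1] with k hk
  rw [← ofReal_integral_eq_lintegral_ofReal (hi k) (Eventually.of_forall h0)] at hk
  exact (ENNReal.ofReal_lt_ofReal_iff_of_nonneg hc0).1 hk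

lemma integrable_of_linear_growth {p : Measure ℝ} [IsFiniteMeasure p]
    (hp : Integrable (fun y : ℝ => |y|) p) {f : ℝ → ℝ} (hf : Continuous f) {c : ℝ}
    (hfc : ∀ y, |f y| ≤ c * (1 + |y|)) : Integrable f p :=
  (((integrable_const 1).add hp).const_mul c).mono' hf.aestronglyMeasurable
    (Eventually.of_forall hfc)

/-- Convergence in the `P^1` topology upgrades to continuous test functions of linear growth:
apply Fatou to the nonnegative functions `c (1 + |y|) ± f`. -/
lemma WeakTo.tendsto_integral {p : ℕ → Measure ℝ} {p' : Measure ℝ}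
    [∀ k, IsProbabilityMeasure (p k)] [IsProbabilityMeasure p'] (h : WeakTo p p')
    (hi : ∀ k, Integrable (fun y : ℝ => |y|) (p k)) (hi' : Integrable (fun y : ℝ => |y|) p')
    (hm : Tendsto (fun k => ∫ y, |y| ∂(p k)) atTop (𝓝 (∫ y, |y| ∂p')))
    {f : ℝ → ℝ} (hf : Continuous f) {c : ℝ} (hfc : ∀ y, |f y| ≤ c * (1 + |y|)) :
    Tendsto (fun k => ∫ y, f y ∂(p k)) atTop (𝓝 (∫ y, f y ∂p')) := by
  have I : ∀ (q : Measure ℝ) [IsProbabilityMeasure q], Integrable (fun y : ℝ => |y|) q →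
      Integrable (fun y => c * (1 + |y|)) q ∧ Integrable f q ∧
      ∫ y, c * (1 + |y|) ∂q = c * (1 + ∫ y, |y| ∂q) := by
    intro q _ hq
    refine ⟨((integrable_const 1).add hq).const_mul c, integrable_of_linear_growth hq hf hfc, ?_⟩
    rw [integral_const_mul, integral_add (integrable_const 1) hq]; simp
  have hM : Tendsto (fun k => c * (1 + ∫ y, |y| ∂(p k))) atTop (𝓝 (c * (1 + ∫ y, |y| ∂p'))) :=
    (hm.const_add 1).const_mul c
  obtain ⟨a1, a2, a3⟩ := I p' hi'
  rw [tendsto_order]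
  constructor
  · intro b hb
    have := h.eventually_lt_integral (g := fun y => c * (1 + |y|) + f y) (by fun_prop)
      (fun y => by have := neg_abs_le (f y); have := hfc y; linarith)
      (fun k => (I (p k) (hi k)).1.add (I (p k) (hi k)).2.1) (a1.add a2)
      (c := c * (1 + ∫ y, |y| ∂p') + (b + ∫ y, f y ∂p') / 2)
      (by rw [integral_add a1 a2, a3]; linarith)
    filter_upwards [this, (tendsto_order.1 hM).2 (c * (1 + ∫ y, |y| ∂p') +
      ((∫ y, f y ∂p') - b) / 2) (by linarith)] with k h1 h2
    obtain ⟨b1, b2, b3⟩ := I (p k) (hi k)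
    rw [integral_add b1 b2, b3] at h1
    linarith
  · intro b hb
    have := h.eventually_lt_integral (g := fun y => c * (1 + |y|) - f y) (by fun_prop)
      (fun y => by have := le_abs_self (f y); have := hfc y; linarith)
      (fun k => (I (p k) (hi k)).1.sub (I (p k) (hi k)).2.1) (a1.sub a2)
      (c := c * (1 + ∫ y, |y| ∂p') - (b + ∫ y, f y ∂p') / 2)
      (by rw [integral_sub a1 a2, a3]; linarith)
    filter_upwards [this, (tendsto_order.1 hM).2 (c * (1 + ∫ y, |y| ∂p') +
      (b - (∫ y, f y ∂p')) / 2) (by linarith)] with k h1 h2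
    obtain ⟨b1, b2, b3⟩ := I (p k) (hi k)
    rw [integral_sub b1 b2, b3] at h1
    linarith

/-- The potential `t ↦ ∫ |y - t| dp` of a measure on the line. -/
noncomputable def pot (p : Measure ℝ) (t : ℝ) : ℝ := ∫ y, |y - t| ∂p

lemma abs_sub_growth (t y : ℝ) : |(|y - t|)| ≤ (1 + |t|) * (1 + |y|) := by
  rw [abs_abs]
  have := abs_sub y t
  nlinarith [abs_nonneg t, abs_nonneg y]

lemma integrable_abs_sub {p : Measure ℝ} [IsFiniteMeasure p]
    (hp : Integrable (fun y : ℝ => |y|) p) (t : ℝ) : Integrable (fun y : ℝ => |y - t|) p :=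
  integrable_of_linear_growth hp (by fun_prop) (abs_sub_growth t)

lemma pot_zero (p : Measure ℝ) : pot p 0 = ∫ y, |y| ∂p := by simp [pot]

lemma tail_eq (y R : ℝ) (hR : 0 ≤ R) :
    max (|y| - R) 0 = (|y - R| + |y - (-R)|) / 2 - R := by
  rcases abs_cases y with h | h <;> rcases abs_cases (y - R) with h' | h' <;>
  rcases abs_cases (y - (-R)) with h'' | h'' <;> rcases max_cases (|y| - R) 0 with h3 | h3 <;>
  linarith

lemma integral_tail {p : Measure ℝ} [IsProbabilityMeasure p]
    (hp : Integrable (fun y : ℝ => |y|) p) {R : ℝ} (hR : 0 ≤ R) :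
    ∫ y, max (|y| - R) 0 ∂p = (pot p R + pot p (-R)) / 2 - R := by
  have h1 := integrable_abs_sub hp R
  have h2 := integrable_abs_sub hp (-R)
  simp_rw [tail_eq _ R hR]
  have h3 : Integrable (fun y : ℝ => (|y - R| + |y - (-R)|) / 2) p := (h1.add h2).div_const 2
  rw [integral_sub h3 (integrable_const _), integral_div, integral_add h1 h2]
  simp [pot]

lemma tendsto_integral_tail {p : Measure ℝ} [IsProbabilityMeasure p]
    (hp : Integrable (fun y : ℝ => |y|) p) :
    Tendsto (fun R : ℕ => ∫ y, max (|y| - R) 0 ∂p) atTop (𝓝 0) := by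
  have := tendsto_integral_of_dominated_convergence (μ := p)
    (F := fun (R : ℕ) y => max (|y| - R) 0) (f := fun _ => 0) (fun y : ℝ => |y|)
    (fun R => by fun_prop) hp
    (fun R => Eventually.of_forall fun y => by
      rw [Real.norm_of_nonneg (le_max_right _ _)]
      exact max_le (by simp) (abs_nonneg y))
    (Eventually.of_forall fun y => by
      refine tendsto_const_nhds.congr' ?_
      filter_upwards [eventually_ge_atTop ⌈|y|⌉₊] with R hR
      have : |y| ≤ R := (Nat.le_ceil _).trans (by exact_mod_cast hR)
      rw [max_eq_right (by linarith)])
  simpa using this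

/-- A domination of potentials by that of an integrable measure forces uniform integrability, so
that weak convergence implies convergence of first moments. -/
lemma WeakTo.tendsto_abs {p : ℕ → Measure ℝ} {p' ν : Measure ℝ}
    [∀ k, IsProbabilityMeasure (p k)] [IsProbabilityMeasure p'] [IsProbabilityMeasure ν]
    (h : WeakTo p p') (hi : ∀ k, Integrable (fun y : ℝ => |y|) (p k))
    (hν : Integrable (fun y : ℝ => |y|) ν) (hpot : ∀ k t, pot (p k) t ≤ pot ν t) :
    Integrable (fun y : ℝ => |y|) p' ∧
      Tendsto (fun k => ∫ y, |y| ∂(p k)) atTop (𝓝 (∫ y, |y| ∂p')) := by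
  have hi' : Integrable (fun y : ℝ => |y|) p' := by
    refine ⟨by fun_prop, ?_⟩
    rw [hasFiniteIntegral_iff_ofReal (Eventually.of_forall fun y => abs_nonneg y)]
    refine lt_of_le_of_lt (h.lintegral_le_liminf continuous_abs abs_nonneg)
      (lt_of_le_of_lt (liminf_le_of_frequently_le' (x := ENNReal.ofReal (pot ν 0)) ?_)
        ENNReal.ofReal_lt_top)
    refine Frequently.of_forall fun k => ?_
    rw [← ofReal_integral_eq_lintegral_ofReal (hi k) (Eventually.of_forall fun y => abs_nonneg y),
      ← pot_zero]
    exact ENNReal.ofReal_le_ofReal (hpot k 0)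
  refine ⟨hi', ?_⟩
  have split : ∀ (q : Measure ℝ) [IsProbabilityMeasure q], Integrable (fun y : ℝ => |y|) q →
      ∀ R : ℕ, ∫ y, |y| ∂q = ∫ y, min |y| R ∂q + ∫ y, max (|y| - R) 0 ∂q := by
    intro q _ hq R
    rw [← integral_add]
    · congr 1; ext y
      rcases le_total |y| R with hy | hy
      · rw [min_eq_left hy, max_eq_right (by linarith)]; simp
      · rw [min_eq_right hy, max_eq_left (by linarith)]; ring
    · refine integrable_of_linear_growth hq (c := 1) (by fun_prop) fun y => ?_
      rw [abs_of_nonneg (le_min (abs_nonneg y) (by positivity))]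
      linarith [min_le_left |y| (R : ℝ)]
    · refine integrable_of_linear_growth hq (c := 1) (by fun_prop) fun y => ?_
      rw [abs_of_nonneg (le_max_right _ _)]
      have : (0 : ℝ) ≤ R := by positivity
      exact max_le (by linarith) (by linarith [abs_nonneg y])
  have tl : ∀ (q : Measure ℝ) (R : ℕ), 0 ≤ ∫ y, max (|y| - R) 0 ∂q := fun q R =>
    integral_nonneg fun y => le_max_right _ _
  rw [Metric.tendsto_atTop]
  intro ε hε
  obtain ⟨R, hR1, hR2⟩ := (((tendsto_order.1 (tendsto_integral_tail hν)).2 (ε / 3)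
    (by linarith)).and ((tendsto_order.1 (tendsto_integral_tail hi')).2 (ε / 3)
    (by linarith))).exists
  have hR3 : ∀ k, ∫ y, max (|y| - R) 0 ∂(p k) < ε / 3 := fun k => by
    refine lt_of_le_of_lt ?_ hR1
    rw [integral_tail (hi k) (by positivity), integral_tail hν (by positivity)]
    linarith [hpot k R, hpot k (-R)]
  have hb : Tendsto (fun k => ∫ y, min |y| R ∂(p k)) atTop (𝓝 (∫ y, min |y| R ∂p')) := by
    refine h (BoundedContinuousFunction.ofNormedAddCommGroup (fun y : ℝ => min |y| (R : ℝ))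
      (by fun_prop) R fun y => ?_)
    rw [Real.norm_of_nonneg (le_min (abs_nonneg y) (by positivity))]
    exact min_le_right _ _
  obtain ⟨N, hN⟩ := Metric.tendsto_atTop.1 hb (ε / 3) (by linarith)
  refine ⟨N, fun k hk => ?_⟩
  have := hN k hk
  rw [Real.dist_eq, abs_lt] at this ⊢
  rw [split (p k) (hi k) R, split p' hi' R]
  have := tl (p k) R; have := tl p' R; have := hR3 k
  constructor <;> linarith

lemma bdd_min (y t : ℝ) {n : ℕ} (hn : 0 < n) :
    min 1 (n * max (y - t) 0) = n / 2 * (|y - t| - |y - (t + 1 / n)| + 1 / n) := by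
  have hn' : (0 : ℝ) < n := by exact_mod_cast hn
  have h1 : (n : ℝ) * (1 / n) = 1 := by field_simp
  have h0 : (0 : ℝ) < 1 / n := by positivity
  rcases le_total (y - t) 0 with h | h
  · rw [max_eq_right h, abs_of_nonpos h, abs_of_nonpos (by linarith)]; simp
  · rw [max_eq_left h, abs_of_nonneg h]
    rcases le_total (y - (t + 1 / n)) 0 with h' | h'
    · rw [abs_of_nonpos h', min_eq_right (by nlinarith)]; ring
    · rw [abs_of_nonneg h', min_eq_left (by nlinarith)]; linarith

/-- A probability measure with finite first moment is determined by its potential. -/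
lemma eq_of_pot_eq {p q : Measure ℝ} [IsProbabilityMeasure p] [IsProbabilityMeasure q]
    (hp : Integrable (fun y : ℝ => |y|) p) (hq : Integrable (fun y : ℝ => |y|) q)
    (h : ∀ t, pot p t = pot q t) : p = q := by
  have key : ∀ (m : Measure ℝ) [IsProbabilityMeasure m], Integrable (fun y : ℝ => |y|) m → ∀ t,
      Tendsto (fun n : ℕ => (n : ℝ) / 2 * (pot m t - pot m (t + 1 / n) + 1 / n)) atTop
        (𝓝 (m.real (Set.Ioi t))) := by
    intro m _ hm t
    have h1 := tendsto_integral_of_dominated_convergence (μ := m)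
      (F := fun (n : ℕ) y => min 1 ((n : ℝ) * max (y - t) 0))
      (f := (Set.Ioi t).indicator 1) (fun _ => 1)
      (fun n => by fun_prop) (integrable_const _)
      (fun n => Eventually.of_forall fun y => by
        rw [Real.norm_of_nonneg (by positivity)]
        exact min_le_left _ _)
      (Eventually.of_forall fun y => by
        rcases le_or_gt y t with hy | hy
        · simp [Set.indicator, max_eq_right (sub_nonpos.2 hy), not_lt.2 hy]
        · rw [Set.indicator_of_mem (show y ∈ Set.Ioi t from hy)]
          refine tendsto_const_nhds.congr' ?_
          filter_upwards [(tendsto_natCast_atTop_atTop (R := ℝ)).eventually_ge_atTop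
            (1 / (y - t))] with n hn
          have hy' : 0 < y - t := by linarith
          rw [max_eq_left hy'.le, min_eq_left]; · rfl
          rwa [div_le_iff₀ hy'] at hn)
    rw [integral_indicator_one measurableSet_Ioi] at h1
    refine h1.congr' ?_
    filter_upwards [eventually_gt_atTop 0] with n hn
    simp_rw [bdd_min _ t hn]
    have h3 : Integrable (fun y : ℝ => |y - t| - |y - (t + 1 / (n : ℝ))|) m :=
      (integrable_abs_sub hm _).sub (integrable_abs_sub hm _)
    rw [integral_const_mul, integral_add h3 (integrable_const _), integral_sub (integrable_abs_sub hm _) (integrable_abs_sub hm _)]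
    simp [pot]
  refine Measure.ext_of_Iic p q fun t => ?_
  have h2 : p.real (Set.Ioi t) = q.real (Set.Ioi t) := by
    refine tendsto_nhds_unique (key p hp t) ?_
    simp_rw [h]; exact key q hq t
  have h3 : p.real (Set.Iic t) = q.real (Set.Iic t) := by
    rw [← Set.compl_Ioi, probReal_compl_eq_one_sub measurableSet_Ioi,
      probReal_compl_eq_one_sub measurableSet_Ioi, h2]
  exact (measureReal_eq_measureReal_iff).1 h3

/-! ### Pointwise limits of distribution functions -/

/-- The right-continuous regularisation along the rationals of a family of functions `ℚ → ℝ`. -/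
noncomputable def rightReg {α : Type*} (G : α → ℚ → ℝ) (a : α) (q : ℚ) : ℝ :=
  ⨅ r : Set.Ioi q, G a r

lemma cdf_lim_props {p : ℕ → Measure ℝ} [∀ n, IsProbabilityMeasure (p n)] {G : ℚ → ℝ}
    (hG : ∀ q : ℚ, Tendsto (fun n => (p n).real (Set.Iic (q : ℝ))) atTop (𝓝 (G q))) :
    Monotone G ∧ (∀ q, 0 ≤ G q) ∧ (∀ q, G q ≤ 1) := by
  refine ⟨fun q r hqr => ?_, fun q => ?_, fun q => ?_⟩
  · refine le_of_tendsto_of_tendsto' (hG q) (hG r) fun n => measureReal_mono ?_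
    exact Set.Iic_subset_Iic.2 (by exact_mod_cast hqr)
  · exact ge_of_tendsto' (hG q) fun n => measureReal_nonneg
  · exact le_of_tendsto' (hG q) fun n => measureReal_le_one

lemma rightReg_bdd {α : Type*} {G : α → ℚ → ℝ} {a : α} (h0 : ∀ q, 0 ≤ G a q) (q : ℚ) :
    BddBelow (Set.range fun r : Set.Ioi q => G a r) :=
  ⟨0, by rintro _ ⟨r, rfl⟩; exact h0 _⟩

lemma rightReg_le {α : Type*} {G : α → ℚ → ℝ} {a : α} (h0 : ∀ q, 0 ≤ G a q) {q r : ℚ}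
    (h : q < r) : rightReg G a q ≤ G a r :=
  ciInf_le (rightReg_bdd h0 q) (⟨r, h⟩ : Set.Ioi q)

lemma le_rightReg {α : Type*} {G : α → ℚ → ℝ} {a : α} (hm : Monotone (G a)) (q : ℚ) :
    G a q ≤ rightReg G a q := by
  have : Nonempty (Set.Ioi q) := ⟨⟨q + 1, by simp⟩⟩
  exact le_ciInf fun r => hm (le_of_lt r.2)

/-- Markov's inequality for the two tails of a distribution function. -/
lemma cdf_markov {p : Measure ℝ} [IsProbabilityMeasure p] {V : ℝ} (hV : 0 ≤ V)
    (h : ∫⁻ y, ENNReal.ofReal |y| ∂p ≤ ENNReal.ofReal V) {q : ℝ} (hq : 0 < q) :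
    1 - V / q ≤ p.real (Set.Iic q) ∧ p.real (Set.Iic (-q)) ≤ V / q := by
  have hM : p.real {y | q ≤ |y|} ≤ V / q := by
    have h1 := (mul_meas_ge_le_lintegral (μ := p) (f := fun y : ℝ => ENNReal.ofReal |y|)
      (by fun_prop) (ENNReal.ofReal q)).trans h
    have h2 : {x : ℝ | ENNReal.ofReal q ≤ ENNReal.ofReal |x|} = {y | q ≤ |y|} := by
      ext y; simp [ENNReal.ofReal_le_ofReal_iff]
    rw [h2] at h1
    have h3 := ENNReal.toReal_mono ENNReal.ofReal_ne_top h1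
    rw [ENNReal.toReal_mul, ENNReal.toReal_ofReal hq.le, ENNReal.toReal_ofReal hV] at h3
    rw [le_div_iff₀ hq, mul_comm]
    exact h3
  constructor
  · have h1 : p.real (Set.Iic q)ᶜ ≤ p.real {y | q ≤ |y|} := by
      refine measureReal_mono fun y hy => ?_
      simp only [Set.mem_compl_iff, Set.mem_Iic, not_le] at hy
      exact hy.le.trans (le_abs_self y)
    rw [probReal_compl_eq_one_sub measurableSet_Iic] at h1
    linarith
  · refine le_trans (measureReal_mono fun y hy => ?_) hM
    simp only [Set.mem_Iic] at hy
    exact (by linarith : q ≤ -y).trans (neg_le_abs y)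

/-- A limit of distribution functions of measures whose first absolute moments do not all escape
to infinity is, after right-continuous regularisation, again a distribution function. -/
lemma isRatStieltjesPoint_rightReg {α : Type*} {G : α → ℚ → ℝ} {a : α}
    {p : ℕ → Measure ℝ} [∀ n, IsProbabilityMeasure (p n)]
    (hG : ∀ q : ℚ, Tendsto (fun n => (p n).real (Set.Iic (q : ℝ))) atTop (𝓝 (G a q)))
    (hm : atTop.liminf (fun n => ∫⁻ y, ENNReal.ofReal |y| ∂(p n)) < ⊤) :
    IsRatStieltjesPoint (rightReg G) a := by
  obtain ⟨hmono, h0, h1⟩ := cdf_lim_props hG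
  obtain ⟨V, hV0, hV⟩ : ∃ V : ℝ, 0 ≤ V ∧
      ∃ᶠ n in atTop, ∫⁻ y, ENNReal.ofReal |y| ∂(p n) ≤ ENNReal.ofReal V := by
    obtain ⟨b, hb, hb'⟩ := exists_between hm
    refine ⟨b.toReal, ENNReal.toReal_nonneg, ?_⟩
    refine (frequently_lt_of_liminf_lt (by isBoundedDefault) hb).mono fun n hn => ?_
    rw [ENNReal.ofReal_toReal hb'.ne]
    exact hn.le
  have hup : ∀ q : ℚ, 0 < q → 1 - V / q ≤ G a q := fun q hq =>
    ge_of_tendsto_of_frequently (hG q) (hV.mono fun n hn =>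
      (cdf_markov hV0 hn (by exact_mod_cast hq : (0 : ℝ) < q)).1)
  have hlo : ∀ q : ℚ, q < 0 → G a q ≤ V / (-q) := fun q hq =>
    le_of_tendsto_of_frequently (hG q) (hV.mono fun n hn => by
      have := (cdf_markov hV0 hn (by simpa using hq : (0 : ℝ) < -q)).2
      simpa using this)
  have hHG : ∀ q, G a q ≤ rightReg G a q := le_rightReg hmono
  have hH1 : ∀ q, rightReg G a q ≤ 1 := fun q =>
    (rightReg_le h0 (lt_add_one q)).trans (h1 _)
  have hHm : Monotone (rightReg G a) := by
    intro q r hqr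
    have : Nonempty (Set.Ioi r) := ⟨⟨r + 1, by simp⟩⟩
    exact le_ciInf fun s => rightReg_le h0 (lt_of_le_of_lt hqr s.2)
  have hcast : Tendsto (fun q : ℚ => (q : ℝ)) atTop atTop := tendsto_ratCast_atTop_iff.2 tendsto_id
  have hcast' : Tendsto (fun q : ℚ => (q : ℝ)) atBot atBot := tendsto_ratCast_atBot_iff.2 tendsto_id
  refine ⟨hHm, ?_, ?_, ?_⟩
  · have hl : Tendsto (fun q : ℚ => 1 - V / (q : ℝ)) atTop (𝓝 1) := by
      have := (tendsto_const_nhds (x := V)).div_atTop hcast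
      simpa using (tendsto_const_nhds (x := (1 : ℝ))).sub this
    refine tendsto_of_tendsto_of_tendsto_of_le_of_le' hl tendsto_const_nhds ?_
      (Eventually.of_forall hH1)
    filter_upwards [eventually_gt_atTop 0] with q hq
    exact (hup q hq).trans (hHG q)
  · have hl : Tendsto (fun q : ℚ => V / (-((q : ℝ) + 1))) atBot (𝓝 0) := by
      refine (tendsto_const_nhds (x := V)).div_atTop ?_
      exact tendsto_neg_atBot_atTop.comp (tendsto_atBot_add_const_right _ _ hcast')
    refine tendsto_of_tendsto_of_tendsto_of_le_of_le' tendsto_const_nhds hl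
      (Eventually.of_forall fun q => (h0 q).trans (hHG q)) ?_
    filter_upwards [eventually_lt_atBot (-1)] with q hq
    have := (rightReg_le h0 (lt_add_one q)).trans (hlo (q + 1) (by linarith))
    push_cast at this
    exact this
  · intro t
    have : Nonempty (Set.Ioi t) := ⟨⟨t + 1, by simp⟩⟩
    have hHb : BddBelow (Set.range fun r : Set.Ioi t => rightReg G a r) :=
      rightReg_bdd (fun q => (h0 q).trans (hHG q)) t
    refine le_antisymm (le_ciInf fun r => ?_) (le_ciInf fun r => hHm (le_of_lt r.2))
    obtain ⟨s, hs, hst⟩ := exists_between (Set.mem_Ioi.1 r.2)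
    exact (ciInf_le hHb (⟨s, hs⟩ : Set.Ioi t)).trans (rightReg_le h0 hst)

/-- Convergence of distribution functions at rational points, up to right-continuous
regularisation of the limit, implies weak convergence. -/
lemma weakTo_of_cdf {α : Type*} {G : α → ℚ → ℝ} {a : α}
    {p : ℕ → Measure ℝ} [∀ n, IsProbabilityMeasure (p n)] {p' : Measure ℝ} [IsProbabilityMeasure p']
    (hG : ∀ q : ℚ, Tendsto (fun n => (p n).real (Set.Iic (q : ℝ))) atTop (𝓝 (G a q)))
    (hp' : ∀ q : ℚ, p'.real (Set.Iic (q : ℝ)) = rightReg G a q) : WeakTo p p' := by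
  obtain ⟨hmono, h0, h1⟩ := cdf_lim_props hG
  have hIic : ∀ t : ℝ, p' {t} = 0 →
      Tendsto (fun n => (p n).real (Set.Iic t)) atTop (𝓝 (p'.real (Set.Iic t))) := by
    intro t ht
    rw [← cdf_eq_real]
    have hleft : Tendsto (cdf p') (𝓝[<] t) (𝓝 (cdf p' t)) := by
      have h2 : Function.leftLim (cdf p') t = cdf p' t := by
        have := (cdf p').measure_singleton t
        rw [measure_cdf, ht] at this
        have := ENNReal.ofReal_eq_zero.1 this.symm
        refine le_antisymm ((monotone_cdf p').leftLim_le le_rfl) (by linarith)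
      rw [← h2]
      exact (monotone_cdf p').tendsto_leftLim t
    have hright : Tendsto (cdf p') (𝓝[>] t) (𝓝 (cdf p' t)) :=
      ((cdf p').right_continuous t).mono_left (nhdsWithin_mono _ Set.Ioi_subset_Ici_self)
    refine tendsto_order.2 ⟨fun b hb => ?_, fun b hb => ?_⟩
    · obtain ⟨s, hs, hst⟩ := ((hleft.eventually_const_lt hb).and self_mem_nhdsWithin).exists
      obtain ⟨q', hq1, hq2⟩ := exists_rat_btwn (show s < t from hst)
      obtain ⟨q, hq3, hq4⟩ := exists_rat_btwn hq2
      have h3 : b < G a q := by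
        refine hs.trans_le (((monotone_cdf p') hq1.le).trans ?_)
        rw [cdf_eq_real, hp']
        exact rightReg_le h0 (by exact_mod_cast hq3)
      filter_upwards [(hG q).eventually_const_lt h3] with n hn
      exact hn.trans_le (measureReal_mono (Set.Iic_subset_Iic.2 hq4.le))
    · obtain ⟨s, hs, hst⟩ := ((hright.eventually_lt_const hb).and self_mem_nhdsWithin).exists
      obtain ⟨q, hq1, hq2⟩ := exists_rat_btwn (show t < s from hst)
      have h3 : G a q < b := by
        refine (le_rightReg hmono q).trans_lt ?_
        rw [← hp', ← cdf_eq_real]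
        exact ((monotone_cdf p') hq2.le).trans_lt hs
      filter_upwards [(hG q).eventually_lt_const h3] with n hn
      exact (measureReal_mono (Set.Iic_subset_Iic.2 hq1.le)).trans_lt hn
  set D : Set ℝ := {t | p' {t} = 0} with hD
  have hDd : Dense D := by
    have hc : Set.Countable {t : ℝ | 0 < p' {t}} := by
      simpa using Measure.countable_meas_level_set_pos (μ := p') (g := fun x : ℝ => x) measurable_id
    have : D = {t : ℝ | 0 < p' {t}}ᶜ := by ext t; simp [hD]
    rw [this]
    exact hc.dense_compl ℝ
  let P : ℕ → ProbabilityMeasure ℝ := fun n => ⟨p n, inferInstance⟩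
  let P' : ProbabilityMeasure ℝ := ⟨p', inferInstance⟩
  have hconv : Tendsto P atTop (𝓝 P') := by
    refine (isPiSystem_Ioc_mem D D).tendsto_probabilityMeasure_of_tendsto_of_mem ?_ ?_ ?_
    · rintro s ⟨l, -, u, -, -, rfl⟩
      exact measurableSet_Ioc
    · intro u hu x hx
      obtain ⟨ε, hε, hball⟩ := Metric.isOpen_iff.1 hu x hx
      obtain ⟨l, hl, hl1, hl2⟩ := hDd.exists_between (by linarith : x - ε < x)
      obtain ⟨r, hr, hr1, hr2⟩ := hDd.exists_between (by linarith : x < x + ε)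
      refine ⟨Set.Ioc l r, ⟨l, hl, r, hr, hl2.trans hr1, rfl⟩, Ioc_mem_nhds hl2 hr1, ?_⟩
      intro y hy
      apply hball
      rw [Metric.mem_ball, Real.dist_eq, abs_lt]
      constructor <;> linarith [hy.1, hy.2]
    · rintro s ⟨l, hl, r, hr, hlr, rfl⟩
      have hform : ∀ m : Measure ℝ, IsProbabilityMeasure m →
          m.real (Set.Ioc l r) = m.real (Set.Iic r) - m.real (Set.Iic l) := by
        intro m hm
        rw [← Set.Iic_sdiff_Iic, measureReal_sdiff (Set.Iic_subset_Iic.2 hlr.le) measurableSet_Iic]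
      rw [← NNReal.tendsto_coe]
      change Tendsto (fun n => (p n).real (Set.Ioc l r)) atTop (𝓝 (p'.real (Set.Ioc l r)))
      rw [hform p' inferInstance]
      simp_rw [hform _ inferInstance]
      exact (hIic r hr).sub (hIic l hl)
  exact fun ψ => (ProbabilityMeasure.tendsto_iff_forall_integral_tendsto.1 hconv) ψ

/-! ### Admissible kernels -/

lemma integral_comp_measure {μ : Measure ℝ} [IsProbabilityMeasure μ] {κ : Kernel ℝ ℝ}
    [IsMarkovKernel κ] {f : ℝ → ℝ} (hf : Integrable f (κ ∘ₘ μ)) :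
    ∫ y, f y ∂(κ ∘ₘ μ) = ∫ x, ∫ y, f y ∂(κ x) ∂μ := by
  rw [← Measure.snd_compProd] at hf ⊢
  rw [Measure.snd] at hf ⊢
  rw [integral_map measurable_snd.aemeasurable hf.1]
  exact Measure.integral_compProd ((integrable_map_measure hf.1 measurable_snd.aemeasurable).1 hf)

lemma ae_integrable_of_comp {μ : Measure ℝ} {κ : Kernel ℝ ℝ} {f : ℝ → ℝ}
    (hf : Integrable f (κ ∘ₘ μ)) : ∀ᵐ x ∂μ, Integrable f (κ x) :=
  ((Measure.integrable_comp_iff hf.1).1 hf).1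

lemma integrable_integral_comp {μ : Measure ℝ} {κ : Kernel ℝ ℝ} {f : ℝ → ℝ} (hfc : Continuous f)
    (hf : Integrable f (κ ∘ₘ μ)) : Integrable (fun x => ∫ y, f y ∂(κ x)) μ :=
  ((Measure.integrable_comp_iff hf.1).1 hf).2.mono'
    hfc.stronglyMeasurable.integral_kernel.aestronglyMeasurable
    (Eventually.of_forall fun _ => norm_integral_le_integral_norm _)

/-- Kernels which are `μ`-almost everywhere centred (`κ x` has barycentre `x`) and which
transport `μ` to a measure lying below `ν` in the order of potential functions. The last condition
is the convex order for measures of equal mean. -/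
structure Adm (μ ν : Measure ℝ) (κ : Kernel ℝ ℝ) : Prop where
  markov : IsMarkovKernel κ
  int : Integrable (fun y : ℝ => |y|) (κ ∘ₘ μ)
  bary : ∀ᵐ x ∂μ, ∫ y, y ∂(κ x) = x
  pot_le : ∀ t, pot (κ ∘ₘ μ) t ≤ pot ν t

/-- The kernel `x ↦ (κ x + κ' x) / 2`. -/
noncomputable def mid (κ κ' : Kernel ℝ ℝ) : Kernel ℝ ℝ where
  toFun x := ENNReal.ofReal (1 / 2) • κ x + ENNReal.ofReal (1 / 2) • κ' x
  measurable' := by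
    refine Measure.measurable_of_measurable_coe _ fun s hs => ?_
    simp only [Measure.add_apply, Measure.smul_apply, smul_eq_mul]
    exact ((κ.measurable_coe hs).const_mul _).add ((κ'.measurable_coe hs).const_mul _)

lemma mid_apply (κ κ' : Kernel ℝ ℝ) (x : ℝ) :
    mid κ κ' x = ENNReal.ofReal (1 / 2) • κ x + ENNReal.ofReal (1 / 2) • κ' x := rfl

lemma mid_comp (κ κ' : Kernel ℝ ℝ) (μ : Measure ℝ) : mid κ κ' ∘ₘ μ =
    ENNReal.ofReal (1 / 2) • (κ ∘ₘ μ) + ENNReal.ofReal (1 / 2) • (κ' ∘ₘ μ) := by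
  ext s hs
  rw [Measure.bind_apply hs (Kernel.aemeasurable _)]
  simp only [mid_apply, Measure.add_apply, Measure.smul_apply, smul_eq_mul]
  rw [Measure.bind_apply hs (Kernel.aemeasurable _), Measure.bind_apply hs (Kernel.aemeasurable _),
    lintegral_add_left ((κ.measurable_coe hs).const_mul _),
    lintegral_const_mul _ (κ.measurable_coe hs), lintegral_const_mul _ (κ'.measurable_coe hs)]

lemma integral_half {p q : Measure ℝ} {f : ℝ → ℝ} (hp : Integrable f p) (hq : Integrable f q) :
    ∫ y, f y ∂(ENNReal.ofReal (1 / 2) • p + ENNReal.ofReal (1 / 2) • q)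
      = (∫ y, f y ∂p + ∫ y, f y ∂q) / 2 := by
  rw [integral_add_measure (hp.smul_measure ENNReal.ofReal_ne_top)
    (hq.smul_measure ENNReal.ofReal_ne_top), integral_smul_measure, integral_smul_measure,
    ENNReal.toReal_ofReal (by norm_num)]
  simp only [smul_eq_mul]
  ring

lemma integrable_half {p q : Measure ℝ} {f : ℝ → ℝ} (hp : Integrable f p) (hq : Integrable f q) :
    Integrable f (ENNReal.ofReal (1 / 2) • p + ENNReal.ofReal (1 / 2) • q) :=
  (hp.smul_measure ENNReal.ofReal_ne_top).add_measure (hq.smul_measure ENNReal.ofReal_ne_top)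

lemma isProbabilityMeasure_half {p q : Measure ℝ} [IsProbabilityMeasure p]
    [IsProbabilityMeasure q] :
    IsProbabilityMeasure (ENNReal.ofReal (1 / 2) • p + ENNReal.ofReal (1 / 2) • q) := by
  constructor
  simp only [Measure.add_apply, Measure.smul_apply, measure_univ, smul_eq_mul, mul_one]
  rw [← ENNReal.ofReal_add (by norm_num) (by norm_num)]
  norm_num

lemma integrable_id_of_abs {p : Measure ℝ} (h : Integrable (fun y : ℝ => |y|) p) :
    Integrable (fun y : ℝ => y) p := by
  have := (integrable_norm_iff (μ := p) (f := fun y : ℝ => y) (by fun_prop)).1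
  exact this h

lemma Adm.mid {μ ν : Measure ℝ} [IsProbabilityMeasure μ] {κ κ' : Kernel ℝ ℝ}
    (h : Adm μ ν κ) (h' : Adm μ ν κ') : Adm μ ν (mid κ κ') := by
  have := h.markov
  have := h'.markov
  refine ⟨⟨fun x => isProbabilityMeasure_half⟩, ?_, ?_, fun t => ?_⟩
  · rw [mid_comp]
    exact integrable_half h.int h'.int
  · filter_upwards [h.bary, h'.bary, ae_integrable_of_comp h.int, ae_integrable_of_comp h'.int]
      with x h1 h2 h3 h4
    rw [mid_apply, integral_half (integrable_id_of_abs h3) (integrable_id_of_abs h4), h1, h2]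
    ring
  · rw [mid_comp, pot, integral_half (integrable_abs_sub h.int t) (integrable_abs_sub h'.int t)]
    have h1 := h.pot_le t
    have h2 := h'.pot_le t
    rw [pot] at h1 h2
    linarith

/-! ### An almost sure compactness principle for midpoint-convex families -/

/-- Near-minimisers of the squared `L²` norm along a decreasing sequence of midpoint-convex
families form a Cauchy sequence, by the parallelogram identity; a subsequence therefore converges
almost everywhere. -/
lemma exists_ae_tendsto_of_midpoint {Ω ι : Type*} [MeasurableSpace Ω] {m : Measure Ω}
    [IsFiniteMeasure m] {S : ℕ → Set ι} (hne : ∀ n, (S n).Nonempty) (hanti : Antitone S)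
    {f : ι → Ω → ℝ} (hf : ∀ n, ∀ i ∈ S n, Measurable (f i)) (h0 : ∀ n, ∀ i ∈ S n, ∀ x, 0 ≤ f i x)
    (h1 : ∀ n, ∀ i ∈ S n, ∀ x, f i x ≤ 1)
    (hmid : ∀ n, ∀ i ∈ S n, ∀ j ∈ S n, ∃ k ∈ S n, ∀ x, f k x = (f i x + f j x) / 2) :
    ∃ u : ℕ → ι, (∀ n, u n ∈ S n) ∧ ∀ᵐ x ∂m, ∃ l, Tendsto (fun n => f (u n) x) atTop (𝓝 l) := by
  set N : ι → ℝ := fun i => ∫ x, f i x ^ 2 ∂m with hN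
  have hNn : ∀ i, 0 ≤ N i := fun i => integral_nonneg fun x => sq_nonneg _
  have hN1 : ∀ n, ∀ i ∈ S n, N i ≤ m.real Set.univ := by
    intro n i hi
    have : N i ≤ ∫ _, (1 : ℝ) ∂m := by
      refine integral_mono_of_nonneg (Eventually.of_forall fun x => sq_nonneg _)
        (integrable_const _) (Eventually.of_forall fun x => ?_)
      have a := h0 n i hi x
      have b := h1 n i hi x
      change f i x ^ 2 ≤ 1
      nlinarith
    simpa using this
  set d : ℕ → ℝ := fun n => sInf (N '' S n) with hd
  have hbdd : ∀ n, BddBelow (N '' S n) := fun n => ⟨0, by rintro _ ⟨i, -, rfl⟩; exact hNn i⟩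
  have hdle : ∀ n, ∀ i ∈ S n, d n ≤ N i := fun n i hi => csInf_le (hbdd n) ⟨i, hi, rfl⟩
  have hdm : Monotone d := fun n k hnk =>
    csInf_le_csInf (hbdd n) ((hne k).image N) (Set.image_mono (hanti hnk))
  have hdb : BddAbove (Set.range d) := by
    refine ⟨m.real Set.univ, ?_⟩
    rintro _ ⟨n, rfl⟩
    obtain ⟨i, hi⟩ := hne n
    exact (hdle n i hi).trans (hN1 n i hi)
  have hdt := tendsto_atTop_ciSup hdm hdb
  set D := ⨆ n, d n with hD
  have hdD : ∀ n, d n ≤ D := fun n => le_ciSup hdb n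
  have hex : ∀ n : ℕ, ∃ i ∈ S n, N i < d n + 1 / ((n : ℝ) + 1) := by
    intro n
    obtain ⟨_, ⟨i, hi, rfl⟩, hlt⟩ := exists_lt_of_csInf_lt ((hne n).image N)
      (lt_add_of_pos_right (sInf (N '' S n)) (Nat.one_div_pos_of_nat (α := ℝ) (n := n)))
    exact ⟨i, hi, hlt⟩
  choose v hvS hv using hex
  have hInt : ∀ n, ∀ i ∈ S n, ∀ j ∈ S n, Integrable (fun x => f i x * f j x) m := by
    intro n i hi j hj
    refine (integrable_const (1 : ℝ)).mono' ((hf n i hi).mul (hf n j hj)).aestronglyMeasurable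
      (Eventually.of_forall fun x => ?_)
    rw [Real.norm_eq_abs, abs_of_nonneg (mul_nonneg (h0 n i hi x) (h0 n j hj x))]
    exact mul_le_one₀ (h1 n i hi x) (h0 n j hj x) (h1 n j hj x)
  -- the parallelogram identity, the midpoint having norm at least `d n`
  have hpar : ∀ n, ∀ i ∈ S n, ∀ j ∈ S n,
      ∫ x, (f i x - f j x) ^ 2 ∂m ≤ 2 * N i + 2 * N j - 4 * d n := by
    intro n i hi j hj
    obtain ⟨k, hk, hkf⟩ := hmid n i hi j hj
    have hii := hInt n i hi i hi
    have hjj := hInt n j hj j hj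
    have hkk := hInt n k hk k hk
    have e : ∫ x, (f i x - f j x) ^ 2 ∂m = 2 * N i + 2 * N j - 4 * N k := by
      simp only [hN]
      rw [← integral_const_mul, ← integral_const_mul, ← integral_const_mul,
        ← integral_add, ← integral_sub]
      · refine integral_congr_ae (Eventually.of_forall fun x => ?_)
        simp only [hkf]
        ring
      · simp only [pow_two]; exact (hii.const_mul 2).add (hjj.const_mul 2)
      · simp only [pow_two]; exact hkk.const_mul 4
      · simp only [pow_two]; exact hii.const_mul 2
      · simp only [pow_two]; exact hjj.const_mul 2
    have := hdle n k hk
    linarith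
  have hb : ∀ n k, n ≤ k → ∀ l, n ≤ l → ∫ x, (f (v k) x - f (v l) x) ^ 2 ∂m
      ≤ 4 * (D - d n) + 4 * (1 / ((n : ℝ) + 1)) := by
    intro n k hk l hl
    have e1 := hpar n _ (hanti hk (hvS k)) _ (hanti hl (hvS l))
    have e2 := hv k
    have e3 := hv l
    have e4 := hdD k
    have e5 := hdD l
    have e6 := Nat.one_div_le_one_div (α := ℝ) hk
    have e7 := Nat.one_div_le_one_div (α := ℝ) hl
    linarith
  have hbt : Tendsto (fun n : ℕ => 4 * (D - d n) + 4 * (1 / ((n : ℝ) + 1))) atTop (𝓝 0) := by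
    have a := (tendsto_const_nhds (x := D)).sub hdt
    have b := (a.const_mul 4).add ((tendsto_one_div_add_atTop_nhds_zero_nat (𝕜 := ℝ)).const_mul 4)
    simpa using b
  have hsub : ∃ φ : ℕ → ℕ, StrictMono φ ∧
      ∀ n, 4 * (D - d (φ n)) + 4 * (1 / ((φ n : ℝ) + 1)) < ((1 / 2 : ℝ) ^ n) ^ 2 := by
    refine extraction_forall_of_eventually (P := fun n k =>
      4 * (D - d k) + 4 * (1 / ((k : ℝ) + 1)) < ((1 / 2 : ℝ) ^ n) ^ 2) fun n => ?_
    exact hbt.eventually_lt_const (by positivity)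
  obtain ⟨φ, hφ, hφb⟩ := hsub
  refine ⟨fun n => v (φ n), fun n => hanti (hφ.id_le n) (hvS _), ?_⟩
  set M := m.real Set.univ with hM
  have hM0 : 0 ≤ M := measureReal_nonneg
  refine Lp.ae_tendsto_of_cauchy_eLpNorm (p := 1)
    (B := fun n => ENNReal.ofReal ((M + 2) * (1 / 2 : ℝ) ^ n))
    (fun n => (hf _ _ (hvS _)).aestronglyMeasurable) le_rfl ?_ ?_
  · rw [← ENNReal.ofReal_tsum_of_nonneg (fun n => by positivity)
      (summable_geometric_two.mul_left _)]
    exact ENNReal.ofReal_ne_top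
  · intro n k l hk hl
    have hk' := hanti (hφ.monotone hk) (hvS (φ k))
    have hl' := hanti (hφ.monotone hl) (hvS (φ l))
    have hI := (hb (φ n) (φ k) (hφ.monotone hk) (φ l) (hφ.monotone hl)).trans_lt (hφb n)
    set δ : ℝ := (1 / 2 : ℝ) ^ n with hδ
    have hδ0 : 0 < δ := by positivity
    have hbd : ∀ x, |f (v (φ k)) x - f (v (φ l)) x| ≤ 1 := by
      intro x
      have a1 := h0 _ _ hk' x
      have a2 := h1 _ _ hk' x
      have a3 := h0 _ _ hl' x
      have a4 := h1 _ _ hl' x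
      rw [abs_le]; constructor <;> linarith
    have hmeas : Measurable (fun x => f (v (φ k)) x - f (v (φ l)) x) :=
      (hf _ _ hk').sub (hf _ _ hl')
    have hi1 : Integrable (fun x => f (v (φ k)) x - f (v (φ l)) x) m :=
      (integrable_const (1 : ℝ)).mono' hmeas.aestronglyMeasurable (Eventually.of_forall hbd)
    have hi2 : Integrable (fun x => (f (v (φ k)) x - f (v (φ l)) x) ^ 2) m := by
      refine (integrable_const (1 : ℝ)).mono' (hmeas.pow_const 2).aestronglyMeasurable
        (Eventually.of_forall fun x => ?_)
      have := hbd x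
      rw [Real.norm_eq_abs, abs_pow]
      exact pow_le_one₀ (abs_nonneg _) this
    rw [eLpNorm_one_eq_lintegral_enorm]
    change ∫⁻ x, ‖f (v (φ k)) x - f (v (φ l)) x‖ₑ ∂m < _
    rw [← ofReal_integral_norm_eq_lintegral_enorm hi1]
    refine (ENNReal.ofReal_lt_ofReal_iff (by positivity)).2 ?_
    -- `|z| ≤ δ + z² / δ`
    have hle : ∫ x, ‖f (v (φ k)) x - f (v (φ l)) x‖ ∂m
        ≤ ∫ x, (δ + (f (v (φ k)) x - f (v (φ l)) x) ^ 2 * δ⁻¹) ∂m := by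
      refine integral_mono hi1.norm ((integrable_const _).add (hi2.mul_const _)) fun x => ?_
      change |f (v (φ k)) x - f (v (φ l)) x| ≤ δ + (f (v (φ k)) x - f (v (φ l)) x) ^ 2 * δ⁻¹
      set z := f (v (φ k)) x - f (v (φ l)) x
      have : |z| * δ ≤ δ * δ + z ^ 2 := by
        rw [← sq_abs z]; nlinarith [sq_nonneg (|z| - δ), abs_nonneg z]
      rw [← mul_le_mul_iff_left₀ hδ0]
      calc |z| * δ ≤ δ * δ + z ^ 2 := this
        _ = (δ + z ^ 2 * δ⁻¹) * δ := by field_simp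
    rw [integral_add (integrable_const _) (hi2.mul_const _), integral_mul_const] at hle
    simp only [integral_const, smul_eq_mul] at hle
    have : (∫ x, (f (v (φ k)) x - f (v (φ l)) x) ^ 2 ∂m) * δ⁻¹ ≤ δ := by
      rw [← div_eq_mul_inv, div_le_iff₀ hδ0]
      nlinarith
    nlinarith

/-! ### Compactness for admissible kernels -/

/-- A Scheffé-type lemma: if `w ≤ liminf wₙ` almost everywhere and `∫ wₙ → ∫ w` for nonnegative
functions, then a subsequence of `wₙ` converges to `w` almost everywhere. -/
lemma exists_subseq_of_scheffe {μ : Measure ℝ} {w : ℕ → ℝ → ℝ} {w' : ℝ → ℝ}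
    (hw : ∀ n, Integrable (w n) μ) (hw' : Integrable w' μ) (h0 : ∀ n x, 0 ≤ w n x)
    (h0' : ∀ x, 0 ≤ w' x) (hlow : ∀ᵐ x ∂μ, ∀ c < w' x, ∀ᶠ n in atTop, c < w n x)
    (hlim : Tendsto (fun n => ∫ x, w n x ∂μ) atTop (𝓝 (∫ x, w' x ∂μ))) :
    ∃ φ : ℕ → ℕ, StrictMono φ ∧ ∀ᵐ x ∂μ, Tendsto (fun n => w (φ n) x) atTop (𝓝 (w' x)) := by
  have hpos : ∀ n, Integrable (fun x => max (w' x - w n x) 0) μ := fun n =>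
    (hw'.sub (hw n)).pos_part
  have hneg : Tendsto (fun n => ∫ x, max (w' x - w n x) 0 ∂μ) atTop (𝓝 0) := by
    have := tendsto_integral_of_dominated_convergence (μ := μ)
      (F := fun n x => max (w' x - w n x) 0) (f := fun _ => (0 : ℝ)) w' (fun n => (hpos n).1) hw'
      (fun n => Eventually.of_forall fun x => ?_) ?_
    · simpa using this
    · rw [Real.norm_eq_abs, abs_of_nonneg (le_max_right _ _)]
      exact max_le (by linarith [h0 n x]) (h0' x)
    · filter_upwards [hlow] with x hx
      refine tendsto_order.2 ⟨fun b hb => Eventually.of_forall fun n =>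
        hb.trans_le (le_max_right _ _), fun b hb => ?_⟩
      filter_upwards [hx (w' x - b) (by linarith)] with n hn
      exact max_lt (by linarith) hb
  have hL1 : Tendsto (fun n => ∫ x, |w n x - w' x| ∂μ) atTop (𝓝 0) := by
    have e : ∀ n, ∫ x, |w n x - w' x| ∂μ
        = (∫ x, w n x ∂μ - ∫ x, w' x ∂μ) + 2 * ∫ x, max (w' x - w n x) 0 ∂μ := by
      intro n
      rw [← integral_sub (hw n) hw', ← integral_const_mul,
        ← integral_add (f := fun x => w n x - w' x) ((hw n).sub hw') ((hpos n).const_mul 2)]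
      refine integral_congr_ae (Eventually.of_forall fun x => ?_)
      simp only
      rcases le_total (w n x) (w' x) with h | h
      · rw [max_eq_left (by linarith), abs_of_nonpos (by linarith)]; ring
      · rw [max_eq_right (by linarith), abs_of_nonneg (by linarith)]; ring
    simp_rw [e]
    have := (hlim.sub_const (∫ x, w' x ∂μ)).add (hneg.const_mul 2)
    simpa using this
  have hmeas : TendstoInMeasure μ w atTop w' := by
    refine tendstoInMeasure_of_tendsto_eLpNorm (p := 1) one_ne_zero (fun n => (hw n).1) hw'.1 ?_
    have e : ∀ n, eLpNorm (w n - w') 1 μ = ENNReal.ofReal (∫ x, |w n x - w' x| ∂μ) := by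
      intro n
      rw [eLpNorm_one_eq_lintegral_enorm, ← ofReal_integral_norm_eq_lintegral_enorm
        ((hw n).sub hw')]
      rfl
    simp_rw [e]
    simpa using ENNReal.tendsto_ofReal hL1
  exact hmeas.exists_seq_tendsto_ae

/-- Convergence of kernels used for the minimisation: almost everywhere, and for the images of
`μ`, weak convergence together with convergence of first absolute moments. -/
structure KConv (μ : Measure ℝ) (u : ℕ → Kernel ℝ ℝ) (κ : Kernel ℝ ℝ) : Prop where
  ae : ∀ᵐ x ∂μ, (∀ n, Integrable (fun y : ℝ => |y|) (u n x)) ∧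
    Integrable (fun y : ℝ => |y|) (κ x) ∧ WeakTo (fun n => u n x) (κ x) ∧
    Tendsto (fun n => ∫ y, |y| ∂(u n x)) atTop (𝓝 (∫ y, |y| ∂(κ x)))
  weak : WeakTo (fun n => u n ∘ₘ μ) (κ ∘ₘ μ)
  moment : Tendsto (fun n => ∫ y, |y| ∂(u n ∘ₘ μ)) atTop (𝓝 (∫ y, |y| ∂(κ ∘ₘ μ)))

/-- Almost everywhere convergence of the distribution functions at the rationals produces a limiting
Markov kernel: by Fatou, for almost every `x` the first moments of `u n x` do not tend to infinity,
which gives tightness along a subsequence. -/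
lemma exists_kernel_limit {μ ν : Measure ℝ} [IsProbabilityMeasure μ]
    {u : ℕ → Kernel ℝ ℝ} (hu : ∀ n, Adm μ ν (u n))
    (hconv : ∀ᵐ x ∂μ, ∀ q : ℚ, ∃ l, Tendsto (fun n => (u n x).real (Set.Iic (q : ℝ))) atTop (𝓝 l)) :
    ∃ κ : Kernel ℝ ℝ, IsMarkovKernel κ ∧ ∀ᵐ x ∂μ, WeakTo (fun n => u n x) (κ x) := by
  have := fun n => (hu n).markov
  set G : ℝ → ℚ → ℝ := fun x q => atTop.liminf fun n => (u n x).real (Set.Iic (q : ℝ)) with hG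
  have hGm : ∀ q, Measurable fun x => G x q := fun q =>
    Measurable.liminf fun n => ((u n).measurable_coe measurableSet_Iic).ennreal_toReal
  have hH : Measurable (rightReg G) := by
    refine measurable_pi_iff.2 fun q => ?_
    exact Measurable.iInf fun r => hGm _
  have hfin : ∀ᵐ x ∂μ, atTop.liminf (fun n => ∫⁻ y, ENNReal.ofReal |y| ∂(u n x)) < ⊤ := by
    have hm : ∀ n, Measurable fun x => ∫⁻ y, ENNReal.ofReal |y| ∂(u n x) := fun n =>
      Measurable.lintegral_kernel (by fun_prop)
    refine ae_lt_top (Measurable.liminf hm) (ne_of_lt ?_)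
    refine (lintegral_liminf_le hm).trans_lt ?_
    refine lt_of_le_of_lt ?_ (ENNReal.ofReal_lt_top (r := pot ν 0))
    have e : ∀ n, ∫⁻ x, ∫⁻ y, ENNReal.ofReal |y| ∂(u n x) ∂μ ≤ ENNReal.ofReal (pot ν 0) := by
      intro n
      rw [← Measure.lintegral_bind (Kernel.aemeasurable _) (by fun_prop),
        ← ofReal_integral_eq_lintegral_ofReal (hu n).int (Eventually.of_forall fun y => abs_nonneg y),
        ← pot_zero]
      exact ENNReal.ofReal_le_ofReal ((hu n).pot_le 0)
    exact (liminf_le_liminf (Eventually.of_forall e)).trans (by simp)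
  refine ⟨⟨fun x => (stieltjesOfMeasurableRat (rightReg G) hH x).measure,
    measurable_measure_stieltjesOfMeasurableRat hH⟩,
    ⟨fun x => ⟨measure_stieltjesOfMeasurableRat_univ hH x⟩⟩, ?_⟩
  filter_upwards [hconv, hfin] with x hx hx'
  have hGt : ∀ q : ℚ, Tendsto (fun n => (u n x).real (Set.Iic (q : ℝ))) atTop (𝓝 (G x q)) := by
    intro q
    obtain ⟨l, hl⟩ := hx q
    have : G x q = l := hl.liminf_eq
    rwa [this]
  have hS := isRatStieltjesPoint_rightReg hGt hx'
  obtain ⟨hmono, h0, -⟩ := cdf_lim_props hGt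
  have : IsProbabilityMeasure (stieltjesOfMeasurableRat (rightReg G) hH x).measure :=
    ⟨measure_stieltjesOfMeasurableRat_univ hH x⟩
  refine weakTo_of_cdf (a := x) hGt fun q => ?_
  change (stieltjesOfMeasurableRat (rightReg G) hH x).measure.real _ = _
  rw [measureReal_def, measure_stieltjesOfMeasurableRat_Iic, stieltjesOfMeasurableRat_eq,
    toRatCDF_of_isRatStieltjesPoint hS, ENNReal.toReal_ofReal]
  exact (h0 q).trans (le_rightReg hmono q)

lemma integrable_bcf {p : Measure ℝ} [IsFiniteMeasure p] (ψ : BoundedContinuousFunction ℝ ℝ) :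
    Integrable (fun y => ψ y) p :=
  (integrable_const ‖ψ‖).mono' ψ.continuous.aestronglyMeasurable
    (Eventually.of_forall fun y => ψ.norm_coe_le_norm y)

lemma weakTo_comp {μ : Measure ℝ} [IsProbabilityMeasure μ] {u : ℕ → Kernel ℝ ℝ} {κ : Kernel ℝ ℝ}
    [∀ n, IsMarkovKernel (u n)] [IsMarkovKernel κ]
    (h : ∀ᵐ x ∂μ, WeakTo (fun n => u n x) (κ x)) : WeakTo (fun n => u n ∘ₘ μ) (κ ∘ₘ μ) := by
  intro ψ
  rw [integral_comp_measure (integrable_bcf ψ)]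
  have e : ∀ n, ∫ y, ψ y ∂(u n ∘ₘ μ) = ∫ x, ∫ y, ψ y ∂(u n x) ∂μ := fun n =>
    integral_comp_measure (integrable_bcf ψ)
  simp_rw [e]
  refine tendsto_integral_of_dominated_convergence (fun _ => ‖ψ‖)
    (fun n => ψ.continuous.stronglyMeasurable.integral_kernel.aestronglyMeasurable)
    (integrable_const _) (fun n => Eventually.of_forall fun x => ?_) ?_
  · have := norm_integral_le_of_norm_le_const (μ := u n x)
      (Eventually.of_forall fun y => ψ.norm_coe_le_norm y)
    simpa using this
  · filter_upwards [h] with x hx using hx ψ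

/-- Along a decreasing sequence of nonempty midpoint-convex families of admissible kernels one can
pick members converging to an admissible kernel. -/
lemma exists_conv_of_midpoint {μ ν : Measure ℝ} [IsProbabilityMeasure μ] [IsProbabilityMeasure ν]
    (hν : Integrable (fun y : ℝ => |y|) ν)
    {A : ℕ → Set (Kernel ℝ ℝ)} (hne : ∀ n, (A n).Nonempty) (hanti : Antitone A)
    (hA : ∀ n, ∀ κ ∈ A n, Adm μ ν κ) (hmid : ∀ n, ∀ κ ∈ A n, ∀ κ' ∈ A n, mid κ κ' ∈ A n) :
    ∃ (u : ℕ → Kernel ℝ ℝ) (κ : Kernel ℝ ℝ), (∀ n, u n ∈ A n) ∧ Adm μ ν κ ∧ KConv μ u κ := by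
  -- a finite measure on `ℚ` charging every point
  let ρ : Measure ℚ := (Measure.count : Measure ℚ).toFinite
  obtain ⟨u, huA, hu⟩ := exists_ae_tendsto_of_midpoint (m := μ.prod ρ) hne hanti
    (f := fun (κ : Kernel ℝ ℝ) (z : ℝ × ℚ) => (κ z.1).real (Set.Iic (z.2 : ℝ)))
    (fun n κ _ => measurable_from_prod_countable_left fun q => by
      simp only [measureReal_def]
      exact (κ.measurable_coe measurableSet_Iic).ennreal_toReal)
    (fun n κ _ z => measureReal_nonneg)
    (fun n κ hκ z => by have := (hA n κ hκ).markov; exact measureReal_le_one)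
    (fun n κ hκ κ' hκ' => ⟨mid κ κ', hmid n κ hκ κ' hκ', fun z => by
      have := (hA n κ hκ).markov
      have := (hA n κ' hκ').markov
      simp only [mid_apply, measureReal_def, Measure.add_apply, Measure.smul_apply, smul_eq_mul]
      rw [ENNReal.toReal_add (by finiteness) (by finiteness), ENNReal.toReal_mul,
        ENNReal.toReal_mul, ENNReal.toReal_ofReal (by norm_num)]
      ring⟩)
  have hadm : ∀ n, Adm μ ν (u n) := fun n => hA n _ (huA n)
  have := fun n => (hadm n).markov
  have hx : ∀ᵐ x ∂μ, ∀ q : ℚ, ∃ l,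
      Tendsto (fun n => (u n x).real (Set.Iic (q : ℝ))) atTop (𝓝 l) := by
    filter_upwards [Measure.ae_ae_of_ae_prod hu] with x hx q
    rw [ae_toFinite] at hx
    exact Measure.ae_count_iff.1 hx q
  obtain ⟨κ, hκM, hκ⟩ := exists_kernel_limit hadm hx
  have hweak := weakTo_comp hκ
  have hpot : ∀ k t, pot (u k ∘ₘ μ) t ≤ pot ν t := fun k => (hadm k).pot_le
  obtain ⟨hInt, hmom⟩ := hweak.tendsto_abs (fun k => (hadm k).int) hν hpot
  have hpot' : ∀ t, pot (κ ∘ₘ μ) t ≤ pot ν t := fun t =>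
    le_of_tendsto' (hweak.tendsto_integral (fun k => (hadm k).int) hInt hmom
      (f := fun y => |y - t|) (by fun_prop) (abs_sub_growth t)) fun k => hpot k t
  have hae : ∀ᵐ x ∂μ, (∀ n, Integrable (fun y : ℝ => |y|) (u n x)) ∧
      Integrable (fun y : ℝ => |y|) (κ x) := by
    filter_upwards [ae_all_iff.2 fun n => ae_integrable_of_comp (hadm n).int,
      ae_integrable_of_comp hInt] with x h1 h2 using ⟨h1, h2⟩
  -- averaged over `x`, no first moment is lost; by Scheffé none is lost for almost every `x` along a
  -- subsequence
  obtain ⟨φ, hφ, hφt⟩ := exists_subseq_of_scheffe (μ := μ)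
    (w := fun n x => ∫ y, |y| ∂(u n x)) (w' := fun x => ∫ y, |y| ∂(κ x))
    (fun n => integrable_integral_comp continuous_abs (hadm n).int)
    (integrable_integral_comp continuous_abs hInt)
    (fun n x => integral_nonneg fun y => abs_nonneg y)
    (fun x => integral_nonneg fun y => abs_nonneg y)
    (by
      filter_upwards [hκ, hae] with x h1 h2 c hc
      exact h1.eventually_lt_integral continuous_abs (fun y => abs_nonneg y) h2.1 h2.2 hc)
    (by
      rw [← integral_comp_measure hInt]
      simp_rw [← fun n => integral_comp_measure (hadm n).int]
      exact hmom)
  have hsub : ∀ {p : ℕ → Measure ℝ} {p' : Measure ℝ}, WeakTo p p' →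
      WeakTo (fun n => p (φ n)) p' := fun h ψ => (h ψ).comp hφ.tendsto_atTop
  have hfinal : ∀ᵐ x ∂μ, (∀ n, Integrable (fun y : ℝ => |y|) (u (φ n) x)) ∧
      Integrable (fun y : ℝ => |y|) (κ x) ∧ WeakTo (fun n => u (φ n) x) (κ x) ∧
      Tendsto (fun n => ∫ y, |y| ∂(u (φ n) x)) atTop (𝓝 (∫ y, |y| ∂(κ x))) := by
    filter_upwards [hκ, hae, hφt] with x h1 h2 h3
    exact ⟨fun n => h2.1 _, h2.2, hsub h1, h3⟩
  refine ⟨fun n => u (φ n), κ, fun n => hanti (hφ.id_le n) (huA _), ⟨hκM, hInt, ?_, hpot'⟩,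
    ⟨hfinal, hsub hweak, hmom.comp hφ.tendsto_atTop⟩⟩
  filter_upwards [hfinal, ae_all_iff.2 fun n => (hadm (φ n)).bary] with x hx hb
  have := hx.2.2.1.tendsto_integral hx.1 hx.2.1 hx.2.2.2 (f := fun y => y) (c := 1) continuous_id
    (fun y => by linarith [abs_nonneg y])
  simp only [hb] at this
  exact tendsto_nhds_unique this tendsto_const_nhds

/-! ### Strassen's theorem on the line -/

lemma continuous_pot {p : Measure ℝ} [IsProbabilityMeasure p]
    (hp : Integrable (fun y : ℝ => |y|) p) : Continuous (pot p) := by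
  refine LipschitzWith.continuous (K := 1) (LipschitzWith.of_le_add fun s t => ?_)
  have : pot p s ≤ ∫ y, (|y - t| + dist s t) ∂p := by
    refine integral_mono (integrable_abs_sub hp s)
      ((integrable_abs_sub hp t).add (integrable_const _)) fun y => ?_
    simp only [Real.dist_eq]
    rw [abs_sub_comm s t]
    simpa using abs_sub_le y t s
  rw [integral_add (integrable_abs_sub hp t) (integrable_const _)] at this
  simpa [pot] using this

lemma abs_mean_sub_le_pot {p : Measure ℝ} [IsProbabilityMeasure p]
    (hp : Integrable (fun y : ℝ => |y|) p) (t : ℝ) : |∫ y, y ∂p - t| ≤ pot p t := by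
  have h : ∫ y, y ∂p - t = ∫ y, (y - t) ∂p := by
    rw [integral_sub (integrable_id_of_abs hp) (integrable_const _)]; simp
  rw [h]
  exact abs_integral_le_integral_abs

/-- If the potential of `η` lies strictly below that of `ν` at `t₀`, then a supporting line of
`pot ν` at `t₀` cuts the graph of `pot η` at two points `a < t₀ < b`. -/
lemma exists_chord {η ν : Measure ℝ} [IsProbabilityMeasure η] [IsProbabilityMeasure ν]
    (hη : Integrable (fun y : ℝ => |y|) η) (hν : Integrable (fun y : ℝ => |y|) ν)
    (hm : ∫ y, y ∂η = ∫ y, y ∂ν) {t₀ : ℝ} (ht₀ : pot η t₀ < pot ν t₀) :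
    ∃ a b, a < t₀ ∧ t₀ < b ∧
      (∀ t, ((b - t) * pot η a + (t - a) * pot η b) / (b - a) ≤ pot ν t) ∧
      ((b - t₀) * pot η a + (t₀ - a) * pot η b) / (b - a) = pot ν t₀ := by
  set m := ∫ y, y ∂ν with hmdef
  set c := pot ν t₀ with hc
  set r := ν.real (Set.Ioi t₀) with hr
  have hidν := integrable_id_of_abs hν
  -- `1 - 2 r` is the right derivative of `pot ν` at `t₀`
  have hsupp : ∀ t, c + (2 * r - 1) * (t₀ - t) ≤ pot ν t := by
    intro t
    have hi : Integrable ((Set.Ioi t₀).indicator (fun _ : ℝ => (1 : ℝ))) ν :=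
      (integrable_const _).indicator measurableSet_Ioi
    have hI : Integrable (fun y =>
        (2 * (Set.Ioi t₀).indicator (fun _ : ℝ => (1 : ℝ)) y - 1) * (t₀ - t)) ν :=
      ((hi.const_mul 2).sub (integrable_const _)).mul_const _
    have h1 : ∫ y, (|y - t₀| +
        (2 * (Set.Ioi t₀).indicator (fun _ : ℝ => (1 : ℝ)) y - 1) * (t₀ - t)) ∂ν
        ≤ pot ν t := by
      refine integral_mono ((integrable_abs_sub hν t₀).add hI)
        (integrable_abs_sub hν t) fun y => ?_
      change |y - t₀| + (2 * (Set.Ioi t₀).indicator (fun _ : ℝ => (1 : ℝ)) y - 1) * (t₀ - t)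
        ≤ |y - t|
      rcases le_or_gt y t₀ with h | h
      · rw [Set.indicator_of_notMem (by simpa using h), abs_of_nonpos (by linarith)]
        linarith [neg_abs_le (y - t)]
      · rw [Set.indicator_of_mem (by simpa using h), abs_of_pos (by linarith)]
        linarith [le_abs_self (y - t)]
    rw [integral_add (integrable_abs_sub hν t₀) hI, integral_mul_const,
      integral_sub (hi.const_mul 2) (integrable_const _), integral_const_mul,
      integral_indicator_const _ measurableSet_Ioi] at h1
    simpa [pot, hc, hr] using h1
  have hmean : ∀ t, |m - t| ≤ pot η t := fun t => by
    have := abs_mean_sub_le_pot hη t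
    rwa [hm] at this
  have hr0 : 0 < r := by
    refine lt_of_le_of_ne measureReal_nonneg fun h => ?_
    have h0 : ν (Set.Ioi t₀) = 0 := by
      rw [← measureReal_eq_zero_iff]; exact h.symm
    have : c = t₀ - m := by
      have e : pot ν t₀ = ∫ y, (t₀ - y) ∂ν := by
        refine integral_congr_ae ?_
        filter_upwards [measure_eq_zero_iff_ae_notMem.1 h0] with y hy
        have : y ≤ t₀ := by simpa using hy
        rw [abs_of_nonpos (by linarith)]; ring
      rw [hc, e, integral_sub (integrable_const _) hidν]; simp [hmdef]
    have h2 := (neg_abs_le (m - t₀)).trans' (neg_le_neg (hmean t₀))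
    linarith
  have hr1 : r < 1 := by
    refine lt_of_le_of_ne measureReal_le_one fun h => ?_
    have h0 : ν (Set.Ioi t₀)ᶜ = 0 := by
      rw [← measureReal_eq_zero_iff, probReal_compl_eq_one_sub measurableSet_Ioi, ← hr, h, sub_self]
    have : c = m - t₀ := by
      have e : pot ν t₀ = ∫ y, (y - t₀) ∂ν := by
        refine integral_congr_ae ?_
        filter_upwards [measure_eq_zero_iff_ae_notMem.1 h0] with y hy
        have : t₀ < y := by simpa using hy
        rw [abs_of_nonneg (by linarith)]
      rw [hc, e, integral_sub hidν (integrable_const _)]; simp [hmdef]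
    have h2 := (le_abs_self (m - t₀)).trans (hmean t₀)
    linarith
  set D : ℝ → ℝ := fun t => pot η t - (c + (2 * r - 1) * (t₀ - t)) with hD
  have hDc : Continuous D := by
    have := continuous_pot hη
    fun_prop
  have hD0 : D t₀ < 0 := by simp only [hD]; linarith
  obtain ⟨b, hb, hDb⟩ : ∃ b, t₀ < b ∧ D b = 0 := by
    set t₁ := max t₀ ((m + c + (2 * r - 1) * t₀) / (2 * r)) with ht₁
    have h1 : 0 ≤ D t₁ := by
      have h2 := (neg_abs_le (m - t₁)).trans' (neg_le_neg (hmean t₁))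
      have h3 : (m + c + (2 * r - 1) * t₀) / (2 * r) ≤ t₁ := le_max_right _ _
      rw [div_le_iff₀ (by linarith)] at h3
      simp only [hD]
      nlinarith
    obtain ⟨b, hb, hDb⟩ := intermediate_value_Icc (le_max_left t₀ _) hDc.continuousOn
      (show (0 : ℝ) ∈ Set.Icc (D t₀) (D t₁) from ⟨hD0.le, h1⟩)
    refine ⟨b, lt_of_le_of_ne hb.1 fun h => ?_, hDb⟩
    rw [← h] at hDb
    linarith
  obtain ⟨a, ha, hDa⟩ : ∃ a, a < t₀ ∧ D a = 0 := by
    set t₁ := min t₀ ((m - c - (2 * r - 1) * t₀) / (2 - 2 * r)) with ht₁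
    have h1 : 0 ≤ D t₁ := by
      have h2 := (le_abs_self (m - t₁)).trans (hmean t₁)
      have h3 : t₁ ≤ (m - c - (2 * r - 1) * t₀) / (2 - 2 * r) := min_le_right _ _
      rw [le_div_iff₀ (by linarith)] at h3
      simp only [hD]
      nlinarith
    obtain ⟨a, ha, hDa⟩ := intermediate_value_Icc' (min_le_left t₀ _) hDc.continuousOn
      (show (0 : ℝ) ∈ Set.Icc (D t₀) (D t₁) from ⟨hD0.le, h1⟩)
    refine ⟨a, lt_of_le_of_ne ha.2 fun h => ?_, hDa⟩
    rw [h] at hDa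
    linarith
  have hpa : pot η a = c + (2 * r - 1) * (t₀ - a) := by simp only [hD] at hDa; linarith
  have hpb : pot η b = c + (2 * r - 1) * (t₀ - b) := by simp only [hD] at hDb; linarith
  have hab : b - a ≠ 0 := by linarith
  have hchord : ∀ t, ((b - t) * pot η a + (t - a) * pot η b) / (b - a)
      = c + (2 * r - 1) * (t₀ - t) := by
    intro t
    rw [hpa, hpb]
    field_simp
    ring
  refine ⟨a, b, ha, hb, fun t => (hchord t).trans_le (hsupp t), ?_⟩
  rw [hchord, sub_self, mul_zero, add_zero]

open Classical in
/-- The kernel leaving points outside `(a, b)` fixed and sweeping a point of `(a, b)` to the end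
points `a` and `b`, with the weights which preserve the barycentre. -/
noncomputable def sweep (a b : ℝ) : Kernel ℝ ℝ :=
  Kernel.piecewise (s := Set.Ioo a b) measurableSet_Ioo
    { toFun := fun y => ENNReal.ofReal ((b - y) / (b - a)) • Measure.dirac a +
        ENNReal.ofReal ((y - a) / (b - a)) • Measure.dirac b
      measurable' := by
        refine Measure.measurable_of_measurable_coe _ fun s hs => ?_
        simp only [Measure.add_apply, Measure.smul_apply, smul_eq_mul]
        fun_prop }
    Kernel.id

lemma sweep_of_mem {a b y : ℝ} (hy : y ∈ Set.Ioo a b) : sweep a b y =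
    ENNReal.ofReal ((b - y) / (b - a)) • Measure.dirac a +
      ENNReal.ofReal ((y - a) / (b - a)) • Measure.dirac b := by
  rw [sweep, Kernel.piecewise_apply, if_pos hy]; rfl

lemma sweep_of_notMem {a b y : ℝ} (hy : y ∉ Set.Ioo a b) : sweep a b y = Measure.dirac y := by
  rw [sweep, Kernel.piecewise_apply, if_neg hy, Kernel.id_apply]

lemma isMarkovKernel_sweep (a b : ℝ) : IsMarkovKernel (sweep a b) := by
  refine ⟨fun y => ?_⟩
  by_cases hy : y ∈ Set.Ioo a b
  · have hab : 0 < b - a := by linarith [hy.1, hy.2]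
    rw [sweep_of_mem hy]
    constructor
    simp only [Measure.add_apply, Measure.smul_apply, measure_univ, smul_eq_mul, mul_one]
    rw [← ENNReal.ofReal_add (div_nonneg (by linarith [hy.2]) hab.le)
      (div_nonneg (by linarith [hy.1]) hab.le), ← add_div, sub_add_sub_cancel, div_self hab.ne',
      ENNReal.ofReal_one]
  · rw [sweep_of_notMem hy]
    infer_instance

lemma integrable_dirac_real (f : ℝ → ℝ) (x : ℝ) : Integrable f (Measure.dirac x) :=
  integrable_dirac (by simp)

lemma integrable_sweep (a b y : ℝ) (f : ℝ → ℝ) : Integrable f (sweep a b y) := by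
  by_cases hy : y ∈ Set.Ioo a b
  · rw [sweep_of_mem hy]
    exact ((integrable_dirac_real f a).smul_measure ENNReal.ofReal_ne_top).add_measure
      ((integrable_dirac_real f b).smul_measure ENNReal.ofReal_ne_top)
  · rw [sweep_of_notMem hy]
    exact integrable_dirac_real f y

lemma integral_sweep_of_mem {a b y : ℝ} (hy : y ∈ Set.Ioo a b) (f : ℝ → ℝ) :
    ∫ z, f z ∂(sweep a b y) = ((b - y) * f a + (y - a) * f b) / (b - a) := by
  have hab : 0 < b - a := by linarith [hy.1, hy.2]
  rw [sweep_of_mem hy, integral_add_measure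
    ((integrable_dirac_real f a).smul_measure ENNReal.ofReal_ne_top)
    ((integrable_dirac_real f b).smul_measure ENNReal.ofReal_ne_top), integral_smul_measure,
    integral_smul_measure, integral_dirac, integral_dirac,
    ENNReal.toReal_ofReal (div_nonneg (by linarith [hy.2]) hab.le),
    ENNReal.toReal_ofReal (div_nonneg (by linarith [hy.1]) hab.le)]
  simp only [smul_eq_mul]
  ring

lemma integral_sweep_of_notMem {a b y : ℝ} (hy : y ∉ Set.Ioo a b) (f : ℝ → ℝ) :
    ∫ z, f z ∂(sweep a b y) = f y := by
  rw [sweep_of_notMem hy, integral_dirac]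

lemma integral_id_sweep (a b y : ℝ) : ∫ z, z ∂(sweep a b y) = y := by
  by_cases hy : y ∈ Set.Ioo a b
  · have hab : b - a ≠ 0 := by linarith [hy.1, hy.2]
    rw [integral_sweep_of_mem hy (fun z => z)]
    field_simp
    ring
  · exact integral_sweep_of_notMem hy (fun z => z)

lemma integrable_comp_sweep {η : Measure ℝ} [IsProbabilityMeasure η]
    (hη : Integrable (fun y : ℝ => |y|) η) (a b : ℝ) :
    Integrable (fun y : ℝ => |y|) (sweep a b ∘ₘ η) := by
  refine (Measure.integrable_comp_iff (by fun_prop)).2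
    ⟨Eventually.of_forall fun y => integrable_sweep a b y _, ?_⟩
  refine (hη.add (integrable_const (|a| + |b|))).mono'
    (StronglyMeasurable.integral_kernel (by fun_prop)).aestronglyMeasurable
    (Eventually.of_forall fun y => ?_)
  rw [Real.norm_of_nonneg (integral_nonneg fun z => norm_nonneg _)]
  simp only [Real.norm_eq_abs, abs_abs, Pi.add_apply]
  by_cases hy : y ∈ Set.Ioo a b
  · have hab : 0 < b - a := by linarith [hy.1, hy.2]
    rw [integral_sweep_of_mem hy, div_le_iff₀ hab]
    have h1 : 0 < b - y := by linarith [hy.2]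
    have h2 : 0 < y - a := by linarith [hy.1]
    nlinarith [abs_nonneg y, abs_nonneg a, abs_nonneg b, mul_nonneg h1.le (abs_nonneg b),
      mul_nonneg h2.le (abs_nonneg a), mul_nonneg hab.le (abs_nonneg y)]
  · rw [integral_sweep_of_notMem hy]
    linarith [abs_nonneg a, abs_nonneg b]

/-- For `t ∈ [a, b]` and `y ∉ (a, b)` the function `t ↦ |y - t|` is affine on `[a, b]`. -/
lemma abs_sub_affine {a b t y : ℝ} (hab : a < b) (ht : t ∈ Set.Icc a b) (hy : y ∉ Set.Ioo a b) :
    |y - t| = ((b - t) * |y - a| + (t - a) * |y - b|) / (b - a) := by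
  have hab' : b - a ≠ 0 := by linarith
  obtain ⟨h1, h2⟩ := ht
  rcases le_or_gt y a with h | h
  · rw [abs_of_nonpos (by linarith), abs_of_nonpos (by linarith), abs_of_nonpos (by linarith)]
    field_simp
    ring
  · have h3 : b ≤ y := by
      by_contra h'
      exact hy ⟨h, not_le.1 h'⟩
    rw [abs_of_nonneg (by linarith), abs_of_nonneg (by linarith), abs_of_nonneg (by linarith)]
    field_simp
    ring

lemma pot_chord {η : Measure ℝ} [IsProbabilityMeasure η] (hη : Integrable (fun y : ℝ => |y|) η)
    (a b t : ℝ) : ∫ y, ((b - t) * |y - a| + (t - a) * |y - b|) / (b - a) ∂η =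
      ((b - t) * pot η a + (t - a) * pot η b) / (b - a) := by
  rw [integral_div, integral_add ((integrable_abs_sub hη a).const_mul _)
    ((integrable_abs_sub hη b).const_mul _), integral_const_mul, integral_const_mul]
  rfl

/-- Sweeping `(a, b)` to its end points replaces the potential by its chord on `[a, b]` and leaves
it unchanged elsewhere. -/
lemma pot_sweep {η : Measure ℝ} [IsProbabilityMeasure η] (hη : Integrable (fun y : ℝ => |y|) η)
    {a b : ℝ} (hab : a < b) (t : ℝ) : pot (sweep a b ∘ₘ η) t =
      if t ∈ Set.Icc a b then ((b - t) * pot η a + (t - a) * pot η b) / (b - a) else pot η t := by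
  have := isMarkovKernel_sweep a b
  have hab' : b - a ≠ 0 := by linarith
  rw [pot, integral_comp_measure (integrable_abs_sub (integrable_comp_sweep hη a b) t)]
  split_ifs with ht
  · rw [← pot_chord hη]
    congr 1
    ext y
    by_cases hy : y ∈ Set.Ioo a b
    · rw [integral_sweep_of_mem hy (fun z => |z - t|), abs_of_nonpos (by linarith [ht.1] : a - t ≤ 0),
        abs_of_nonneg (by linarith [ht.2] : 0 ≤ b - t), abs_of_pos (by linarith [hy.1] : 0 < y - a),
        abs_of_neg (by linarith [hy.2] : y - b < 0)]
      ring
    · rw [integral_sweep_of_notMem hy (fun z => |z - t|), abs_sub_affine hab ht hy]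
  · rw [pot]
    congr 1
    ext y
    by_cases hy : y ∈ Set.Ioo a b
    · rw [integral_sweep_of_mem hy (fun z => |z - t|), div_eq_iff hab']
      rcases lt_or_ge t a with h | h
      · rw [abs_of_pos (by linarith : 0 < a - t), abs_of_pos (by linarith : 0 < b - t),
          abs_of_pos (by linarith [hy.1] : 0 < y - t)]
        ring
      · have h' : b < t := by
          by_contra h'
          exact ht ⟨h, not_lt.1 h'⟩
        rw [abs_of_neg (by linarith : a - t < 0), abs_of_neg (by linarith : b - t < 0),
          abs_of_neg (by linarith [hy.2] : y - t < 0)]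
        ring
    · rw [integral_sweep_of_notMem hy (fun z => |z - t|)]

/-- A strictly convex function of linear growth, used to measure the spread of a measure. -/
noncomputable def hyp (y : ℝ) : ℝ := √(1 + y ^ 2)

lemma continuous_hyp : Continuous hyp := by unfold hyp; fun_prop

lemma hyp_pos (y : ℝ) : 0 < hyp y := Real.sqrt_pos.2 (by positivity)

lemma hyp_sq (y : ℝ) : hyp y ^ 2 = 1 + y ^ 2 := Real.sq_sqrt (by positivity)

lemma hyp_growth (y : ℝ) : |hyp y| ≤ 1 * (1 + |y|) := by
  rw [abs_of_pos (hyp_pos y), one_mul]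
  refine Real.sqrt_le_iff.2 ⟨by positivity, ?_⟩
  nlinarith [abs_nonneg y, sq_abs y]

lemma hyp_tangent {y z : ℝ} (h : z ≠ y) : 1 + y * z < hyp y * hyp z := by
  have h1 : (1 + y * z) ^ 2 < (hyp y * hyp z) ^ 2 := by
    rw [mul_pow, hyp_sq, hyp_sq]
    have : 0 < (z - y) ^ 2 := by
      have := sub_ne_zero.2 h
      positivity
    nlinarith
  exact lt_of_pow_lt_pow_left₀ 2 (mul_pos (hyp_pos y) (hyp_pos z)).le h1

lemma hyp_lt_sweep {a b y : ℝ} (hy : y ∈ Set.Ioo a b) : hyp y < ∫ z, hyp z ∂(sweep a b y) := by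
  have hab : 0 < b - a := by linarith [hy.1, hy.2]
  rw [integral_sweep_of_mem hy, lt_div_iff₀ hab]
  have h1 := mul_lt_mul_of_pos_left (hyp_tangent (y := y) (z := a) hy.1.ne)
    (by linarith [hy.2] : 0 < b - y)
  have h2 := mul_lt_mul_of_pos_left (hyp_tangent (y := y) (z := b) hy.2.ne')
    (by linarith [hy.1] : 0 < y - a)
  have h3 := hyp_sq y
  have h4 : hyp y * (hyp y * (b - a)) < hyp y * ((b - y) * hyp a + (y - a) * hyp b) := by
    have e : hyp y * (hyp y * (b - a)) = (1 + y ^ 2) * (b - a) := by rw [← h3]; ring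
    rw [e]
    linarith
  exact lt_of_mul_lt_mul_left h4 (hyp_pos y).le

lemma Adm.mean {μ ν : Measure ℝ} [IsProbabilityMeasure μ] {κ : Kernel ℝ ℝ} (h : Adm μ ν κ) :
    ∫ y, y ∂(κ ∘ₘ μ) = ∫ x, x ∂μ := by
  have := h.markov
  rw [integral_comp_measure (f := fun y => y) (integrable_id_of_abs h.int)]
  exact integral_congr_ae h.bary

/-- Unless `κ` transports `μ` to `ν`, an admissible kernel can be composed with a sweeping kernel so
as to strictly increase the spread. -/
lemma Adm.exists_spread_lt {μ ν : Measure ℝ} [IsProbabilityMeasure μ] [IsProbabilityMeasure ν]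
    (hν : Integrable (fun y : ℝ => |y|) ν) (hmean : ∫ x, x ∂μ = ∫ y, y ∂ν) {κ : Kernel ℝ ℝ}
    (h : Adm μ ν κ) (hne : κ ∘ₘ μ ≠ ν) :
    ∃ κ', Adm μ ν κ' ∧ ∫ y, hyp y ∂(κ ∘ₘ μ) < ∫ y, hyp y ∂(κ' ∘ₘ μ) := by
  have hM := h.markov
  set η := κ ∘ₘ μ with hη
  obtain ⟨t₀, ht₀⟩ : ∃ t₀, pot η t₀ < pot ν t₀ := by
    by_contra! hcon
    exact hne (eq_of_pot_eq h.int hν fun t => le_antisymm (h.pot_le t) (hcon t))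
  obtain ⟨a, b, ha, hb, hchord, heq⟩ := exists_chord h.int hν (h.mean.trans hmean) ht₀
  have hab := ha.trans hb
  have hS := isMarkovKernel_sweep a b
  have hcomp : (sweep a b ∘ₖ κ) ∘ₘ μ = sweep a b ∘ₘ η := Measure.comp_assoc.symm
  have hInt : Integrable (fun y : ℝ => |y|) (sweep a b ∘ₘ η) := integrable_comp_sweep h.int a b
  refine ⟨sweep a b ∘ₖ κ, ⟨inferInstance, ?_, ?_, fun t => ?_⟩, ?_⟩
  · rwa [hcomp]
  · filter_upwards [h.bary, ae_integrable_of_comp (hcomp ▸ hInt)] with x hx hi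
    rw [Kernel.integral_comp (f := fun z => z) (integrable_id_of_abs hi)]
    simp only [integral_id_sweep]
    exact hx
  · rw [hcomp, pot_sweep h.int hab]
    split_ifs
    · exact hchord t
    · exact h.pot_le t
  · rw [hcomp]
    have hi : Integrable hyp (sweep a b ∘ₘ η) :=
      integrable_of_linear_growth hInt continuous_hyp hyp_growth
    have hle : ∀ y, hyp y ≤ ∫ z, hyp z ∂(sweep a b y) := by
      intro y
      by_cases hy : y ∈ Set.Ioo a b
      · exact (hyp_lt_sweep hy).le
      · rw [integral_sweep_of_notMem hy]
    rw [integral_comp_measure hi]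
    have hi₁ : Integrable hyp η := integrable_of_linear_growth h.int continuous_hyp hyp_growth
    have hi₂ := integrable_integral_comp continuous_hyp hi
    refine lt_of_le_of_ne (integral_mono hi₁ hi₂ hle) fun h0 => ?_
    have h0' := (integral_eq_iff_of_ae_le hi₁ hi₂ (Eventually.of_forall hle)).1 h0
    -- otherwise `η` does not charge `(a, b)`, so its potential is affine on `[a, b]`
    have h1 : ∀ᵐ y ∂η, y ∉ Set.Ioo a b := by
      filter_upwards [h0'] with y hy hmem
      exact (hyp_lt_sweep hmem).ne hy
    have h2 : pot η t₀ = pot ν t₀ := by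
      rw [← heq, ← pot_chord h.int, pot]
      refine integral_congr_ae ?_
      filter_upwards [h1] with y hy
      exact abs_sub_affine hab ⟨ha.le, hb.le⟩ hy
    linarith

/-- Strassen's theorem: measures in convex order are joined by a martingale kernel. It is obtained
by maximising the spread among admissible kernels. -/
lemma exists_adm_comp_eq {μ ν : Measure ℝ} [IsProbabilityMeasure μ] [IsProbabilityMeasure ν]
    (hμ : Integrable (fun y : ℝ => |y|) μ) (hν : Integrable (fun y : ℝ => |y|) ν)
    (hmean : ∫ x, x ∂μ = ∫ y, y ∂ν) (hpot : ∀ t, pot μ t ≤ pot ν t) :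
    ∃ κ, Adm μ ν κ ∧ κ ∘ₘ μ = ν := by
  have hid : Adm μ ν Kernel.id := by
    refine ⟨inferInstance, ?_, Eventually.of_forall fun x => ?_, fun t => ?_⟩
    · rwa [Measure.id_comp]
    · rw [Kernel.id_apply, integral_dirac]
    · rw [Measure.id_comp]; exact hpot t
  set Φ : Kernel ℝ ℝ → ℝ := fun κ => ∫ y, hyp y ∂(κ ∘ₘ μ) with hΦ
  have hInt : ∀ κ, Adm μ ν κ → Integrable hyp (κ ∘ₘ μ) := fun κ h => by
    have := h.markov
    exact integrable_of_linear_growth h.int continuous_hyp hyp_growth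
  have hbdd : BddAbove (Φ '' {κ | Adm μ ν κ}) := by
    refine ⟨1 + pot ν 0, ?_⟩
    rintro _ ⟨κ, hκ, rfl⟩
    have := Adm.markov hκ
    have h1 : Φ κ ≤ ∫ y, (1 + |y|) ∂(κ ∘ₘ μ) :=
      integral_mono (hInt κ hκ) ((integrable_const _).add (Adm.int hκ)) fun y => by
        have := hyp_growth y
        rwa [abs_of_pos (hyp_pos y), one_mul] at this
    rw [integral_add (integrable_const _) (Adm.int hκ), ← pot_zero] at h1
    have h2 := Adm.pot_le hκ 0
    simp at h1
    linarith
  set s := sSup (Φ '' {κ | Adm μ ν κ}) with hs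
  have hle : ∀ κ, Adm μ ν κ → Φ κ ≤ s := fun κ hκ => le_csSup hbdd ⟨κ, hκ, rfl⟩
  set A : ℕ → Set (Kernel ℝ ℝ) := fun n => {κ | Adm μ ν κ ∧ s - 1 / ((n : ℝ) + 1) ≤ Φ κ} with hAdef
  have hne : ∀ n, (A n).Nonempty := by
    intro n
    obtain ⟨_, ⟨κ, hκ, rfl⟩, hlt⟩ := exists_lt_of_lt_csSup (Set.Nonempty.image Φ ⟨_, hid⟩)
      (sub_lt_self s (Nat.one_div_pos_of_nat (α := ℝ) (n := n)))
    exact ⟨κ, hκ, hlt.le⟩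
  have hanti : Antitone A := by
    intro n k hnk κ hκ
    have := Nat.one_div_le_one_div (α := ℝ) hnk
    exact ⟨hκ.1, by linarith [hκ.2]⟩
  have hmid : ∀ n, ∀ κ ∈ A n, ∀ κ' ∈ A n, mid κ κ' ∈ A n := by
    intro n κ hκ κ' hκ'
    refine ⟨hκ.1.mid hκ'.1, ?_⟩
    simp only [hΦ]
    rw [mid_comp, integral_half (hInt κ hκ.1) (hInt κ' hκ'.1)]
    have h1 := hκ.2
    have h2 := hκ'.2
    simp only [hΦ] at h1 h2
    linarith
  obtain ⟨u, κ, huA, hκ, hconv⟩ := exists_conv_of_midpoint (μ := μ) hν hne hanti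
    (fun n κ h => h.1) hmid
  have := hκ.markov
  have := fun n => (huA n).1.markov
  have hlim : Tendsto (fun n => Φ (u n)) atTop (𝓝 (Φ κ)) :=
    hconv.weak.tendsto_integral (fun n => (huA n).1.int) hκ.int hconv.moment continuous_hyp
      hyp_growth
  have hge : s ≤ Φ κ := by
    refine le_of_tendsto_of_tendsto' ?_ hlim fun n => (huA n).2
    simpa using (tendsto_one_div_add_atTop_nhds_zero_nat (𝕜 := ℝ)).const_sub s
  refine ⟨κ, hκ, ?_⟩
  by_contra hne
  obtain ⟨κ', hκ', hlt⟩ := hκ.exists_spread_lt hν hmean hne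
  exact absurd (hle κ' hκ') (not_le.2 (hge.trans_lt hlt))

/-! ### Convexity and lower semicontinuity of the transport cost -/

lemma erealToENNReal_eq : erealToENNReal = EReal.toENNReal := rfl

/-- The nonnegative integrand `C(x, κ_x) + K (|x| + ∫ |y| dκ_x)` of the transport problem. -/
noncomputable def shiftedCost (C : ℝ × Measure ℝ → EReal) (K : ℝ) (κ : Kernel ℝ ℝ) (x : ℝ) :
    ENNReal :=
  erealToENNReal (C (x, κ x) + ((K * (|x| + ∫ y, |y| ∂(κ x)) : ℝ) : EReal))

lemma measurable_shiftedCost {C : ℝ × Measure ℝ → EReal} (hC : Measurable C) (K : ℝ)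
    (κ : Kernel ℝ ℝ) : Measurable (shiftedCost C K κ) := by
  have h1 : Measurable fun x : ℝ => C (x, κ x) := hC.comp (measurable_id.prodMk κ.measurable)
  have h2 : Measurable fun x : ℝ => ∫ y, |y| ∂(κ x) :=
    (StronglyMeasurable.integral_kernel (f := fun y : ℝ => |y|)
      (by fun_prop : Continuous fun y : ℝ => |y|).stronglyMeasurable).measurable
  have h3 : Measurable fun x : ℝ => K * (|x| + ∫ y, |y| ∂(κ x)) := by fun_prop
  exact (h1.add h3.coe_real_ereal).ereal_toENNReal

lemma erealToENNReal_midpoint {a b c : EReal} {s t : ℝ} (ha : ((-s : ℝ) : EReal) ≤ a)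
    (hb : ((-t : ℝ) : EReal) ≤ b)
    (h : c ≤ ((1 / 2 : ℝ) : EReal) * a + ((1 / 2 : ℝ) : EReal) * b) :
    erealToENNReal (c + (((s + t) / 2 : ℝ) : EReal)) ≤
      ENNReal.ofReal (1 / 2) * erealToENNReal (a + (s : EReal)) +
        ENNReal.ofReal (1 / 2) * erealToENNReal (b + (t : EReal)) := by
  rw [erealToENNReal_eq]
  induction a with
  | bot => exact absurd ha (not_le.2 (EReal.bot_lt_coe _))
  | top => simp
  | coe a =>
    induction b with
    | bot => exact absurd hb (not_le.2 (EReal.bot_lt_coe _))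
    | top => simp
    | coe b =>
      have h3 : c + (((s + t) / 2 : ℝ) : EReal) ≤
          ((1 / 2 * (a + s) + 1 / 2 * (b + t) : ℝ) : EReal) := by
        refine (add_le_add_left h _).trans (le_of_eq ?_)
        norm_cast
        ring
      refine (EReal.toENNReal_le_toENNReal h3).trans ?_
      rw [EReal.coe_le_coe_iff] at ha hb
      rw [← EReal.coe_add, ← EReal.coe_add, EReal.real_coe_toENNReal, EReal.real_coe_toENNReal,
        EReal.real_coe_toENNReal, ← ENNReal.ofReal_mul (by norm_num),
        ← ENNReal.ofReal_mul (by norm_num)]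
      exact ENNReal.ofReal_add_le

/-- The lower bound on `C` makes the truncation in `erealToENNReal` harmless, so that the shifted
cost inherits the convexity of `C`. -/
lemma lintegral_shiftedCost_mid_le {μ : Measure ℝ} {C : ℝ × Measure ℝ → EReal}
    (hCmeas : Measurable C) {K : ℝ}
    (hbd : ∀ (x : ℝ) (p : Measure ℝ), IsProbabilityMeasure p →
      Integrable (fun y : ℝ => |y|) p →
      ((-(K * (|x| + ∫ y, |y| ∂p)) : ℝ) : EReal) ≤ C (x, p))
    (hconvex : ∀ (x : ℝ) (p q : Measure ℝ), IsProbabilityMeasure p → IsProbabilityMeasure q →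
      Integrable (fun y : ℝ => |y|) p → Integrable (fun y : ℝ => |y|) q →
      ∀ a b : ℝ, 0 ≤ a → 0 ≤ b → a + b = 1 →
      C (x, ENNReal.ofReal a • p + ENNReal.ofReal b • q)
        ≤ (a : EReal) * C (x, p) + (b : EReal) * C (x, q))
    {κ κ' : Kernel ℝ ℝ} [IsMarkovKernel κ] [IsMarkovKernel κ']
    (hi : Integrable (fun y : ℝ => |y|) (κ ∘ₘ μ)) (hi' : Integrable (fun y : ℝ => |y|) (κ' ∘ₘ μ))
    {c : ENNReal} (hc : ∫⁻ x, shiftedCost C K κ x ∂μ ≤ c)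
    (hc' : ∫⁻ x, shiftedCost C K κ' x ∂μ ≤ c) :
    ∫⁻ x, shiftedCost C K (mid κ κ') x ∂μ ≤ c := by
  have hm := measurable_shiftedCost hCmeas K κ
  have hm' := measurable_shiftedCost hCmeas K κ'
  calc ∫⁻ x, shiftedCost C K (mid κ κ') x ∂μ
      ≤ ∫⁻ x, (ENNReal.ofReal (1 / 2) * shiftedCost C K κ x +
          ENNReal.ofReal (1 / 2) * shiftedCost C K κ' x) ∂μ := by
        refine lintegral_mono_ae ?_
        filter_upwards [ae_integrable_of_comp hi, ae_integrable_of_comp hi'] with x hx hx'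
        have h := erealToENNReal_midpoint (hbd x (κ x) inferInstance hx)
          (hbd x (κ' x) inferInstance hx') (hconvex x (κ x) (κ' x) inferInstance inferInstance
            hx hx' (1 / 2) (1 / 2) (by norm_num) (by norm_num) (by norm_num))
        refine le_trans (le_of_eq ?_) h
        rw [shiftedCost, mid_apply, integral_half hx hx']
        congr 3
        ring
    _ = ENNReal.ofReal (1 / 2) * ∫⁻ x, shiftedCost C K κ x ∂μ +
          ENNReal.ofReal (1 / 2) * ∫⁻ x, shiftedCost C K κ' x ∂μ := by
        rw [lintegral_add_left (hm.const_mul _), lintegral_const_mul _ hm,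
          lintegral_const_mul _ hm']
    _ ≤ ENNReal.ofReal (1 / 2) * c + ENNReal.ofReal (1 / 2) * c := by gcongr
    _ = c := by
        rw [← add_mul, ← ENNReal.ofReal_add (by norm_num) (by norm_num)]
        norm_num

/-- Lower semicontinuity of the transport cost: since kernels converge pointwise almost everywhere,
this is Fatou's lemma, with no need for a Jensen inequality. -/
lemma KConv.lintegral_shiftedCost_le {μ : Measure ℝ} {C : ℝ × Measure ℝ → EReal}
    (hCmeas : Measurable C) {K : ℝ}
    (hlsc : ∀ (x : ℝ) (p : ℕ → Measure ℝ) (p' : Measure ℝ),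
      (∀ k, IsProbabilityMeasure (p k)) → IsProbabilityMeasure p' →
      (∀ k, Integrable (fun y : ℝ => |y|) (p k)) → Integrable (fun y : ℝ => |y|) p' →
      (∀ ψ : BoundedContinuousFunction ℝ ℝ,
        Tendsto (fun k => ∫ y, ψ y ∂(p k)) atTop (𝓝 (∫ y, ψ y ∂p'))) →
      Tendsto (fun k => ∫ y, |y| ∂(p k)) atTop (𝓝 (∫ y, |y| ∂p')) →
      C (x, p') ≤ atTop.liminf (fun k => C (x, p k)))
    {u : ℕ → Kernel ℝ ℝ} {κ : Kernel ℝ ℝ} [∀ n, IsMarkovKernel (u n)] [IsMarkovKernel κ]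
    (h : KConv μ u κ) :
    ∫⁻ x, shiftedCost C K κ x ∂μ ≤ atTop.liminf fun n => ∫⁻ x, shiftedCost C K (u n) x ∂μ := by
  refine le_trans (lintegral_mono_ae ?_)
    (lintegral_liminf_le fun n => measurable_shiftedCost hCmeas K (u n))
  filter_upwards [h.ae] with x hx
  obtain ⟨hi, hi', hw, hm⟩ := hx
  have h1 := hlsc x (fun n => u n x) (κ x) (fun n => inferInstance) inferInstance hi hi' hw hm
  have h2 : Tendsto (fun n => ((K * (|x| + ∫ y, |y| ∂(u n x)) : ℝ) : EReal)) atTop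
      (𝓝 ((K * (|x| + ∫ y, |y| ∂(κ x)) : ℝ) : EReal)) :=
    (continuous_coe_real_ereal.tendsto _).comp ((hm.const_add _).const_mul _)
  have h3 : C (x, κ x) + ((K * (|x| + ∫ y, |y| ∂(κ x)) : ℝ) : EReal) ≤
      atTop.liminf fun n => C (x, u n x) + ((K * (|x| + ∫ y, |y| ∂(u n x)) : ℝ) : EReal) := by
    refine le_trans ?_ EReal.le_liminf_add
    rw [h2.liminf_eq]
    exact add_le_add_left h1 _
  have hmono : Monotone EReal.toENNReal := fun _ _ h => EReal.toENNReal_le_toENNReal h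
  simp only [shiftedCost, erealToENNReal_eq]
  refine (hmono h3).trans (le_of_eq ?_)
  exact hmono.map_liminf_of_continuousAt _ EReal.continuous_toENNReal.continuousAt

lemma comp_eq_of_compProd {μ ν : Measure ℝ} [IsProbabilityMeasure μ] {π : Measure (ℝ × ℝ)}
    {κ : Kernel ℝ ℝ} [IsMarkovKernel κ] (h : μ ⊗ₘ κ = π) (hν : π.map Prod.snd = ν) :
    κ ∘ₘ μ = ν := by
  rw [← Measure.snd_compProd, h]
  exact hν

/-- Existence of a minimiser for the weak martingale optimal transport problem: for `μ ≤_c ν`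
in `P^1(ℝ)` and `C : ℝ × P^1(ℝ) → ℝ ∪ {+∞}` measurable, bounded below by
`-K(|x| + ∫|y| dp)`, convex and (sequentially, for the `P^1`-topology) lower semicontinuous
in the second argument, the infimum of `π ↦ ∫ C(x, π_x) dμ(x)` over martingale couplings
`π ∈ Π_M(μ,ν)` (presented via a disintegrating Markov kernel `κ` with `μ ⊗ₘ κ = π` and
barycenter `x` at `μ`-a.e. `x`) is attained. The possibly infinite cost is expressed via
the nonnegative integrand obtained by adding `K(|x| + ∫|y| dκ_x)`, whose `μ`-integral is the
same finite constant for all elements of `Π_M(μ,ν)`. -/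
theorem stmt9 (μ ν : Measure ℝ) [IsProbabilityMeasure μ] [IsProbabilityMeasure ν]
    (hμ1 : Integrable (fun x : ℝ => |x|) μ) (hν1 : Integrable (fun y : ℝ => |y|) ν)
    (hconvorder : ∀ φ : ℝ → ℝ, ConvexOn ℝ Set.univ φ → Integrable φ μ → Integrable φ ν →
      ∫ x, φ x ∂μ ≤ ∫ y, φ y ∂ν)
    (C : ℝ × Measure ℝ → EReal) (hCmeas : Measurable C)
    (K : ℝ) (hK : 0 ≤ K)
    (hbd : ∀ (x : ℝ) (p : Measure ℝ), IsProbabilityMeasure p →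
      Integrable (fun y : ℝ => |y|) p →
      ((-(K * (|x| + ∫ y, |y| ∂p)) : ℝ) : EReal) ≤ C (x, p))
    (hconvex : ∀ (x : ℝ) (p q : Measure ℝ), IsProbabilityMeasure p → IsProbabilityMeasure q →
      Integrable (fun y : ℝ => |y|) p → Integrable (fun y : ℝ => |y|) q →
      ∀ a b : ℝ, 0 ≤ a → 0 ≤ b → a + b = 1 →
      C (x, ENNReal.ofReal a • p + ENNReal.ofReal b • q)
        ≤ (a : EReal) * C (x, p) + (b : EReal) * C (x, q))
    (hlsc : ∀ (x : ℝ) (p : ℕ → Measure ℝ) (p' : Measure ℝ),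
      (∀ k, IsProbabilityMeasure (p k)) → IsProbabilityMeasure p' →
      (∀ k, Integrable (fun y : ℝ => |y|) (p k)) → Integrable (fun y : ℝ => |y|) p' →
      (∀ ψ : BoundedContinuousFunction ℝ ℝ,
        Tendsto (fun k => ∫ y, ψ y ∂(p k)) atTop (𝓝 (∫ y, ψ y ∂p'))) →
      Tendsto (fun k => ∫ y, |y| ∂(p k)) atTop (𝓝 (∫ y, |y| ∂p')) →
      C (x, p') ≤ atTop.liminf (fun k => C (x, p k))) :
    ∃ (π : Measure (ℝ × ℝ)) (κ : Kernel ℝ ℝ),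
      IsProbabilityMeasure π ∧ IsMarkovKernel κ ∧
      π.map Prod.fst = μ ∧ π.map Prod.snd = ν ∧ μ ⊗ₘ κ = π ∧
      (∀ᵐ x ∂μ, ∫ y, y ∂(κ x) = x) ∧
      ∀ (π' : Measure (ℝ × ℝ)) (κ' : Kernel ℝ ℝ),
        IsProbabilityMeasure π' → IsMarkovKernel κ' →
        π'.map Prod.fst = μ → π'.map Prod.snd = ν → μ ⊗ₘ κ' = π' →
        (∀ᵐ x ∂μ, ∫ y, y ∂(κ' x) = x) →
        ∫⁻ x, erealToENNReal (C (x, κ x) + ((K * (|x| + ∫ y, |y| ∂(κ x)) : ℝ) : EReal)) ∂μ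
          ≤ ∫⁻ x, erealToENNReal
              (C (x, κ' x) + ((K * (|x| + ∫ y, |y| ∂(κ' x)) : ℝ) : EReal)) ∂μ := by
  have hidμ := integrable_id_of_abs hμ1
  have hidν := integrable_id_of_abs hν1
  have hmean : ∫ x, x ∂μ = ∫ y, y ∂ν := by
    have h1 := hconvorder (fun y => y) (convexOn_id convex_univ) hidμ hidν
    have h2 := hconvorder (fun y => -y) (concaveOn_id convex_univ).neg hidμ.neg hidν.neg
    rw [integral_neg, integral_neg] at h2
    linarith
  have hpot : ∀ t, pot μ t ≤ pot ν t := fun t => by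
    refine hconvorder _ ?_ (integrable_abs_sub hμ1 t) (integrable_abs_sub hν1 t)
    exact convexOn_univ_dist t
  obtain ⟨κ₀, hκ₀, hκ₀ν⟩ := exists_adm_comp_eq hμ1 hν1 hmean hpot
  set S : Set (Kernel ℝ ℝ) := {κ | Adm μ ν κ ∧ κ ∘ₘ μ = ν} with hS
  set J : Kernel ℝ ℝ → ENNReal := fun κ => ∫⁻ x, shiftedCost C K κ x ∂μ with hJ
  set I : ENNReal := sInf (J '' S) with hI
  set A : ℕ → Set (Kernel ℝ ℝ) := fun n => {κ | κ ∈ S ∧ J κ ≤ I + ((n : ENNReal) + 1)⁻¹} with hA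
  have hne : ∀ n, (A n).Nonempty := by
    intro n
    -- if `I = ∞` every martingale kernel is a minimiser, and the argument below still applies
    by_cases hI' : I = ⊤
    · exact ⟨κ₀, ⟨hκ₀, hκ₀ν⟩, by simp [hI']⟩
    · have h0 : ((n : ENNReal) + 1)⁻¹ ≠ 0 :=
        ENNReal.inv_ne_zero.2 (ENNReal.add_ne_top.2 ⟨ENNReal.natCast_ne_top n, ENNReal.one_ne_top⟩)
      obtain ⟨_, ⟨κ, hκ, rfl⟩, hlt⟩ := sInf_lt_iff.1 (ENNReal.lt_add_right hI' h0)
      exact ⟨κ, hκ, hlt.le⟩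
  have hanti : Antitone A := by
    intro n k hnk κ hκ
    refine ⟨hκ.1, hκ.2.trans ?_⟩
    gcongr
  have hmid : ∀ n, ∀ κ ∈ A n, ∀ κ' ∈ A n, mid κ κ' ∈ A n := by
    intro n κ hκ κ' hκ'
    have := hκ.1.1.markov
    have := hκ'.1.1.markov
    refine ⟨⟨hκ.1.1.mid hκ'.1.1, ?_⟩, lintegral_shiftedCost_mid_le hCmeas hbd hconvex
      hκ.1.1.int hκ'.1.1.int hκ.2 hκ'.2⟩
    rw [mid_comp, hκ.1.2, hκ'.1.2, ← add_smul, ← ENNReal.ofReal_add (by norm_num) (by norm_num)]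
    norm_num
  obtain ⟨u, κ, huA, hκ, hconv⟩ := exists_conv_of_midpoint hν1 hne hanti
    (fun n κ h => h.1.1) hmid
  have := hκ.markov
  have := fun n => (huA n).1.1.markov
  -- the second marginals are all equal to `ν`, hence so is their limit
  have hκν : κ ∘ₘ μ = ν := by
    refine eq_of_pot_eq hκ.int hν1 fun t => ?_
    have h := hconv.weak.tendsto_integral (fun n => (huA n).1.1.int) hκ.int hconv.moment
      (by fun_prop : Continuous fun y : ℝ => |y - t|) (abs_sub_growth t)
    simp only [(huA _).1.2] at h
    exact tendsto_nhds_unique h tendsto_const_nhds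
  have hJκ : J κ ≤ I := by
    refine (hconv.lintegral_shiftedCost_le hCmeas hlsc).trans ?_
    have h1 : Tendsto (fun n : ℕ => I + ((n : ENNReal) + 1)⁻¹) atTop (𝓝 I) := by
      have h2 := (tendsto_add_atTop_iff_nat 1).2 ENNReal.tendsto_inv_nat_nhds_zero
      simpa using h2.const_add I
    refine (liminf_le_liminf (Eventually.of_forall fun n => (huA n).2)).trans ?_
    exact h1.liminf_eq.le
  refine ⟨μ ⊗ₘ κ, κ, inferInstance, inferInstance, Measure.fst_compProd μ κ, ?_, rfl, hκ.bary, ?_⟩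
  · rw [← hκν]
    exact Measure.snd_compProd μ κ
  · intro π' κ' _ hκ'M _ hsnd hπ' hbary
    have hκ'ν := comp_eq_of_compProd hπ' hsnd
    have hκ' : κ' ∈ S := ⟨⟨hκ'M, by rwa [hκ'ν], hbary, fun t => by rw [hκ'ν]⟩, hκ'ν⟩
    exact hJκ.trans (sInf_le ⟨κ', hκ', rfl⟩)
end

section
/- Let Y be a Polish space and g : Y → [1,∞) continuous. Define on P_g(Y) = {p ∈ P(Y) : ∫ g dp < ∞} the quantity W̄_g(p,q) = sup { ∫ f·h dp − ∫ f·h dq : h : Y → [−1,1] is 1-Lipschitz } with f = g. Then W̄_g is a complete metric on P_g(Y) compatible with the topology of weak convergence plus convergence of g-moments. -/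
/-!
Send `p ∈ P_g(Y)` to the finite measure `ι(p) = g · p`. Then `Wbar g p q` is the bounded-Lipschitz
distance between `ι(p)` and `ι(q)`, and everything is a statement about finite measures.

* Weak convergence of finite measures is uniform over the bounded-Lipschitz test functions
  (`eventually_forall_isBL_le`). A test function is determined, up to an error controlled by the
  distance `netDist` to the net, by its values on a finite net of a dense sequence; these values lie
  in a cube, so finitely many test functions suffice.
* Conversely, convergence against bounded-Lipschitz functions is weak convergence
  (`tendsto_of_forall_isBL`): normalise the masses and apply the portmanteau theorem for
  probability measures with Lipschitz test functions.
* A sequence that is Cauchy for the bounded-Lipschitz distance has `∫ netDist N` small uniformly in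
  the sequence as `N → ∞`, because `netDist N` is itself a test function. By Markov's inequality and
  completeness of `Y` the sequence is tight, so Prokhorov's theorem gives a weak cluster point, to
  which the sequence converges (`exists_limit_of_cauchy`).
* The map `ι` is a homeomorphism onto `{m | ∫ 1/g dm = 1}`, where `P_g(Y)` carries weak convergence
  plus convergence of `g`-moments (`tendsto_of_tendsto_weighted`, by testing with `f / g` and `1`;
  `tendsto_weighted_of_tendsto`, by truncating `g`). This set is weakly closed since `1/g` is
  bounded and continuous, which yields completeness.
-/

open MeasureTheory Filter Topology

/-- The weighted bounded-Lipschitz distance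
`W̄_g(p,q) = sup { ∫ g·h dp − ∫ g·h dq : h 1-Lipschitz, |h| ≤ 1 }`. -/
noncomputable def Wbar {Y : Type*} [MeasurableSpace Y] [MetricSpace Y]
    (g : Y → ℝ) (p q : Measure Y) : ℝ :=
  sSup {r : ℝ | ∃ h : Y → ℝ, LipschitzWith 1 h ∧ (∀ y, |h y| ≤ 1) ∧
    r = (∫ y, g y * h y ∂p) - ∫ y, g y * h y ∂q}

/-! ### Bounded-Lipschitz test functions and weak convergence -/

/-- The unit ball of the bounded-Lipschitz test functions: `1`-Lipschitz with values in `[-1,1]`. -/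
def IsBL {Y : Type*} [MetricSpace Y] (h : Y → ℝ) : Prop :=
  LipschitzWith 1 h ∧ ∀ y, |h y| ≤ 1

namespace IsBL

variable {Y : Type*} [MetricSpace Y] {h : Y → ℝ}

/-- A bounded-Lipschitz test function as a bounded continuous function. -/
noncomputable def toBCF (hh : IsBL h) : BoundedContinuousFunction Y ℝ :=
  BoundedContinuousFunction.ofNormedAddCommGroup h hh.1.continuous 1 hh.2

lemma one : IsBL (fun _ : Y => (1 : ℝ)) :=
  ⟨LipschitzWith.const' 1, fun _ => by simp⟩

lemma zero : IsBL (fun _ : Y => (0 : ℝ)) :=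
  ⟨LipschitzWith.const' 0, fun _ => by simp⟩

lemma neg (hh : IsBL h) : IsBL (fun y => -h y) :=
  ⟨hh.1.neg, fun y => by simpa using hh.2 y⟩

variable [MeasurableSpace Y] [OpensMeasurableSpace Y]

lemma integrable (hh : IsBL h) (m : Measure Y) [IsFiniteMeasure m] : Integrable h m :=
  hh.toBCF.integrable m

lemma tendsto_integral {m : ℕ → FiniteMeasure Y} {m' : FiniteMeasure Y}
    (hm : Tendsto m atTop (𝓝 m')) (hh : IsBL h) :
    Tendsto (fun k => ∫ y, h y ∂(m k : Measure Y)) atTop (𝓝 (∫ y, h y ∂(m' : Measure Y))) :=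
  FiniteMeasure.tendsto_iff_forall_integral_tendsto.1 hm hh.toBCF

end IsBL

lemma coe_mass_eq_real {Y : Type*} [MeasurableSpace Y] (m : FiniteMeasure Y) :
    (m.mass : ℝ) = (m : Measure Y).real Set.univ := rfl

/-- The truncated distance `min 1 (dist (y, {a₀, …, a_N}))` to the first `N + 1` points of a
dense sequence `a`. It decreases to `0` pointwise as `N → ∞`, is itself a bounded-Lipschitz test
function, and controls how far a test function is from being determined by its values at
`a₀, …, a_N`. -/
noncomputable def netDist {Y : Type*} [MetricSpace Y] [SecondCountableTopology Y] [Nonempty Y]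
    (N : ℕ) (y : Y) : ℝ :=
  min 1 (Metric.infDist y (TopologicalSpace.denseSeq Y '' Set.Iic N))

section netDist

open TopologicalSpace

variable {Y : Type*} [MetricSpace Y] [SecondCountableTopology Y] [Nonempty Y]

lemma net_nonempty (N : ℕ) : (denseSeq Y '' Set.Iic N).Nonempty :=
  ⟨_, 0, by simp, rfl⟩

lemma netDist_nonneg (N : ℕ) (y : Y) : 0 ≤ netDist N y :=
  le_min zero_le_one Metric.infDist_nonneg

lemma netDist_isBL (N : ℕ) : IsBL (netDist N : Y → ℝ) := by
  refine ⟨(Metric.lipschitz_infDist_pt _).const_min 1, fun y => ?_⟩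
  rw [abs_of_nonneg (netDist_nonneg N y)]
  exact min_le_left _ _

lemma netDist_antitone (y : Y) : Antitone (fun N => netDist N y) := by
  intro N M hNM
  exact min_le_min_left _ (Metric.infDist_le_infDist_of_subset
    (Set.image_mono (Set.Iic_subset_Iic.2 hNM)) (net_nonempty N))

lemma tendsto_netDist (y : Y) : Tendsto (fun N => netDist N y) atTop (𝓝 0) := by
  rw [Metric.tendsto_atTop]
  intro ε hε
  obtain ⟨N, hN⟩ := (denseRange_denseSeq Y).exists_dist_lt y hε
  refine ⟨N, fun M hM => ?_⟩
  rw [Real.dist_eq, sub_zero, abs_of_nonneg (netDist_nonneg M y)]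
  refine (min_le_right _ _).trans_lt ((Metric.infDist_lt_iff (net_nonempty M)).2 ⟨_, ⟨N, hM, rfl⟩, hN⟩)

/-- Two test functions that nearly agree on the net nearly agree near the net. -/
lemma abs_sub_le_netDist {h h' : Y → ℝ} (hh : IsBL h) (hh' : IsBL h') {N : ℕ} {δ : ℝ} (hδ : 0 ≤ δ)
    (H : ∀ i ≤ N, |h (denseSeq Y i) - h' (denseSeq Y i)| ≤ δ) (y : Y) :
    |h y - h' y| ≤ δ + 2 * netDist N y := by
  have key : (|h y - h' y| - δ) / 2 ≤ netDist N y := by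
    refine le_min ?_ ((Metric.le_infDist (net_nonempty N)).2 ?_)
    · have h1 := hh.2 y
      have h2 := hh'.2 y
      have h3 := abs_sub (h y) (h' y)
      linarith
    · rintro _ ⟨i, hi, rfl⟩
      have h1 := hh.1.dist_le_mul y (denseSeq Y i)
      have h2 := hh'.1.dist_le_mul y (denseSeq Y i)
      have h3 := H i hi
      simp only [Real.dist_eq, NNReal.coe_one, one_mul] at h1 h2
      rw [abs_le] at h1 h2 h3
      have : |h y - h' y| ≤ δ + 2 * dist y (denseSeq Y i) := by
        rw [abs_le]; constructor <;> linarith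
      linarith
  linarith

variable [MeasurableSpace Y] [OpensMeasurableSpace Y]

lemma tendsto_integral_netDist (m : Measure Y) [IsFiniteMeasure m] :
    Tendsto (fun N => ∫ y, netDist N y ∂m) atTop (𝓝 0) := by
  have := tendsto_integral_of_dominated_convergence (μ := m) (F := fun N y => netDist N y)
    (f := fun _ => (0 : ℝ)) (fun _ => (1 : ℝ))
    (fun N => ((netDist_isBL N).integrable m).aestronglyMeasurable) (integrable_const _)
    (fun N => .of_forall (netDist_isBL N).2) (.of_forall tendsto_netDist)
  simpa using this

lemma integral_netDist_antitone (m : Measure Y) [IsFiniteMeasure m] :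
    Antitone (fun N => ∫ y, netDist N y ∂m) := fun _ _ hNM =>
  integral_mono ((netDist_isBL _).integrable m) ((netDist_isBL _).integrable m)
    fun y => netDist_antitone y hNM

lemma abs_integral_sub_le_netDist (m : FiniteMeasure Y) {h h' : Y → ℝ} (hh : IsBL h)
    (hh' : IsBL h') {N : ℕ} {δ : ℝ} (hδ : 0 ≤ δ)
    (H : ∀ i ≤ N, |h (denseSeq Y i) - h' (denseSeq Y i)| ≤ δ) :
    |∫ y, h y ∂(m : Measure Y) - ∫ y, h' y ∂(m : Measure Y)|
      ≤ δ * m.mass + 2 * ∫ y, netDist N y ∂(m : Measure Y) := by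
  have hi := (netDist_isBL (Y := Y) N).integrable (m : Measure Y)
  rw [← integral_sub (hh.integrable _) (hh'.integrable _)]
  refine (abs_integral_le_integral_abs).trans ?_
  refine (integral_mono ((hh.integrable _).sub (hh'.integrable _)).abs
    ((integrable_const δ).add (hi.const_mul 2)) (abs_sub_le_netDist hh hh' hδ H)).trans ?_
  simp only [Pi.add_apply]
  rw [integral_add (integrable_const δ) (hi.const_mul 2), integral_const_mul, integral_const,
    smul_eq_mul, mul_comm, ← coe_mass_eq_real]

/-- Weak convergence of finite measures on a separable metric space is uniform over the
bounded-Lipschitz test functions. -/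
lemma eventually_forall_isBL_le {m : ℕ → FiniteMeasure Y} {m' : FiniteMeasure Y}
    (hm : Tendsto m atTop (𝓝 m')) {ε : ℝ} (hε : 0 < ε) :
    ∀ᶠ k in atTop, ∀ h : Y → ℝ, IsBL h →
      ∫ y, h y ∂(m k : Measure Y) - ∫ y, h y ∂(m' : Measure Y) ≤ 7 * ε := by
  obtain ⟨N, hN⟩ := ((tendsto_integral_netDist (m' : Measure Y)).eventually
    (gt_mem_nhds hε)).exists
  have hM : (0 : ℝ) < m'.mass + 1 := by positivity
  obtain ⟨δ, hδ, hδε⟩ : ∃ δ : ℝ, 0 < δ ∧ δ * (m'.mass + 1) = ε :=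
    ⟨ε / (m'.mass + 1), div_pos hε hM, div_mul_cancel₀ _ hM.ne'⟩
  -- Restriction to the first `N + 1` net points puts the test functions in a compact cube.
  let R : (Y → ℝ) → (Fin (N + 1) → ℝ) := fun h i => h (denseSeq Y i)
  have htb : TotallyBounded (R '' {h | IsBL h}) := by
    refine TotallyBounded.subset ?_
      (isCompact_Icc (a := fun _ => (-1 : ℝ)) (b := fun _ => (1 : ℝ))).totallyBounded
    rintro _ ⟨h, hh, rfl⟩
    exact ⟨fun i => (abs_le.1 (hh.2 _)).1, fun i => (abs_le.1 (hh.2 _)).2⟩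
  obtain ⟨t, htR, htf, htc⟩ := Metric.finite_approx_of_totallyBounded htb δ hδ
  have htR' : ∀ r ∈ t, ∃ h : Y → ℝ, IsBL h ∧ R h = r := fun r hr => htR hr
  choose! φ hφ hφR using htR'
  have h1 : ∀ᶠ k in atTop, ∀ r ∈ t,
      ∫ y, φ r y ∂(m k : Measure Y) - ∫ y, φ r y ∂(m' : Measure Y) < ε := by
    refine (Filter.eventually_all_finite htf).2 fun r hr => ?_
    have := ((IsBL.tendsto_integral hm (hφ r hr)).sub_const (∫ y, φ r y ∂(m' : Measure Y)))
    rw [sub_self] at this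
    exact this.eventually (gt_mem_nhds hε)
  have h2 : ∀ᶠ k in atTop, ∫ y, netDist N y ∂(m k : Measure Y) < ε :=
    (IsBL.tendsto_integral hm (netDist_isBL N)).eventually (gt_mem_nhds hN)
  have h3 : ∀ᶠ k in atTop, ((m k).mass : ℝ) < m'.mass + 1 := by
    have : Tendsto (fun k => ((m k).mass : ℝ)) atTop (𝓝 m'.mass) :=
      (NNReal.continuous_coe.tendsto _).comp ((FiniteMeasure.continuous_mass.tendsto m').comp hm)
    exact this.eventually (gt_mem_nhds (by linarith))
  filter_upwards [h1, h2, h3] with k h1 h2 h3 h hh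
  obtain ⟨r, hr, hrd⟩ := Set.mem_iUnion₂.1 (htc ⟨h, hh, rfl⟩)
  have H : ∀ i ≤ N, |h (denseSeq Y i) - φ r (denseSeq Y i)| ≤ δ := by
    intro i hi
    have := (dist_le_pi_dist (R h) r ⟨i, by omega⟩).trans (Metric.mem_ball.1 hrd).le
    rw [← hφR r hr] at this
    simpa [R, Real.dist_eq] using this
  have e1 := (abs_le.1 (abs_integral_sub_le_netDist (m k) hh (hφ r hr) hδ.le H)).2
  have e2 := (abs_le.1 (abs_integral_sub_le_netDist m' hh (hφ r hr) hδ.le H)).1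
  have e3 := h1 r hr
  have e4 : δ * (m k).mass ≤ δ * (m'.mass + 1) := by gcongr
  have e5 : δ * (m'.mass : ℝ) ≤ δ * (m'.mass + 1) := by gcongr; linarith
  linarith

end netDist

/-- Convergence against every bounded-Lipschitz test function implies weak convergence, for nonzero
finite measures. -/
lemma tendsto_of_forall_isBL {Y : Type*} [MetricSpace Y] [MeasurableSpace Y]
    [OpensMeasurableSpace Y] [Nonempty Y] {m : ℕ → FiniteMeasure Y} {m' : FiniteMeasure Y}
    (hm0 : ∀ k, m k ≠ 0) (hm0' : m' ≠ 0)
    (H : ∀ h : Y → ℝ, IsBL h → Tendsto (fun k => ∫ y, h y ∂(m k : Measure Y)) atTop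
      (𝓝 (∫ y, h y ∂(m' : Measure Y)))) :
    Tendsto m atTop (𝓝 m') := by
  have hmass : Tendsto (fun k => (m k).mass) atTop (𝓝 m'.mass) := by
    rw [← NNReal.tendsto_coe]
    simpa only [integral_const, smul_eq_mul, mul_one, ← coe_mass_eq_real] using H _ IsBL.one
  refine FiniteMeasure.tendsto_of_tendsto_normalize_testAgainstNN_of_tendsto_mass ?_ hmass
  rw [tendsto_iff_forall_lipschitz_integral_tendsto]
  rintro f ⟨C, hC⟩ ⟨L, hL⟩
  let y₀ : Y := Classical.arbitrary Y
  let D : ℝ := L + |f y₀| + |C| + 1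
  have hD : 0 < D := by positivity
  have hf : IsBL (fun y => D⁻¹ * f y) := by
    constructor
    · refine LipschitzWith.of_dist_le_mul fun x y => ?_
      rw [Real.dist_eq, ← mul_sub, abs_mul, abs_of_pos (inv_pos.2 hD), NNReal.coe_one, one_mul,
        inv_mul_le_iff₀ hD]
      refine (hL.dist_le_mul x y).trans ?_
      gcongr
      have := abs_nonneg (f y₀)
      have := abs_nonneg C
      simp only [D]; linarith
    · intro y
      rw [abs_mul, abs_of_pos (inv_pos.2 hD), inv_mul_le_iff₀ hD, mul_one]
      have h1 := hC y y₀
      rw [Real.dist_eq] at h1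
      have h2 := abs_sub_abs_le_abs_sub (f y) (f y₀)
      have h3 := le_abs_self C
      have := L.coe_nonneg
      simp only [D]; linarith
  have hlim := ((H _ hf).const_mul D)
  simp only [integral_const_mul, mul_inv_cancel_left₀ hD.ne'] at hlim
  have hne : (m'.mass) ≠ 0 := (FiniteMeasure.mass_nonzero_iff m').2 hm0'
  have hinv : Tendsto (fun k => (((m k).mass)⁻¹ : NNReal)) atTop (𝓝 (m'.mass)⁻¹) := hmass.inv₀ hne
  simp only [FiniteMeasure.toMeasure_normalize_eq_of_nonzero _ (hm0 _),
    FiniteMeasure.toMeasure_normalize_eq_of_nonzero _ hm0', integral_smul_nnreal_measure]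
  exact hinv.smul hlim

/-! ### Tightness and limits of Cauchy sequences -/

section Cauchy

open TopologicalSpace

variable {Y : Type*} [MetricSpace Y] [SecondCountableTopology Y] [Nonempty Y]
  [MeasurableSpace Y] [BorelSpace Y]

/-- A sequence of finite measures that is Cauchy for the bounded-Lipschitz distance satisfies, for
every `ε`, the uniform bound `∫ netDist N ≤ ε` for some `N`: Cauchyness reduces this to finitely
many of the measures. -/
lemma exists_forall_integral_netDist_le {m : ℕ → FiniteMeasure Y}
    (H : ∀ ε : ℝ, 0 < ε → ∃ N : ℕ, ∀ i ≥ N, ∀ j ≥ N, ∀ h : Y → ℝ, IsBL h →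
      ∫ y, h y ∂(m i : Measure Y) - ∫ y, h y ∂(m j : Measure Y) ≤ ε) {ε : ℝ} (hε : 0 < ε) :
    ∃ N : ℕ, ∀ k, ∫ y, netDist N y ∂(m k : Measure Y) ≤ ε := by
  obtain ⟨K, hK⟩ := H (ε / 2) (half_pos hε)
  have h1 : ∀ᶠ N in atTop, ∀ k ∈ Set.Iic K, ∫ y, netDist N y ∂(m k : Measure Y) < ε / 2 :=
    (Filter.eventually_all_finite (Set.finite_Iic K)).2 fun k _ =>
      (tendsto_integral_netDist (m k : Measure Y)).eventually (gt_mem_nhds (half_pos hε))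
  obtain ⟨N, hN⟩ := h1.exists
  refine ⟨N, fun k => ?_⟩
  rcases le_total k K with hk | hk
  · linarith [hN k hk]
  · linarith [hN K Set.self_mem_Iic, hK k hk K le_rfl _ (netDist_isBL N)]

/-- The previous uniform bound gives tightness: by Markov's inequality the measures concentrate on
an intersection of closed neighbourhoods of finite sets, which is totally bounded. -/
lemma exists_isCompact_forall_compl_le [CompleteSpace Y] {m : ℕ → FiniteMeasure Y}
    (H : ∀ ε : ℝ, 0 < ε → ∃ N : ℕ, ∀ k, ∫ y, netDist N y ∂(m k : Measure Y) ≤ ε)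
    {ε : ℝ} (hε : 0 < ε) :
    ∃ K : Set Y, IsCompact K ∧ ∀ k, (m k : Measure Y) Kᶜ ≤ ENNReal.ofReal ε := by
  let δ : ℕ → ℝ := fun j => (1 / 2) ^ (j + 1)
  let c : ℕ → ℝ := fun j => ε / 2 / 2 ^ j
  have hδ : ∀ j, 0 < δ j := fun j => by positivity
  have hδ1 : ∀ j, δ j < 1 := fun j => pow_lt_one₀ (by norm_num) (by norm_num) (by omega)
  have hc : ∀ j, 0 < c j := fun j => by positivity
  choose N hN using fun j => H (δ j * c j) (mul_pos (hδ j) (hc j))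
  let K : Set Y := ⋂ j, {y | netDist (N j) y ≤ δ j}
  have hKc : IsClosed K := isClosed_iInter fun j =>
    isClosed_le (netDist_isBL (N j)).1.continuous continuous_const
  have hKt : TotallyBounded K := by
    refine Metric.totallyBounded_iff.2 fun r hr => ?_
    obtain ⟨j, hj⟩ := exists_pow_lt_of_lt_one hr (by norm_num : (1 / 2 : ℝ) < 1)
    refine ⟨denseSeq Y '' Set.Iic (N j), (Set.finite_Iic _).image _, fun y hy => ?_⟩
    have hjr : δ j < r :=
      (pow_le_pow_of_le_one (by norm_num) (by norm_num) (Nat.le_succ j)).trans_lt hj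
    have h1 : netDist (N j) y ≤ δ j := Set.mem_iInter.1 hy j
    have h2 : Metric.infDist y (denseSeq Y '' Set.Iic (N j)) < r := by
      rcases min_le_iff.1 h1 with h | h
      · exact absurd h (hδ1 j).not_ge
      · exact h.trans_lt hjr
    obtain ⟨z, hz, hyz⟩ := (Metric.infDist_lt_iff (net_nonempty _)).1 h2
    exact Set.mem_iUnion₂.2 ⟨z, hz, hyz⟩
  refine ⟨K, isCompact_iff_totallyBounded_isComplete.2 ⟨hKt, hKc.isComplete⟩, fun k => ?_⟩
  have hsub : Kᶜ ⊆ ⋃ j, {y | δ j ≤ netDist (N j) y} := by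
    intro y hy
    simp only [K, Set.mem_compl_iff, Set.mem_iInter, Set.mem_ofPred_eq, not_forall, not_le] at hy
    obtain ⟨j, hj⟩ := hy
    exact Set.mem_iUnion.2 ⟨j, hj.le⟩
  have hbd : ∀ j, (m k : Measure Y) {y | δ j ≤ netDist (N j) y} ≤ ENNReal.ofReal (c j) := by
    intro j
    have h1 := mul_meas_ge_le_integral_of_nonneg (μ := (m k : Measure Y))
      (.of_forall (netDist_nonneg (N j))) ((netDist_isBL (N j)).integrable _) (δ j)
    have h2 := le_of_mul_le_mul_left (h1.trans (hN j k)) (hδ j)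
    rw [← ofReal_measureReal]
    exact ENNReal.ofReal_le_ofReal h2
  calc (m k : Measure Y) Kᶜ ≤ ∑' j, (m k : Measure Y) {y | δ j ≤ netDist (N j) y} :=
        (measure_mono hsub).trans (measure_iUnion_le _)
    _ ≤ ∑' j, ENNReal.ofReal (c j) := ENNReal.tsum_le_tsum hbd
    _ = ENNReal.ofReal ε := by
        rw [← ENNReal.ofReal_tsum_of_nonneg (fun j => (hc j).le) (summable_geometric_two' ε),
          tsum_geometric_two']

/-- Completeness of the bounded-Lipschitz distance. The limit is also a weak cluster point, so it
lies in every weakly closed set containing the sequence. -/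
lemma exists_limit_of_cauchy [CompleteSpace Y] {m : ℕ → FiniteMeasure Y}
    (H : ∀ ε : ℝ, 0 < ε → ∃ N : ℕ, ∀ i ≥ N, ∀ j ≥ N, ∀ h : Y → ℝ, IsBL h →
      ∫ y, h y ∂(m i : Measure Y) - ∫ y, h y ∂(m j : Measure Y) ≤ ε) :
    ∃ m' : FiniteMeasure Y, MapClusterPt m' atTop m ∧
      ∀ ε : ℝ, 0 < ε → ∃ N : ℕ, ∀ k ≥ N, ∀ h : Y → ℝ, IsBL h →
        ∫ y, h y ∂(m k : Measure Y) - ∫ y, h y ∂(m' : Measure Y) ≤ ε := by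
  obtain ⟨C, hC⟩ : ∃ C : NNReal, ∀ᶠ k in atTop, (m k).mass ≤ C := by
    obtain ⟨N, hN⟩ := H 1 one_pos
    refine ⟨(m N).mass + 1, eventually_atTop.2 ⟨N, fun k hk => ?_⟩⟩
    have := hN k hk N le_rfl _ IsBL.one
    simp only [integral_const, smul_eq_mul, mul_one, ← coe_mass_eq_real] at this
    rw [← NNReal.coe_le_coe]
    push_cast
    linarith
  let u : ℕ → NNReal := fun n => 1 / ((n : NNReal) + 1)
  have hu : Tendsto u atTop (𝓝 0) := tendsto_one_div_add_atTop_nhds_zero_nat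
  choose K hKc hK using fun n : ℕ => exists_isCompact_forall_compl_le
    (fun ε hε => exists_forall_integral_netDist_le H hε) (ε := u n) (by positivity)
  obtain ⟨m', -, hm'⟩ := (isCompact_setOfPred_finiteMeasure_mass_le_compl_isCompact_le C hu hKc
    (.inl inferInstance)).exists_mapClusterPt (f := atTop) (u := m) (by
      rw [le_principal_iff, mem_map]
      filter_upwards [hC] with k hk
      refine ⟨hk, fun n => ?_⟩
      rw [← ENNReal.coe_le_coe, FiniteMeasure.ennreal_coeFn_eq_coeFn_toMeasure]
      simpa using hK n k)
  refine ⟨m', hm', fun ε hε => ?_⟩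
  obtain ⟨N, hN⟩ := H ε hε
  refine ⟨N, fun k hk h hh => ?_⟩
  -- For fixed `k`, the inequality defines a weakly closed set which contains a tail of `m`.
  have hcl : IsClosed {n : FiniteMeasure Y |
      ∫ y, h y ∂(m k : Measure Y) - ∫ y, h y ∂(n : Measure Y) ≤ ε} :=
    isClosed_le (continuous_const.sub
      (FiniteMeasure.continuous_integral_boundedContinuousFunction hh.toBCF)) continuous_const
  exact hcl.mem_of_mapClusterPt hm'
    (eventually_atTop.2 ⟨N, fun j hj => hN k hk j hj h hh⟩)

end Cauchy

/-! ### The embedding of the weighted space into the finite measures -/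

section Weighted

variable {Y : Type*} [MetricSpace Y] [MeasurableSpace Y] [BorelSpace Y] {g : Y → ℝ}

/-- The embedding `ι` of `P_g(Y)` into the finite measures: `ι(p)(dy) = g(y) p(dy)`. -/
noncomputable def weighted (g : Y → ℝ) (p : Measure Y) (hp : Integrable g p) : FiniteMeasure Y :=
  ⟨p.withDensity (fun y => ((g y).toNNReal : ENNReal)), isFiniteMeasure_withDensity_ofReal hp.2⟩

lemma integral_weighted (hgc : Continuous g) (hg1 : ∀ y, 1 ≤ g y) {p : Measure Y}
    (hp : Integrable g p) (f : Y → ℝ) :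
    ∫ y, f y ∂(weighted g p hp : Measure Y) = ∫ y, g y * f y ∂p := by
  have h := integral_withDensity_eq_integral_smul (μ := p)
    (f := fun y => (g y).toNNReal) hgc.measurable.real_toNNReal f
  refine h.trans (integral_congr_ae (.of_forall fun y => ?_))
  simp only [NNReal.smul_def, Real.coe_toNNReal _ (zero_le_one.trans (hg1 y)), smul_eq_mul]

lemma weighted_ne_zero (hgc : Continuous g) (hg1 : ∀ y, 1 ≤ g y) {p : Measure Y}
    [IsProbabilityMeasure p] (hp : Integrable g p) : weighted g p hp ≠ 0 := by
  intro h0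
  have h := integral_weighted hgc hg1 hp (fun y => (g y)⁻¹)
  simp [h0, mul_inv_cancel₀ (zero_lt_one.trans_le (hg1 _)).ne'] at h

lemma Wbar_le (hgc : Continuous g) (hg1 : ∀ y, 1 ≤ g y) {p q : Measure Y}
    (hp : Integrable g p) (hq : Integrable g q) {ε : ℝ}
    (H : ∀ h : Y → ℝ, IsBL h →
      ∫ y, h y ∂(weighted g p hp : Measure Y) - ∫ y, h y ∂(weighted g q hq : Measure Y) ≤ ε) :
    Wbar g p q ≤ ε := by
  refine csSup_le ⟨_, _, IsBL.zero.1, IsBL.zero.2, rfl⟩ ?_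
  rintro r ⟨h, hL, hb, rfl⟩
  simpa only [integral_weighted hgc hg1] using H h ⟨hL, hb⟩

lemma le_Wbar (hgc : Continuous g) (hg1 : ∀ y, 1 ≤ g y) {p q : Measure Y}
    (hp : Integrable g p) (hq : Integrable g q) {h : Y → ℝ} (hh : IsBL h) :
    ∫ y, h y ∂(weighted g p hp : Measure Y) - ∫ y, h y ∂(weighted g q hq : Measure Y)
      ≤ Wbar g p q := by
  have bd : ∀ (m : FiniteMeasure Y) (h : Y → ℝ), IsBL h → |∫ y, h y ∂(m : Measure Y)| ≤ m.mass := by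
    intro m h hh
    refine (norm_integral_le_of_norm_le_const (C := 1) (f := h) (.of_forall hh.2)).trans ?_
    rw [one_mul, coe_mass_eq_real]
  refine le_csSup ⟨(weighted g p hp).mass + (weighted g q hq).mass, ?_⟩
    ⟨h, hh.1, hh.2, by simp only [integral_weighted hgc hg1]⟩
  rintro r ⟨h, hL, hb, rfl⟩
  have h1 := (abs_le.1 (bd (weighted g p hp) h ⟨hL, hb⟩)).2
  have h2 := (abs_le.1 (bd (weighted g q hq) h ⟨hL, hb⟩)).1
  simp only [integral_weighted hgc hg1] at h1 h2
  linarith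

lemma Wbar_nonneg (hgc : Continuous g) (hg1 : ∀ y, 1 ≤ g y) {p q : Measure Y}
    (hp : Integrable g p) (hq : Integrable g q) : 0 ≤ Wbar g p q := by
  simpa using le_Wbar hgc hg1 hp hq IsBL.zero

lemma Wbar_comm_le (hgc : Continuous g) (hg1 : ∀ y, 1 ≤ g y) {p q : Measure Y}
    (hp : Integrable g p) (hq : Integrable g q) : Wbar g p q ≤ Wbar g q p := by
  refine Wbar_le hgc hg1 hp hq fun h hh => ?_
  have := le_Wbar hgc hg1 hq hp hh.neg
  simp only [integral_neg] at this
  linarith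

lemma Wbar_triangle (hgc : Continuous g) (hg1 : ∀ y, 1 ≤ g y) {p q s : Measure Y}
    (hp : Integrable g p) (hq : Integrable g q) (hs : Integrable g s) :
    Wbar g p s ≤ Wbar g p q + Wbar g q s := by
  refine Wbar_le hgc hg1 hp hs fun h hh => ?_
  have h1 := le_Wbar hgc hg1 hp hq hh
  have h2 := le_Wbar hgc hg1 hq hs hh
  linarith

lemma tendsto_integral_of_tendsto_Wbar (hgc : Continuous g) (hg1 : ∀ y, 1 ≤ g y)
    {p : ℕ → Measure Y} {p' : Measure Y} (hp : ∀ k, Integrable g (p k)) (hp' : Integrable g p')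
    (H : Tendsto (fun k => Wbar g (p k) p') atTop (𝓝 0)) {h : Y → ℝ} (hh : IsBL h) :
    Tendsto (fun k => ∫ y, h y ∂(weighted g (p k) (hp k) : Measure Y)) atTop
      (𝓝 (∫ y, h y ∂(weighted g p' hp' : Measure Y))) := by
  rw [tendsto_iff_norm_sub_tendsto_zero]
  refine squeeze_zero (fun _ => norm_nonneg _) (fun k => ?_) H
  have h1 := le_Wbar hgc hg1 (hp k) hp' hh
  have h2 := le_Wbar hgc hg1 (hp k) hp' hh.neg
  simp only [integral_neg] at h2
  rw [Real.norm_eq_abs, abs_le]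
  constructor <;> linarith

lemma tendsto_weighted_of_tendsto_Wbar [Nonempty Y] (hgc : Continuous g) (hg1 : ∀ y, 1 ≤ g y)
    {p : ℕ → Measure Y} {p' : Measure Y} (hP : ∀ k, IsProbabilityMeasure (p k))
    (hP' : IsProbabilityMeasure p') (hp : ∀ k, Integrable g (p k)) (hp' : Integrable g p')
    (H : Tendsto (fun k => Wbar g (p k) p') atTop (𝓝 0)) :
    Tendsto (fun k => weighted g (p k) (hp k)) atTop (𝓝 (weighted g p' hp')) :=
  tendsto_of_forall_isBL (fun k => weighted_ne_zero hgc hg1 (hp k)) (weighted_ne_zero hgc hg1 hp')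
    fun _ hh => tendsto_integral_of_tendsto_Wbar hgc hg1 hp hp' H hh

lemma tendsto_Wbar_of_tendsto_weighted [SecondCountableTopology Y] [Nonempty Y]
    (hgc : Continuous g) (hg1 : ∀ y, 1 ≤ g y)
    {p : ℕ → Measure Y} {p' : Measure Y} (hp : ∀ k, Integrable g (p k)) (hp' : Integrable g p')
    (H : Tendsto (fun k => weighted g (p k) (hp k)) atTop (𝓝 (weighted g p' hp'))) :
    Tendsto (fun k => Wbar g (p k) p') atTop (𝓝 0) := by
  rw [Metric.tendsto_atTop']
  intro ε hε
  obtain ⟨N, hN⟩ := eventually_atTop.1 (eventually_forall_isBL_le H (ε := ε / 8) (by positivity))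
  refine ⟨N, fun k hk => ?_⟩
  rw [Real.dist_eq, sub_zero, abs_of_nonneg (Wbar_nonneg hgc hg1 (hp k) hp')]
  have := Wbar_le hgc hg1 (hp k) hp' (hN k hk.le)
  linarith

/-- The function `f / g`, as a bounded continuous function. -/
noncomputable def divBCF (hgc : Continuous g) (hg1 : ∀ y, 1 ≤ g y)
    (f : BoundedContinuousFunction Y ℝ) : BoundedContinuousFunction Y ℝ :=
  BoundedContinuousFunction.ofNormedAddCommGroup (fun y => (g y)⁻¹ * f y)
    ((hgc.inv₀ fun y => (zero_lt_one.trans_le (hg1 y)).ne').mul f.continuous) ‖f‖ (fun y => by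
      have h0 := zero_lt_one.trans_le (hg1 y)
      rw [norm_mul, norm_inv, Real.norm_of_nonneg h0.le, inv_mul_le_iff₀ h0]
      exact (f.norm_coe_le_norm y).trans (le_mul_of_one_le_left (norm_nonneg f) (hg1 y)))

lemma integral_weighted_divBCF (hgc : Continuous g) (hg1 : ∀ y, 1 ≤ g y) {p : Measure Y}
    (hp : Integrable g p) (f : BoundedContinuousFunction Y ℝ) :
    ∫ y, divBCF hgc hg1 f y ∂(weighted g p hp : Measure Y) = ∫ y, f y ∂p := by
  rw [integral_weighted hgc hg1]
  refine integral_congr_ae (.of_forall fun y => ?_)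
  exact mul_inv_cancel_left₀ (zero_lt_one.trans_le (hg1 y)).ne' _

/-- The topology of `P_g(Y)` is the one induced by `weighted`, first half. -/
lemma tendsto_of_tendsto_weighted (hgc : Continuous g) (hg1 : ∀ y, 1 ≤ g y)
    {p : ℕ → Measure Y} {p' : Measure Y} (hp : ∀ k, Integrable g (p k)) (hp' : Integrable g p')
    (H : Tendsto (fun k => weighted g (p k) (hp k)) atTop (𝓝 (weighted g p' hp'))) :
    (∀ ψ : BoundedContinuousFunction Y ℝ,
      Tendsto (fun k => ∫ y, ψ y ∂(p k)) atTop (𝓝 (∫ y, ψ y ∂p'))) ∧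
    Tendsto (fun k => ∫ y, g y ∂(p k)) atTop (𝓝 (∫ y, g y ∂p')) := by
  rw [FiniteMeasure.tendsto_iff_forall_integral_tendsto] at H
  constructor
  · intro ψ
    simpa only [integral_weighted_divBCF] using H (divBCF hgc hg1 ψ)
  · have := H (BoundedContinuousFunction.const Y 1)
    simpa only [integral_weighted hgc hg1, BoundedContinuousFunction.const_apply, mul_one] using this

/-- The topology of `P_g(Y)` is the one induced by `weighted`, second half: truncate `g` at a high
level `M`; the convergence of the `g`-moments bounds the tail `∫ (g - min g M) dp k` uniformly. -/
lemma tendsto_weighted_of_tendsto (hgc : Continuous g) (hg1 : ∀ y, 1 ≤ g y)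
    {p : ℕ → Measure Y} {p' : Measure Y} (hP : ∀ k, IsProbabilityMeasure (p k))
    (hP' : IsProbabilityMeasure p') (hp : ∀ k, Integrable g (p k)) (hp' : Integrable g p')
    (H1 : ∀ ψ : BoundedContinuousFunction Y ℝ,
      Tendsto (fun k => ∫ y, ψ y ∂(p k)) atTop (𝓝 (∫ y, ψ y ∂p')))
    (H2 : Tendsto (fun k => ∫ y, g y ∂(p k)) atTop (𝓝 (∫ y, g y ∂p'))) :
    Tendsto (fun k => weighted g (p k) (hp k)) atTop (𝓝 (weighted g p' hp')) := by
  have hg0 : ∀ y, 0 ≤ g y := fun y => zero_le_one.trans (hg1 y)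
  rw [FiniteMeasure.tendsto_iff_forall_integral_tendsto]
  intro f
  simp only [integral_weighted hgc hg1]
  let G : ℕ → BoundedContinuousFunction Y ℝ := fun M =>
    BoundedContinuousFunction.ofNormedAddCommGroup (fun y => min (g y) M)
      (hgc.min continuous_const) M (fun y => by
        rw [Real.norm_of_nonneg (le_min (hg0 y) M.cast_nonneg)]
        exact min_le_right _ _)
  have hG : ∀ M y, G M y = min (g y) M := fun _ _ => rfl
  have hGlim : Tendsto (fun M => ∫ y, G M y ∂p') atTop (𝓝 (∫ y, g y ∂p')) := by
    refine tendsto_integral_of_dominated_convergence g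
      (fun M => (G M).continuous.aestronglyMeasurable) hp' (fun M => .of_forall fun y => ?_)
      (.of_forall fun y => ?_)
    · rw [hG, Real.norm_of_nonneg (le_min (hg0 y) M.cast_nonneg)]
      exact min_le_left _ _
    · obtain ⟨n, hn⟩ := exists_nat_ge (g y)
      refine tendsto_const_nhds.congr' (eventually_atTop.2 ⟨n, fun M hM => ?_⟩)
      simp only [hG]
      rw [min_eq_left (hn.trans (Nat.cast_le.2 hM))]
  have tail : ∀ (q : Measure Y), IsProbabilityMeasure q → Integrable g q → ∀ M,
      |∫ y, g y * f y ∂q - ∫ y, (G M * f) y ∂q| ≤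
        ‖f‖ * (∫ y, g y ∂q - ∫ y, G M y ∂q) := by
    intro q _ hq M
    have i1 : Integrable (fun y => g y * f y) q :=
      hq.mul_bdd f.continuous.aestronglyMeasurable (.of_forall f.norm_coe_le_norm)
    rw [← integral_sub i1 ((G M * f).integrable q), ← integral_sub hq ((G M).integrable q),
      ← integral_const_mul]
    refine (abs_integral_le_integral_abs).trans (integral_mono
      (i1.sub ((G M * f).integrable q)).abs ((hq.sub ((G M).integrable q)).const_mul _) fun y => ?_)
    have h0 : 0 ≤ g y - G M y := sub_nonneg.2 (min_le_left _ _)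
    simp only [BoundedContinuousFunction.mul_apply, ← sub_mul, abs_mul, abs_of_nonneg h0]
    rw [mul_comm]
    exact mul_le_mul_of_nonneg_right (f.norm_coe_le_norm y) h0
  rw [Metric.tendsto_atTop']
  intro ε hε
  obtain ⟨M, hM⟩ : ∃ M, ‖f‖ * (∫ y, g y ∂p' - ∫ y, G M y ∂p') < ε / 3 := by
    have := (hGlim.const_sub (∫ y, g y ∂p')).const_mul ‖f‖
    rw [sub_self, mul_zero] at this
    exact (this.eventually (gt_mem_nhds (by positivity))).exists
  have e1 := ((H2.sub (H1 (G M))).const_mul ‖f‖).eventually (gt_mem_nhds hM)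
  have e2 := Metric.tendsto_nhds.1 (H1 (G M * f)) (ε / 3) (by positivity)
  obtain ⟨N, hN⟩ := eventually_atTop.1 (e1.and e2)
  refine ⟨N, fun k hk => ?_⟩
  obtain ⟨h1, h2⟩ := hN k hk.le
  have t1 := abs_le.1 (tail (p k) (hP k) (hp k) M)
  have t2 := abs_le.1 (tail p' hP' hp' M)
  rw [Real.dist_eq, abs_lt] at h2 ⊢
  constructor <;> linarith [t1.1, t1.2, t2.1, t2.2, h2.1, h2.2]

/-- The range of `weighted` is `{m | ∫ 1/g dm = 1}`. -/
lemma exists_weighted_eq (hgc : Continuous g) (hg1 : ∀ y, 1 ≤ g y) (m : FiniteMeasure Y)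
    (hm : ∫ y, (g y)⁻¹ ∂(m : Measure Y) = 1) :
    ∃ (p : Measure Y) (hp : Integrable g p), IsProbabilityMeasure p ∧ weighted g p hp = m := by
  have hg0 : ∀ y, 0 < g y := fun y => zero_lt_one.trans_le (hg1 y)
  have hmeas : Measurable fun y => ((g y)⁻¹).toNNReal := hgc.measurable.inv.real_toNNReal
  let p : Measure Y := (m : Measure Y).withDensity fun y => (((g y)⁻¹).toNNReal : ENNReal)
  have hcoe : ∀ y, (((g y)⁻¹).toNNReal : ℝ) = (g y)⁻¹ :=
    fun y => Real.coe_toNNReal _ (inv_nonneg.2 (hg0 y).le)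
  have hint : ∀ f : Y → ℝ, ∫ y, f y ∂p = ∫ y, (g y)⁻¹ * f y ∂(m : Measure Y) := fun f => by
    simp only [p, integral_withDensity_eq_integral_smul hmeas, NNReal.smul_def, hcoe, smul_eq_mul]
  have hp : Integrable g p := by
    refine (integrable_withDensity_iff_integrable_smul hmeas).2 ?_
    simp only [NNReal.smul_def, hcoe, smul_eq_mul, inv_mul_cancel₀ (hg0 _).ne']
    exact integrable_const _
  refine ⟨p, hp, ⟨?_⟩, ?_⟩
  · have h1 := hint fun _ => 1
    simp only [mul_one, hm, integral_const, smul_eq_mul] at h1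
    exact (ENNReal.toReal_eq_one_iff _).1 h1
  · apply Subtype.ext
    have : IsFiniteMeasure (weighted g p hp).val := (weighted g p hp).2
    have : IsFiniteMeasure m.val := m.2
    refine ext_of_forall_integral_eq_of_IsFiniteMeasure fun f => ?_
    refine (integral_weighted hgc hg1 hp f).trans ((hint _).trans ?_)
    simp only [inv_mul_cancel_left₀ (hg0 _).ne']
    rfl

end Weighted

/-! ### Metric, compatibility and completeness -/

/-- For `Y` Polish (with a complete compatible metric) and `g : Y → [1,∞)` continuous,
`W̄_g` is a complete metric on `P_g(Y)` compatible with its topology (weak convergence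
together with convergence of the `g`-moments). -/
theorem stmt15 {Y : Type*} [MeasurableSpace Y] [MetricSpace Y] [CompleteSpace Y]
    [SecondCountableTopology Y] [BorelSpace Y]
    (g : Y → ℝ) (hgc : Continuous g) (hg1 : ∀ y, 1 ≤ g y) :
    -- `W̄_g` is a metric on `P_g(Y)`:
    (∀ p q : Measure Y, IsProbabilityMeasure p → IsProbabilityMeasure q →
      Integrable g p → Integrable g q → (0 ≤ Wbar g p q ∧ Wbar g p q = Wbar g q p)) ∧
    (∀ p q : Measure Y, IsProbabilityMeasure p → IsProbabilityMeasure q →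
      Integrable g p → Integrable g q → (Wbar g p q = 0 ↔ p = q)) ∧
    (∀ p q s : Measure Y, IsProbabilityMeasure p → IsProbabilityMeasure q →
      IsProbabilityMeasure s → Integrable g p → Integrable g q → Integrable g s →
      Wbar g p s ≤ Wbar g p q + Wbar g q s) ∧
    -- compatibility with the `P_g(Y)` topology:
    (∀ (p : ℕ → Measure Y) (p' : Measure Y), (∀ k, IsProbabilityMeasure (p k)) →
      IsProbabilityMeasure p' → (∀ k, Integrable g (p k)) → Integrable g p' →
      (Tendsto (fun k => Wbar g (p k) p') atTop (𝓝 0) ↔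
        ((∀ ψ : BoundedContinuousFunction Y ℝ,
          Tendsto (fun k => ∫ y, ψ y ∂(p k)) atTop (𝓝 (∫ y, ψ y ∂p'))) ∧
        Tendsto (fun k => ∫ y, g y ∂(p k)) atTop (𝓝 (∫ y, g y ∂p'))))) ∧
    -- completeness:
    (∀ p : ℕ → Measure Y, (∀ k, IsProbabilityMeasure (p k)) →
      (∀ k, Integrable g (p k)) →
      (∀ ε : ℝ, 0 < ε → ∃ N : ℕ, ∀ m ≥ N, ∀ n ≥ N, Wbar g (p m) (p n) ≤ ε) →
      ∃ p' : Measure Y, IsProbabilityMeasure p' ∧ Integrable g p' ∧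
        Tendsto (fun k => Wbar g (p k) p') atTop (𝓝 0)) := by
  refine ⟨fun p q _ _ hp hq => ⟨Wbar_nonneg hgc hg1 hp hq,
    (Wbar_comm_le hgc hg1 hp hq).antisymm (Wbar_comm_le hgc hg1 hq hp)⟩, ?_,
    fun p q s _ _ _ hp hq hs => Wbar_triangle hgc hg1 hp hq hs, ?_, ?_⟩
  · intro p q hP hQ hp hq
    constructor
    · intro h0
      have : Nonempty Y := nonempty_of_isProbabilityMeasure p
      -- The constant sequence `p` converges to `q`.
      have hlim : Tendsto (fun _ : ℕ => Wbar g p q) atTop (𝓝 0) := by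
        rw [h0]; exact tendsto_const_nhds
      have hw := tendsto_weighted_of_tendsto_Wbar hgc hg1 (fun _ => hP) hQ (fun _ => hp) hq hlim
      have := (tendsto_of_tendsto_weighted hgc hg1 (fun _ => hp) hq hw).1
      exact ext_of_forall_integral_eq_of_IsFiniteMeasure fun ψ =>
        tendsto_nhds_unique tendsto_const_nhds (this ψ)
    · rintro rfl
      exact le_antisymm (Wbar_le hgc hg1 hp hq fun h _ => by simp) (Wbar_nonneg hgc hg1 hp hq)
  · intro p p' hP hP' hp hp'
    have : Nonempty Y := nonempty_of_isProbabilityMeasure p'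
    constructor
    · exact fun H => tendsto_of_tendsto_weighted hgc hg1 hp hp'
        (tendsto_weighted_of_tendsto_Wbar hgc hg1 hP hP' hp hp' H)
    · exact fun H => tendsto_Wbar_of_tendsto_weighted hgc hg1 hp hp'
        (tendsto_weighted_of_tendsto hgc hg1 hP hP' hp hp' H.1 H.2)
  · intro p hP hp hC
    have : Nonempty Y := nonempty_of_isProbabilityMeasure (p 0)
    obtain ⟨m', hcl, hlim⟩ := exists_limit_of_cauchy (m := fun k => weighted g (p k) (hp k))
      fun ε hε => by
        obtain ⟨N, hN⟩ := hC ε hε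
        exact ⟨N, fun i hi j hj h hh => (le_Wbar hgc hg1 (hp i) (hp j) hh).trans (hN i hi j hj)⟩
    -- `{m | ∫ 1/g dm = 1}` is weakly closed because `1/g` is bounded and continuous.
    have hclosed : IsClosed {m : FiniteMeasure Y |
        ∫ y, divBCF hgc hg1 (BoundedContinuousFunction.const Y 1) y ∂(m : Measure Y) = 1} :=
      isClosed_eq (FiniteMeasure.continuous_integral_boundedContinuousFunction _) continuous_const
    have hm1 : ∫ y, divBCF hgc hg1 (BoundedContinuousFunction.const Y 1) y ∂(m' : Measure Y) = 1 :=
      hclosed.mem_of_mapClusterPt hcl (.of_forall fun k => by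
        have := hP k
        exact (integral_weighted_divBCF hgc hg1 (hp k) _).trans (by simp))
    obtain ⟨p', hp', hP', rfl⟩ := exists_weighted_eq hgc hg1 m' (by
      rw [← hm1]
      exact integral_congr_ae (.of_forall fun y => (mul_one _).symm))
    refine ⟨p', hP', hp', ?_⟩
    rw [Metric.tendsto_atTop]
    intro ε hε
    obtain ⟨N, hN⟩ := hlim (ε / 2) (half_pos hε)
    refine ⟨N, fun k hk => ?_⟩
    rw [Real.dist_eq, sub_zero, abs_of_nonneg (Wbar_nonneg hgc hg1 (hp k) hp')]
    linarith [Wbar_le hgc hg1 (hp k) hp' (hN k hk)]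
end
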